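/- arXiv:1502.06875 — 4 statements merged into one kernel-verified Lean document; each statement's English description precedes it below -/
import Mathlib

section
/- Let ⟨V,E,d⟩ be a multi-weighted game graph in which every cycle contains at least one Player-1 vertex. If Player 1 has a winning strategy σ in the first-cycle bounding game G⟨V,E,d⟩ from a vertex v₀, then Player 1 has a (finite-memory) winning strategy in the bounding game Γ⟨V,E,d⟩ from v₀ which ensures that every consistent play ρ satisfies ‖w(ρ|ₙ)‖ ≤ (4|V|·‖E‖)^{2(d+2)³} for all n. -/
/-! Multi-weighted game graphs, plays, strategies, energy and bounding games. -/

/-- A configuration: a vertex together with an accumulated weight vector. -/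
abbrev Conf (V : Type) (d : ℕ) := V × (Fin d → ℤ)

/-- A multi-weighted game graph: Player-1 vertices, a finite set of
weighted edges, such that every vertex has an outgoing edge. -/
structure MWG (V : Type) [Fintype V] [DecidableEq V] (d : ℕ) where
  P1 : Finset V
  E : Set (V × (Fin d → ℤ) × V)
  finE : E.Finite
  serial : ∀ v : V, ∃ u v', (v, u, v') ∈ E

variable {V : Type} [Fintype V] [DecidableEq V] {d : ℕ}

/-- The norm of an integer vector: max of absolute values of entries. -/
def vnorm {d : ℕ} (u : Fin d → ℤ) : ℕ := Finset.univ.sup fun i => (u i).natAbs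

/-- `‖E‖`: the maximal norm of an edge label. -/
noncomputable def enorm (G : MWG V d) : ℕ := G.finE.toFinset.sup fun e => vnorm e.2.1

/-- One step along an edge of the graph. -/
def Step (G : MWG V d) (c c' : Conf V d) : Prop := (c.1, c'.2 - c.2, c'.1) ∈ G.E

/-- A finite path, as a list of configurations. -/
def IsPathL (G : MWG V d) (π : List (Conf V d)) : Prop := π.Chain' (Step G)

/-- An infinite play from `v₀`, starting with weight `0`. -/
def IsPlay (G : MWG V d) (v₀ : V) (ρ : ℕ → Conf V d) : Prop :=
  ρ 0 = (v₀, 0) ∧ ∀ n, Step G (ρ n) (ρ (n+1))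

/-- A strategy: given the history (past configurations) and the current
configuration, choose a weighted move. -/
abbrev Strat (V : Type) (d : ℕ) := List (Conf V d) → Conf V d → (Fin d → ℤ) × V

/-- A valid strategy for the player owning the vertices in `P` always
chooses an edge of the game graph from the current vertex. -/
def ValidStrat (G : MWG V d) (P : Set V) (σ : Strat V d) : Prop :=
  ∀ h c, IsPathL G (h ++ [c]) → c.1 ∈ P → (c.1, (σ h c).1, (σ h c).2) ∈ G.E

/-- The history of a play before instant `n`. -/
def hist (ρ : ℕ → Conf V d) (n : ℕ) : List (Conf V d) := (List.range n).map ρ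

/-- A play is consistent with strategy `σ` of the player owning `P` if at
every configuration with vertex in `P` the next configuration is obtained
by playing the edge prescribed by `σ`. -/
def Consistent (P : Set V) (σ : Strat V d) (ρ : ℕ → Conf V d) : Prop :=
  ∀ n, (ρ n).1 ∈ P →
    ρ (n+1) = ((σ (hist ρ n) (ρ n)).2, (ρ n).2 + (σ (hist ρ n) (ρ n)).1)

/-- Player owning `P` wins the game with payoff `Win` from `v₀`. -/
def Wins (G : MWG V d) (P : Set V) (Win : (ℕ → Conf V d) → Prop) (v₀ : V) : Prop :=
  ∃ σ : Strat V d, ValidStrat G P σ ∧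
    ∀ ρ, IsPlay G v₀ ρ → Consistent P σ ρ → Win ρ

/-- Player 1's winning condition in the energy game with initial credit `b`. -/
def EnergyOK (b : Fin d → ℕ) (ρ : ℕ → Conf V d) : Prop :=
  ∀ n i, 0 ≤ (b i : ℤ) + (ρ n).2 i

/-- Player 1's winning condition in the bounding game: the norms of the
total weights of all the finite prefixes are bounded. -/
def BoundedPlay (ρ : ℕ → Conf V d) : Prop :=
  ∃ B : ℕ, ∀ n, vnorm ((ρ n).2) ≤ B

def P1WinsEnergy (G : MWG V d) (b : Fin d → ℕ) (v₀ : V) : Prop :=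
  Wins G (G.P1 : Set V) (EnergyOK b) v₀

def P2WinsEnergy (G : MWG V d) (b : Fin d → ℕ) (v₀ : V) : Prop :=
  Wins G {v | v ∉ G.P1} (fun ρ => ¬ EnergyOK b ρ) v₀

def P1WinsBounding (G : MWG V d) (v₀ : V) : Prop :=
  Wins G (G.P1 : Set V) BoundedPlay v₀

def P2WinsBounding (G : MWG V d) (v₀ : V) : Prop :=
  Wins G {v | v ∉ G.P1} (fun ρ => ¬ BoundedPlay ρ) v₀

/-- The negative unit vector `-e i`. -/
def negUnit (d : ℕ) (i : Fin d) : Fin d → ℤ := fun j => if j = i then -1 else 0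

/-- The lossy game graph: add a self-loop labelled `-e i` at each Player-1
vertex, for every coordinate `i`. -/
def lossy (G : MWG V d) : MWG V d where
  P1 := G.P1
  E := G.E ∪ (fun p : V × Fin d => (p.1, negUnit d p.2, p.1)) '' {p | p.1 ∈ G.P1}
  finE := G.finE.union ((Set.toFinite _).image _)
  serial := fun v => by
    obtain ⟨u, v', h⟩ := G.serial v
    exact ⟨u, v', Set.mem_union_left _ h⟩

/-- Every cycle of the game graph contains at least one Player-1 vertex. -/
def EveryCycleHasP1 (G : MWG V d) : Prop :=
  ∀ (n : ℕ) (c : ℕ → Conf V d), 0 < n → (∀ j < n, Step G (c j) (c (j+1))) →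
    (c 0).1 = (c n).1 → ∃ j < n, (c j).1 ∈ G.P1

/-! Perfect half-spaces in `ℚ^d`. -/

/-- Vectors of `ℚ^d`. -/
abbrev QVec (d : ℕ) := Fin d → ℚ

/-- The entries of `v` all have absolute value at most `M`. -/
def QNormLe (M : ℕ) {d : ℕ} (v : QVec d) : Prop := ∀ i, |v i| ≤ (M : ℚ)

/-- A subspace of `ℚ^d` is `M`-generated if it is spanned by a set of vectors
of norm at most `M`. -/
def MGenSpace (M : ℕ) {d : ℕ} (S : Submodule ℚ (QVec d)) : Prop :=
  ∃ B : Set (QVec d), (∀ v ∈ B, QNormLe M v) ∧ Submodule.span ℚ B = S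

/-- `H` is an open half-space of the subspace `S`: the set of points of `S` on
which some linear functional, not vanishing identically on `S`, is negative. -/
def IsOpenHalfOf {d : ℕ} (S : Submodule ℚ (QVec d)) (H : Set (QVec d)) : Prop :=
  ∃ f : QVec d →ₗ[ℚ] ℚ, (∃ v ∈ S, f v ≠ 0) ∧ H = {v | v ∈ S ∧ f v < 0}

/-- `H` is an `M`-generated open half-space of the subspace `S`: moreover its
boundary is the span of a set of vectors of norm at most `M`. -/
def IsMGenHalfOf (M : ℕ) {d : ℕ} (S : Submodule ℚ (QVec d)) (H : Set (QVec d)) : Prop :=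
  ∃ f : QVec d →ₗ[ℚ] ℚ, (∃ v ∈ S, f v ≠ 0) ∧ H = {v | v ∈ S ∧ f v < 0} ∧
    ∃ B : Set (QVec d), (∀ v ∈ B, QNormLe M v) ∧
      (Submodule.span ℚ B : Set (QVec d)) = {v | v ∈ S ∧ f v = 0}

/-- Auxiliary chain of subspaces: `chainAux d f i` is the subspace obtained
from `ℚ^d` by intersecting with the kernels of `f d, f (d-1), …, f (d-i+1)`. -/
def chainAux (d : ℕ) (f : ℕ → (QVec d →ₗ[ℚ] ℚ)) : ℕ → Submodule ℚ (QVec d)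
  | 0 => ⊤
  | (i+1) => chainAux d f i ⊓ LinearMap.ker (f (d - i))

/-- `chainSub d f j` is the subspace on which the component half-space `H_j`
lives: `chainSub d f d = ℚ^d` and `chainSub d f j = chainSub d f (j+1) ∩ ker (f (j+1))`. -/
def chainSub (d : ℕ) (f : ℕ → (QVec d →ₗ[ℚ] ℚ)) (j : ℕ) : Submodule ℚ (QVec d) :=
  chainAux d f (d - j)

/-- The component open half-space `H_j = {v ∈ S_j | f j v < 0}`. -/
def halfComp (d : ℕ) (f : ℕ → (QVec d →ₗ[ℚ] ℚ)) (j : ℕ) : Set (QVec d) :=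
  {v | v ∈ chainSub d f j ∧ f j v < 0}

/-- The boundary of the component half-space `H_j`. -/
def bdComp (d : ℕ) (f : ℕ → (QVec d →ₗ[ℚ] ℚ)) (j : ℕ) : Set (QVec d) :=
  {v | v ∈ chainSub d f j ∧ f j v = 0}

/-- The chain condition: for `k ≤ j ≤ d`, the functional `f j` does not vanish
identically on `S_j`, so that each `H_j` is a `j`-dimensional open half-space
of `S_j`. -/
def ChainCond (d k : ℕ) (f : ℕ → (QVec d →ₗ[ℚ] ℚ)) : Prop :=
  ∀ j, k ≤ j → j ≤ d → ∃ v ∈ chainSub d f j, f j v ≠ 0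

/-- The union `H_d ∪ ⋯ ∪ H_k`. -/
def PPHSSet (d k : ℕ) (f : ℕ → (QVec d →ₗ[ℚ] ℚ)) : Set (QVec d) :=
  ⋃ j ∈ Set.Icc k d, halfComp d f j

/-- `A` is a `k`-perfect half-space of `ℚ^d` (for `k = d+1`, the empty set). -/
def IsPPHS (d k : ℕ) (A : Set (QVec d)) : Prop :=
  1 ≤ k ∧ k ≤ d + 1 ∧ ∃ f, ChainCond d k f ∧ A = PPHSSet d k f

/-- `A` is a partially-perfect half-space of `ℚ^d`. -/
def IsPartialPHS (d : ℕ) (A : Set (QVec d)) : Prop := ∃ k, IsPPHS d k A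

/-- `A` is an `M`-generated `k`-perfect half-space of `ℚ^d`: each component
open half-space has an `M`-generated boundary. -/
def IsMGenPPHS (M d k : ℕ) (A : Set (QVec d)) : Prop :=
  1 ≤ k ∧ k ≤ d + 1 ∧ ∃ f, ChainCond d k f ∧
    (∀ j, k ≤ j → j ≤ d → ∃ B : Set (QVec d), (∀ v ∈ B, QNormLe M v) ∧
      (Submodule.span ℚ B : Set (QVec d)) = bdComp d f j) ∧
    A = PPHSSet d k f

/-- `A` is an `M`-generated perfect half-space of `ℚ^d`. -/
def IsMGenPerfectHS (M d : ℕ) (A : Set (QVec d)) : Prop := IsMGenPPHS M d 1 A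

/-! The first-cycle bounding game `G⟨V,E,d⟩`. -/

/-- A colour: a set of vectors of `ℚ^d` (intended: a perfect half-space). -/
abbrev Colour (d : ℕ) := Set (QVec d)

/-- A coloured history: past configurations, each together with the colour
chosen by Player 2 at it if it is a Player-1 vertex. -/
abbrev CHist (V : Type) (d : ℕ) := List (Conf V d × Option (Colour d))

variable {V : Type} [Fintype V] [DecidableEq V] {d : ℕ}

/-- Record a colour at a configuration: only Player-1 vertices are coloured. -/
def colOpt (G : MWG V d) (c : Conf V d) (H : Colour d) : Option (Colour d) :=
  if c.1 ∈ G.P1 then some H else none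

/-- The coloured history before instant `n` of a play `ρ` with colour
choices `χ`. -/
def chist (G : MWG V d) (ρ : ℕ → Conf V d) (χ : ℕ → Colour d) (n : ℕ) : CHist V d :=
  (List.range n).map fun j => (ρ j, colOpt G (ρ j) (χ j))

/-- A strategy of Player 2 in the first-cycle bounding game: at Player-1
vertices choose a colour, at Player-2 vertices choose a move. -/
structure FCStratP2 (V : Type) (d : ℕ) where
  col : CHist V d → Conf V d → Colour d
  edge : CHist V d → Conf V d → (Fin d → ℤ) × V

/-- A strategy of Player 1 in the first-cycle bounding game: at Player-1
vertices, given moreover the colour just chosen by Player 2, choose a move. -/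
abbrev FCStratP1 (V : Type) (d : ℕ) :=
  CHist V d → Conf V d → Colour d → (Fin d → ℤ) × V

/-- Validity of a Player 2 first-cycle strategy: colours are
`|V|·‖E‖`-generated perfect half-spaces of `ℚ^d`, and moves at Player-2
vertices follow edges of the graph. -/
def ValidFCP2 (G : MWG V d) (σ : FCStratP2 V d) : Prop :=
  (∀ h c, c.1 ∈ G.P1 →
    IsMGenPerfectHS (Fintype.card V * enorm G) d (σ.col h c)) ∧
  (∀ h c, c.1 ∉ G.P1 → (c.1, (σ.edge h c).1, (σ.edge h c).2) ∈ G.E)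

/-- Validity of a Player 1 first-cycle strategy: moves at Player-1 vertices
follow edges of the graph. -/
def ValidFCP1 (G : MWG V d) (τ : FCStratP1 V d) : Prop :=
  ∀ h c H, c.1 ∈ G.P1 → (c.1, (τ h c H).1, (τ h c H).2) ∈ G.E

/-- The colours chosen along a play are legal moves of the first-cycle game:
at every Player-1 vertex, a `|V|·‖E‖`-generated perfect half-space. -/
def LegalCols (G : MWG V d) (ρ : ℕ → Conf V d) (χ : ℕ → Colour d) : Prop :=
  ∀ n, (ρ n).1 ∈ G.P1 → IsMGenPerfectHS (Fintype.card V * enorm G) d (χ n)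

/-- Consistency of a coloured play with a Player 2 first-cycle strategy. -/
def FCConsistentP2 (G : MWG V d) (σ : FCStratP2 V d)
    (ρ : ℕ → Conf V d) (χ : ℕ → Colour d) : Prop :=
  ∀ n, ((ρ n).1 ∈ G.P1 → χ n = σ.col (chist G ρ χ n) (ρ n)) ∧
    ((ρ n).1 ∉ G.P1 →
      ρ (n+1) = ((σ.edge (chist G ρ χ n) (ρ n)).2,
                 (ρ n).2 + (σ.edge (chist G ρ χ n) (ρ n)).1))

/-- Consistency of a coloured play with a Player 1 first-cycle strategy. -/
def FCConsistentP1 (G : MWG V d) (τ : FCStratP1 V d)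
    (ρ : ℕ → Conf V d) (χ : ℕ → Colour d) : Prop :=
  ∀ n, (ρ n).1 ∈ G.P1 →
    ρ (n+1) = ((τ (chist G ρ χ n) (ρ n) (χ n)).2,
               (ρ n).2 + (τ (chist G ρ χ n) (ρ n) (χ n)).1)

/-- `n₀ < n₁` witness the first time a vertex is visited twice along `ρ`,
producing the first (simple) cycle of the play. -/
def FirstRepeat (ρ : ℕ → Conf V d) (n₀ n₁ : ℕ) : Prop :=
  n₀ < n₁ ∧ (ρ n₀).1 = (ρ n₁).1 ∧ ∀ i j, i < j → j < n₁ → (ρ i).1 ≠ (ρ j).1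

/-- Cast an integer vector into `ℚ^d`. -/
def intQ {d : ℕ} (u : Fin d → ℤ) : QVec d := fun i => (u i : ℚ)

/-- Player 2 wins the first cycle (from `n₀` to `n₁`): its total weight lies
in the largest partially-perfect half-space of `ℚ^d` contained in all the
colours occurring in the cycle. -/
def CycleWinP2 (G : MWG V d) (ρ : ℕ → Conf V d) (χ : ℕ → Colour d)
    (n₀ n₁ : ℕ) : Prop :=
  ∃ A : Colour d, IsPartialPHS d A ∧
    (∀ j, n₀ ≤ j → j < n₁ → (ρ j).1 ∈ G.P1 → A ⊆ χ j) ∧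
    (∀ B : Colour d, IsPartialPHS d B →
      (∀ j, n₀ ≤ j → j < n₁ → (ρ j).1 ∈ G.P1 → B ⊆ χ j) → B ⊆ A) ∧
    intQ ((ρ n₁).2 - (ρ n₀).2) ∈ A

/-- Player 2 wins the first-cycle bounding game from `v₀`. -/
def P2WinsFC (G : MWG V d) (v₀ : V) : Prop :=
  ∃ σ : FCStratP2 V d, ValidFCP2 G σ ∧
    ∀ ρ χ, IsPlay G v₀ ρ → LegalCols G ρ χ → FCConsistentP2 G σ ρ χ →
      ∀ n₀ n₁, FirstRepeat ρ n₀ n₁ → CycleWinP2 G ρ χ n₀ n₁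

/-- Player 1 wins the first-cycle bounding game from `v₀`. -/
def P1WinsFC (G : MWG V d) (v₀ : V) : Prop :=
  ∃ τ : FCStratP1 V d, ValidFCP1 G τ ∧
    ∀ ρ χ, IsPlay G v₀ ρ → LegalCols G ρ χ → FCConsistentP1 G τ ρ χ →
      ∀ n₀ n₁, FirstRepeat ρ n₀ n₁ → ¬ CycleWinP2 G ρ χ n₀ n₁

/-!
Player 1 plays the bounding game by keeping a simulated first-cycle play on a stack, which is always
a simple path, together with at most `d` *levels* recording the weight of the cycles popped so far.
A level lives on the common kernel of the functionals of the previous levels. A phase of the level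
begins with a recorded weight `s` and a functional `A`, obtained by rounding `w ↦ -⟨s, w⟩` so that
its kernel is spanned by small integer vectors, in such a way that every small vector on the
positive side of `A` has a substantial negative inner product with `s`. Player 2 is made to colour
each edge with the perfect half-space on which the functionals of the levels are lexicographically
negative.

When the stack closes a cycle, its weight `w` is not lexicographically negative for the functionals
shared by all of its colours, because Player 1 wins the first-cycle game. Hence, going down the
levels as long as their functionals vanish at `w`, one meets either a level whose phase began above
the point where the cycle is closed, and `w` is added to its pending weight, which can happen at
most `|V|` times since the height of the level then decreases; or a level with `A w > 0`, and `w` is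
added to its drift. After enough cycles of the second kind the drift dominates the pending weight
and the weight recorded by the lower levels, so that adding all three to `s` does not increase
`⟨s, s⟩` beyond a fixed bound: a new phase then begins with the lower levels reset. The weights
recorded by the levels thus satisfy a recursive bound, which solves to `(4|V|·‖E‖)^(2(d+2)³)`.
-/

section LexNeg

variable {K E : Type*} [Field K] [AddCommGroup E] [Module K E]

/-- A flag on `S`: a list of functionals, each of which is not identically zero on the common
kernel in `S` of the preceding ones. -/
def IsFlag : Submodule K E → List (Module.Dual K E) → Prop
  | _, [] => True
  | S, f :: F => (∃ v ∈ S, f v ≠ 0) ∧ IsFlag (S ⊓ LinearMap.ker f) F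

lemma isFlag_iff_getElem {S : Submodule K E} {F : List (Module.Dual K E)} :
    IsFlag S F ↔
      ∀ i (h : i < F.length), ∃ v ∈ S, (∀ j (hj : j < i), F[j] v = 0) ∧ F[i] v ≠ 0 := by
  induction F generalizing S with
  | nil => simp [IsFlag]
  | cons f F ih =>
    simp only [IsFlag, ih]
    constructor
    · rintro ⟨⟨v, hv, hfv⟩, hF⟩ (_ | i) hi
      · exact ⟨v, hv, by simp, hfv⟩
      · obtain ⟨v, hv, hvanish, hne⟩ := hF i (by simpa using hi)
        refine ⟨v, hv.1, ?_, hne⟩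
        rintro (_ | j) hj
        · exact hv.2
        · exact hvanish j (by omega)
    · intro h
      refine ⟨?_, fun i hi => ?_⟩
      · obtain ⟨v, hv, -, hne⟩ := h 0 (by simp)
        exact ⟨v, hv, hne⟩
      · obtain ⟨v, hv, hvanish, hne⟩ := h (i + 1) (by simpa using hi)
        exact ⟨v, ⟨hv, hvanish 0 (by omega)⟩, fun j hj => hvanish (j + 1) (by omega), hne⟩

lemma IsFlag.of_prefix {S : Submodule K E} {F G : List (Module.Dual K E)} (hG : IsFlag S G)
    (h : F <+: G) : IsFlag S F := by
  refine isFlag_iff_getElem.mpr fun i hi => ?_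
  obtain ⟨v, hv, hvanish, hne⟩ := isFlag_iff_getElem.mp hG i (hi.trans_le h.length_le)
  refine ⟨v, hv, fun j hj => ?_, ?_⟩
  · rw [h.getElem (hj.trans hi), hvanish j hj]
  · rwa [h.getElem hi]

variable [LinearOrder K]

/-- The vectors at which a list of functionals is lexicographically negative. This is the form in
which the perfect half-spaces `H_d ∪ ⋯ ∪ H_k` are handled: the head of the list cuts out `H_d`. -/
def lexNeg : List (Module.Dual K E) → Set E
  | [] => ∅
  | f :: F => {v | f v < 0 ∨ f v = 0 ∧ v ∈ lexNeg F}

lemma mem_lexNeg_iff_getElem {F : List (Module.Dual K E)} {v : E} :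
    v ∈ lexNeg F ↔ ∃ i, ∃ h : i < F.length, (∀ j (hj : j < i), F[j] v = 0) ∧ F[i] v < 0 := by
  induction F with
  | nil => simp [lexNeg]
  | cons f F ih =>
    simp only [lexNeg, Set.mem_ofPred_eq, ih]
    constructor
    · rintro (hneg | ⟨hzero, i, hi, hvanish, hneg⟩)
      · exact ⟨0, by simp, by simp, hneg⟩
      · refine ⟨i + 1, by simpa using hi, ?_, by simpa using hneg⟩
        rintro (_ | j) hj
        · exact hzero
        · exact hvanish j (by omega)
    · rintro ⟨_ | i, hi, hvanish, hneg⟩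
      · exact .inl hneg
      · exact .inr ⟨hvanish 0 (by omega), i, by simpa using hi,
          fun j hj => hvanish (j + 1) (by omega), hneg⟩

lemma lexNeg_mono {F G : List (Module.Dual K E)} (h : F <+: G) : lexNeg F ⊆ lexNeg G := by
  intro v hv
  obtain ⟨i, hi, hvanish, hneg⟩ := mem_lexNeg_iff_getElem.mp hv
  refine mem_lexNeg_iff_getElem.mpr ⟨i, hi.trans_le h.length_le, fun j hj => ?_, ?_⟩
  · rw [← h.getElem (hj.trans hi), hvanish j hj]
  · rwa [← h.getElem hi]

variable [IsStrictOrderedRing K]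

lemma exists_pos_mul_eq_of_neg_imp_nonpos {S : Submodule K E} {f g : Module.Dual K E}
    (hf : ∃ v ∈ S, f v ≠ 0) (hg : ∃ v ∈ S, g v ≠ 0)
    (hfg : ∀ v ∈ S, f v < 0 → g v ≤ 0) : ∃ c, 0 < c ∧ ∀ v ∈ S, g v = c * f v := by
  obtain ⟨u, huS, hfu⟩ : ∃ u ∈ S, f u = -1 := by
    obtain ⟨v, hv, hfv⟩ := hf
    exact ⟨-(f v)⁻¹ • v, S.smul_mem _ hv, by simp [hfv]⟩
  have hker : ∀ v ∈ S, f v = 0 → g v = 0 := by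
    intro v hv hfv
    by_contra hgv
    have := hfg (u + ((1 - g u) / g v) • v) (S.add_mem huS (S.smul_mem _ hv)) (by simp [hfu, hfv])
    simp only [map_add, map_smul, smul_eq_mul, div_mul_cancel₀ _ hgv] at this
    linarith
  have heq : ∀ v ∈ S, g v = -g u * f v := by
    intro v hv
    have := hker (v + f v • u) (S.add_mem hv (S.smul_mem _ huS)) (by simp [hfu])
    simp only [map_add, map_smul, smul_eq_mul] at this
    linarith
  refine ⟨-g u, lt_of_le_of_ne ?_ ?_, heq⟩
  · linarith [hfg u huS (by simp [hfu])]
  · intro h0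
    obtain ⟨v, hv, hgv⟩ := hg
    exact hgv (by rw [heq v hv, ← h0, zero_mul])

lemma IsFlag.mem_lexNeg_iff_mem_take {S : Submodule K E} {F G : List (Module.Dual K E)}
    (hF : IsFlag S F) (hG : IsFlag S G) (hlen : F.length ≤ G.length)
    (hFG : ∀ v ∈ S, v ∈ lexNeg F → v ∈ lexNeg G) {v : E} (hv : v ∈ S) :
    v ∈ lexNeg F ↔ v ∈ lexNeg (G.take F.length) := by
  induction F generalizing S G v with
  | nil => simp
  | cons f F ih =>
    obtain _ | ⟨g, G⟩ := G
    · simp at hlen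
    obtain ⟨c, hc, hgf⟩ := exists_pos_mul_eq_of_neg_imp_nonpos hF.1 hG.1 fun u hu hfu =>
      (hFG u hu (.inl hfu)).elim le_of_lt fun h => h.1.le
    have hzero : ∀ u ∈ S, g u = 0 ↔ f u = 0 := fun u hu => by simp [hgf u hu, hc.ne']
    have hneg : g v < 0 ↔ f v < 0 := by rw [hgf v hv, mul_neg_iff]; simp [hc, hc.not_gt]
    have hker : S ⊓ LinearMap.ker g = S ⊓ LinearMap.ker f := by
      ext u
      exact and_congr_right (hzero u)
    have hstep (hfv : f v = 0) : v ∈ lexNeg F ↔ v ∈ lexNeg (G.take F.length) := by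
      refine ih hF.2 (hker ▸ hG.2) (by simpa using hlen) (fun u hu huF => ?_) ⟨hv, hfv⟩
      refine (hFG u hu.1 (.inr ⟨hu.2, huF⟩)).elim (fun h => ?_) And.right
      exact absurd ((hzero u hu.1).mpr hu.2) h.ne
    simp only [lexNeg, List.length_cons, List.take_succ_cons, Set.mem_ofPred_eq, hneg, hzero v hv]
    exact or_congr_right (and_congr_right hstep)

lemma IsFlag.exists_greatest_lexNeg_take {F : List (Module.Dual K E)} (hF : IsFlag ⊤ F)
    (𝓒 : Set (Set E)) (hFC : lexNeg F ∈ 𝓒) :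
    ∃ n, (∀ C ∈ 𝓒, lexNeg (F.take n) ⊆ C) ∧ ∀ F' : List (Module.Dual K E), IsFlag ⊤ F' →
      F'.length ≤ F.length → (∀ C ∈ 𝓒, lexNeg F' ⊆ C) → lexNeg F' ⊆ lexNeg (F.take n) := by
  classical
  let n := Nat.findGreatest (fun n => ∀ C ∈ 𝓒, lexNeg (F.take n) ⊆ C) F.length
  have hn : ∀ C ∈ 𝓒, lexNeg (F.take n) ⊆ C :=
    Nat.findGreatest_spec (P := fun n => ∀ C ∈ 𝓒, lexNeg (F.take n) ⊆ C)
      (Nat.zero_le _) (by simp [lexNeg])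
  refine ⟨n, hn, fun F' hF' hlen hsub => ?_⟩
  have heq : lexNeg F' = lexNeg (F.take F'.length) := Set.ext fun v =>
    hF'.mem_lexNeg_iff_mem_take hF hlen (fun u _ hu => hsub _ hFC hu) Submodule.mem_top
  rw [heq] at hsub ⊢
  exact lexNeg_mono (List.take_prefix_take_left (Nat.le_findGreatest hlen hsub))

end LexNeg

section HalfSpaces

variable {k : ℕ} {f : ℕ → Module.Dual ℚ (QVec d)} {F : List (Module.Dual ℚ (QVec d))}

/-- The chain of functionals in the indexing of `PPHSSet`, where the component `H_j` lives in
dimension `j`, with the elements of `F` listed from `f d` downwards. -/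
def chainOfList (d : ℕ) (F : List (Module.Dual ℚ (QVec d))) : ℕ → Module.Dual ℚ (QVec d) :=
  fun j => F.getD (d - j) 0

lemma mem_chainAux {i : ℕ} {v : QVec d} : v ∈ chainAux d f i ↔ ∀ j < i, f (d - j) v = 0 := by
  induction i with
  | zero => simp [chainAux]
  | succ i ih =>
    simp only [chainAux, Submodule.mem_inf, ih, LinearMap.mem_ker, Nat.forall_lt_succ_right]

lemma map_chainOfList {n : ℕ} (hF : F.length ≤ d) (hn : n = F.length) :
    (List.range n).map (fun i => chainOfList d F (d - i)) = F := by
  subst hn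
  refine List.ext_getElem (by simp) fun i _ hi => ?_
  simp [chainOfList, Nat.sub_sub_self (hi.le.trans hF), hi]

lemma PPHSSet_eq_lexNeg (hk : 1 ≤ k) :
    PPHSSet d k f = lexNeg ((List.range (d + 1 - k)).map fun i => f (d - i)) := by
  ext v
  simp only [PPHSSet, halfComp, chainSub, Set.mem_iUnion, Set.mem_Icc, Set.mem_ofPred_eq,
    mem_chainAux, mem_lexNeg_iff_getElem, List.length_map, List.length_range, List.getElem_map,
    List.getElem_range, exists_prop]
  constructor
  · rintro ⟨j, ⟨hkj, hjd⟩, hvanish, hneg⟩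
    exact ⟨d - j, by omega, hvanish, by rwa [Nat.sub_sub_self hjd]⟩
  · rintro ⟨i, hi, hvanish, hneg⟩
    exact ⟨d - i, by omega, by rwa [Nat.sub_sub_self (by omega)], hneg⟩

lemma chainCond_iff_isFlag (hk : 1 ≤ k) :
    ChainCond d k f ↔ IsFlag ⊤ ((List.range (d + 1 - k)).map fun i => f (d - i)) := by
  simp only [ChainCond, isFlag_iff_getElem, chainSub, mem_chainAux, List.length_map,
    List.length_range, List.getElem_map, List.getElem_range, Submodule.mem_top, true_and]
  constructor
  · intro h i hi
    simpa only [Nat.sub_sub_self (show i ≤ d by omega)] using h (d - i) (by omega) (by omega)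
  · intro h j hkj hjd
    simpa only [Nat.sub_sub_self hjd] using h (d - j) (by omega)

lemma isPartialPHS_iff {A : Set (QVec d)} :
    IsPartialPHS d A ↔ ∃ F : List (Module.Dual ℚ (QVec d)),
      F.length ≤ d ∧ IsFlag ⊤ F ∧ A = lexNeg F := by
  constructor
  · rintro ⟨k, hk, -, f, hf, rfl⟩
    exact ⟨_, by simp; omega, (chainCond_iff_isFlag hk).mp hf, PPHSSet_eq_lexNeg hk⟩
  · rintro ⟨F, hlen, hF, rfl⟩
    have hmap := map_chainOfList hlen (show d + 1 - (d + 1 - F.length) = F.length by omega)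
    refine ⟨d + 1 - F.length, by omega, by omega, chainOfList d F, ?_, ?_⟩
    · rwa [chainCond_iff_isFlag (by omega), hmap]
    · rw [PPHSSet_eq_lexNeg (by omega), hmap]

lemma isMGenPerfectHS_lexNeg {M : ℕ} (hlen : F.length = d) (hF : IsFlag ⊤ F)
    (hgen : ∀ i (hi : i < F.length), ∃ T, MGenSpace M T ∧
      ∀ v, v ∈ T ↔ ∀ j (hj : j ≤ i), F[j] v = 0) :
    IsMGenPerfectHS M d (lexNeg F) := by
  have hmap := map_chainOfList hlen.le (show d + 1 - 1 = F.length by omega)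
  refine ⟨le_rfl, by omega, chainOfList d F, ?_, fun j h1j hjd => ?_, ?_⟩
  · rwa [chainCond_iff_isFlag le_rfl, hmap]
  · obtain ⟨T, ⟨B, hB, rfl⟩, hT⟩ := hgen (d - j) (by omega)
    refine ⟨B, hB, Set.ext fun v => ?_⟩
    have hget : ∀ i ≤ d - j, chainOfList d F (d - i) v = 0 ↔ F.getD i 0 v = 0 := fun i hi => by
      rw [chainOfList, Nat.sub_sub_self (by omega)]
    rw [SetLike.mem_coe, hT, bdComp, Set.mem_ofPred_eq, chainSub, mem_chainAux]
    constructor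
    · intro h
      have hF0 : ∀ i ≤ d - j, F.getD i 0 v = 0 := fun i hi => by
        rw [List.getD_eq_getElem _ _ (by omega)]; exact h i hi
      exact ⟨fun i hi => (hget i hi.le).mpr (hF0 i hi.le), hF0 (d - j) le_rfl⟩
    · rintro ⟨hlt, heq⟩ i hi
      rw [← List.getD_eq_getElem F 0 (by omega)]
      obtain hi | rfl := hi.lt_or_eq
      · exact (hget i hi.le).mp (hlt i hi)
      · exact heq
  · rw [PPHSSet_eq_lexNeg le_rfl, hmap]

lemma notMem_lexNeg_of_not_cycleWinP2 {G : MWG V d} {ρ : ℕ → Conf V d} {χ : ℕ → Colour d}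
    {n₀ n₁ : ℕ} (hno : ¬ CycleWinP2 G ρ χ n₀ n₁) (hP1 : ∃ j ∈ Set.Ico n₀ n₁, (ρ j).1 ∈ G.P1)
    {P : List (Module.Dual ℚ (QVec d))}
    (hcol : ∀ j ∈ Set.Ico n₀ n₁, (ρ j).1 ∈ G.P1 →
      ∃ F, F.length = d ∧ IsFlag ⊤ F ∧ P <+: F ∧ χ j = lexNeg F) :
    intQ ((ρ n₁).2 - (ρ n₀).2) ∉ lexNeg P := by
  intro hneg
  let 𝓒 : Set (Set (QVec d)) := {C | ∃ j ∈ Set.Ico n₀ n₁, (ρ j).1 ∈ G.P1 ∧ χ j = C}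
  have h𝓒 (B : Set (QVec d)) : (∀ C ∈ 𝓒, B ⊆ C) ↔
      ∀ j, n₀ ≤ j → j < n₁ → (ρ j).1 ∈ G.P1 → B ⊆ χ j :=
    ⟨fun h j h₀ h₁ hj => h _ ⟨j, ⟨h₀, h₁⟩, hj, rfl⟩, fun h _ ⟨j, hj, hjP, hC⟩ =>
      hC ▸ h j hj.1 hj.2 hjP⟩
  obtain ⟨j, hj, hjP⟩ := hP1
  obtain ⟨F, hlen, hF, hPF, hχ⟩ := hcol j hj hjP
  have hFC : lexNeg F ∈ 𝓒 := ⟨j, hj, hjP, hχ⟩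
  obtain ⟨n, hsub, hmax⟩ := hF.exists_greatest_lexNeg_take 𝓒 hFC
  refine hno ⟨lexNeg (F.take n), isPartialPHS_iff.mpr ⟨_, ?_, hF.of_prefix (F.take_prefix n), rfl⟩,
    (h𝓒 _).mp hsub, fun B hB hBsub => ?_, ?_⟩
  · exact (F.length_take_le' n).trans hlen.le
  · obtain ⟨F', hlen', hF', rfl⟩ := isPartialPHS_iff.mp hB
    exact hmax F' hF' (hlen'.trans hlen.ge) ((h𝓒 _).mpr hBsub)
  · refine hmax P (hF.of_prefix hPF) hPF.length_le ?_ hneg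
    rintro _ ⟨i, hi, hiP, rfl⟩
    obtain ⟨F', -, -, hPF', hχ'⟩ := hcol i hi hiP
    exact hχ' ▸ lexNeg_mono hPF'

end HalfSpaces

section AdaptedBases

open Module

variable {K E ι : Type*} [Field K] [AddCommGroup E] [Module K E]

lemma exists_basis_of_linearIndepOn (e : Basis ι K E) {U W : Set E}
    (hU : LinearIndepOn K id U) (hUW : U ⊆ W) (hW : Submodule.span K W = ⊤) :
    ∃ b : Basis ι K E, (∀ j, b j ∈ W) ∧ U ⊆ Set.range b := by
  let b₀ := Basis.extendLe hU hUW hW.ge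
  have hrange : Set.range (b₀.reindex (b₀.indexEquiv e)) = hU.extend hUW := by
    rw [Basis.range_reindex, Basis.range_extendLe]
  exact ⟨b₀.reindex (b₀.indexEquiv e),
    fun j => hU.extend_subset hUW (hrange.le (Set.mem_range_self j)),
    (hU.subset_extend hUW).trans hrange.ge⟩

lemma repr_eq_zero_of_mem_span {b : Basis ι K E} {U : Set E} (hU : U ⊆ Set.range b) {s : E}
    (hs : s ∈ Submodule.span K U) {j : ι} (hj : b j ∉ U) : b.repr s j = 0 := by
  have hUb : U ⊆ b '' {j | b j ∈ U} := fun u hu => by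
    obtain ⟨i, rfl⟩ := hU hu
    exact ⟨i, hu, rfl⟩
  by_contra hne
  exact hj (b.repr_support_subset_of_mem_span _ (Submodule.span_mono hUb hs)
    (Finsupp.mem_support_iff.mpr hne))

lemma det_update_basis [Fintype ι] [DecidableEq ι] (e b : Basis ι K E) (x : E) (j : ι) :
    e.det (Function.update b j x) = e.det b * b.repr x j := by
  have hb : b.det (Function.update b j x) = b.repr x j := by
    rw [Basis.det_apply, Basis.toMatrix_update, Basis.toMatrix_self, ← Matrix.cramer_apply,
      Matrix.cramer_one, Module.End.one_apply]
  conv_lhs => rw [e.det.eq_smul_basis_det b, AlternatingMap.smul_apply, hb, smul_eq_mul]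

end AdaptedBases

section SmallVectors

open Module

variable {M : ℕ}

/-- The integer vectors of norm at most `M`, seen in `ℚ^d`. The weights of simple cycles are of this
form, with `M = |V|·‖E‖`. -/
def smallVectors (M d : ℕ) : Set (QVec d) := intQ '' {u | ∀ i, |u i| ≤ (M : ℤ)}

/-- A subspace of `ℚ^d` generated by small vectors. -/
def IsSmallSpan (M : ℕ) (S : Submodule ℚ (QVec d)) : Prop :=
  Submodule.span ℚ (smallVectors M d ∩ S) = S

lemma finite_smallVectors : (smallVectors M d).Finite := by
  have hbox := Set.Finite.pi' fun _ : Fin d => Set.finite_Icc (-(M : ℤ)) M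
  exact (hbox.subset fun u (hu : ∀ i, |u i| ≤ (M : ℤ)) i => abs_le.mp (hu i)).image _

lemma abs_apply_le_of_mem_smallVectors {w : QVec d} (hw : w ∈ smallVectors M d) (i : Fin d) :
    |w i| ≤ M := by
  obtain ⟨u, hu, rfl⟩ := hw
  simpa only [intQ, Int.cast_abs, Int.cast_natCast] using Int.cast_le (R := ℚ).mpr (hu i)

lemma IsSmallSpan.mGenSpace {S : Submodule ℚ (QVec d)} (hS : IsSmallSpan M S) : MGenSpace M S :=
  ⟨_, fun _ hv => abs_apply_le_of_mem_smallVectors hv.1, hS⟩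

lemma span_smallVectors (hM : 1 ≤ M) : Submodule.span ℚ (smallVectors M d) = ⊤ := by
  rw [eq_top_iff, ← (Pi.basisFun ℚ (Fin d)).span_eq]
  refine Submodule.span_mono ?_
  rintro _ ⟨i, rfl⟩
  refine ⟨Pi.single i 1, fun j => ?_, ?_⟩
  · obtain rfl | h := eq_or_ne j i
    · simpa using hM
    · simp [h]
  · ext j
    simp [intQ, Pi.single_apply]

/-- The Cramer bound on the coordinates of a vector of norm at most `M` in a basis of small
vectors. -/
def cramerBound (M d : ℕ) : ℚ := d.factorial * M ^ d

lemma cramerBound_nonneg (M d : ℕ) : 0 ≤ cramerBound M d := by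
  unfold cramerBound
  positivity

lemma abs_repr_le_cramerBound {b : Basis (Fin d) ℚ (QVec d)} (hb : ∀ j, b j ∈ smallVectors M d)
    {x : QVec d} (hx : ∀ i, |x i| ≤ M) (j : Fin d) : |b.repr x j| ≤ cramerBound M d := by
  let e := Pi.basisFun ℚ (Fin d)
  choose u hu hbu using hb
  have hint : e.det b = ((Matrix.of u).transpose.det : ℤ) := by
    rw [Basis.det_apply, Int.cast_det]
    congr 1
    ext i k
    simp [e, Basis.toMatrix_apply, ← hbu, intQ]
  have hdet : 1 ≤ |e.det b| := by
    have hne : e.det b ≠ 0 := (e.isUnit_det b).ne_zero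
    rw [hint] at hne ⊢
    exact_mod_cast Int.one_le_abs (Int.cast_ne_zero.mp hne)
  have hupd : |e.det (Function.update b j x)| ≤ cramerBound M d := by
    have hentry : ∀ i k, |e.toMatrix (Function.update b j x) i k| ≤ M := by
      intro i k
      obtain rfl | hk := eq_or_ne k j
      · simpa [e, Basis.toMatrix_apply] using hx i
      · simpa [e, Basis.toMatrix_apply, hk] using
          abs_apply_le_of_mem_smallVectors ⟨u k, hu k, hbu k⟩ i
    simpa [cramerBound, Basis.det_apply] using Matrix.det_le (abv := AbsoluteValue.abs) hentry
  calc |b.repr x j| ≤ |e.det b| * |b.repr x j| := le_mul_of_one_le_left (abs_nonneg _) hdet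
    _ = |e.det (Function.update b j x)| := by rw [det_update_basis e b, abs_mul]
    _ ≤ cramerBound M d := hupd

lemma exists_dual_abs_le_cramerBound (hM : 1 ≤ M) {U : Set (QVec d)} (hU : U ⊆ smallVectors M d)
    {w : QVec d} (hw : w ∈ smallVectors M d) (hwU : w ∉ Submodule.span ℚ U) :
    ∃ f : Dual ℚ (QVec d), f w = 1 ∧ (∀ v ∈ Submodule.span ℚ U, f v = 0) ∧
      ∀ x : QVec d, (∀ i, |x i| ≤ M) → |f x| ≤ cramerBound M d := by
  obtain ⟨U', hU', hspan, hli⟩ := exists_linearIndependent ℚ U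
  rw [← hspan] at hwU ⊢
  have hindep : LinearIndepOn ℚ id (insert w U') := LinearIndepOn.id_insert hli hwU
  obtain ⟨b, hb, hrange⟩ := exists_basis_of_linearIndepOn (Pi.basisFun ℚ (Fin d)) hindep
    (Set.insert_subset hw (hU'.trans hU)) (span_smallVectors hM)
  obtain ⟨k, rfl⟩ := hrange (Set.mem_insert w U')
  refine ⟨b.coord k, by simp, fun v hv => ?_, fun x hx => abs_repr_le_cramerBound hb hx k⟩
  exact repr_eq_zero_of_mem_span ((Set.subset_insert _ _).trans hrange) hv
    fun hk => hwU (Submodule.subset_span hk)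

lemma abs_le_cramerBound_mul (hM : 1 ≤ M) {S : Submodule ℚ (QVec d)} {A : Dual ℚ (QVec d)}
    (hA : IsSmallSpan M (S ⊓ LinearMap.ker A))
    {w w' : QVec d} (hw : w ∈ smallVectors M d) (hwS : w ∈ S) (hAw : A w ≠ 0)
    (hw' : w' ∈ smallVectors M d) (hwS' : w' ∈ S) : |A w'| ≤ cramerBound M d * |A w| := by
  obtain ⟨f, hfw, hf0, hf⟩ := exists_dual_abs_le_cramerBound hM Set.inter_subset_left hw
    (U := smallVectors M d ∩ (S ⊓ LinearMap.ker A : Submodule ℚ (QVec d)))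
    fun h => hAw (hA ▸ h : w ∈ S ⊓ LinearMap.ker A).2
  have hker : A w • w' - A w' • w ∈ S ⊓ LinearMap.ker A :=
    ⟨S.sub_mem (S.smul_mem _ hwS') (S.smul_mem _ hwS), by simp [mul_comm]⟩
  have heq : A w' = f w' * A w := by
    have := hf0 _ (hA ▸ hker)
    simp only [map_sub, map_smul, smul_eq_mul, hfw] at this
    linarith
  rw [heq, abs_mul]
  gcongr
  exact hf w' (abs_apply_le_of_mem_smallVectors hw')

lemma sq_le_dotProduct_self (s : QVec d) (i : Fin d) : s i ^ 2 ≤ s ⬝ᵥ s := by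
  rw [sq]
  exact Finset.single_le_sum (f := fun i => s i * s i) (fun i _ => mul_self_nonneg _)
    (Finset.mem_univ i)

lemma exists_abs_apply_le_mul_abs_dotProduct (hM : 1 ≤ M) {U : Set (QVec d)}
    (hU : U ⊆ smallVectors M d) {s : QVec d} (hs : s ∈ Submodule.span ℚ U) (hs0 : s ≠ 0) :
    ∃ w ∈ U, ∀ i, |s i| ≤ d * cramerBound M d * |s ⬝ᵥ w| := by
  obtain ⟨U', hU', hspan, hli⟩ := exists_linearIndependent ℚ U
  obtain ⟨b, hb, hrange⟩ := exists_basis_of_linearIndepOn (Pi.basisFun ℚ (Fin d)) hli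
    (hU'.trans hU) (span_smallVectors hM)
  obtain ⟨i₁, hi₁⟩ := Function.ne_iff.mp hs0
  have : Nonempty (Fin d) := ⟨i₁⟩
  obtain ⟨i₀, hmax⟩ := Finite.exists_max fun i => |s i|
  have hd : (0 : ℚ) < d := by exact_mod_cast i₀.pos
  have hpos : 0 < |s i₀| := (abs_pos.mpr hi₁).trans_le (hmax i₁)
  have hcoord : ∀ j, |b.repr s j| ≤ cramerBound M d * |s i₀| := fun j => by
    have := abs_repr_le_cramerBound hb (x := |s i₀|⁻¹ • s) (fun i => ?_) j
    · rwa [map_smul, Finsupp.smul_apply, smul_eq_mul, abs_mul, abs_inv, abs_abs,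
        inv_mul_le_iff₀ hpos, mul_comm] at this
    · rw [Pi.smul_apply, smul_eq_mul, abs_mul, abs_inv, abs_abs, inv_mul_le_iff₀ hpos]
      exact (hmax i).trans (le_mul_of_one_le_right hpos.le (by exact_mod_cast hM))
  obtain ⟨j, -, hj⟩ : ∃ j ∈ Finset.univ, |s i₀| ^ 2 / d ≤ b.repr s j * (s ⬝ᵥ b j) := by
    refine Finset.exists_le_of_sum_le Finset.univ_nonempty ?_
    have hexpand : s ⬝ᵥ s = ∑ j, b.repr s j * (s ⬝ᵥ b j) := by
      simp only [← smul_eq_mul, ← dotProduct_smul, ← dotProduct_sum, b.sum_repr]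
    rw [← hexpand, Finset.sum_const, Finset.card_univ, Fintype.card_fin, nsmul_eq_mul,
      mul_div_cancel₀ _ hd.ne', sq_abs]
    exact sq_le_dotProduct_self s i₀
  have hjpos : 0 < b.repr s j * (s ⬝ᵥ b j) := lt_of_lt_of_le (by positivity) hj
  refine ⟨b j, hU' ?_, fun i => (hmax i).trans ?_⟩
  · by_contra hjU
    rw [repr_eq_zero_of_mem_span hrange (hspan ▸ hs) hjU, zero_mul] at hjpos
    exact hjpos.false
  · rw [div_le_iff₀ hd] at hj
    refine le_of_mul_le_mul_right ?_ hpos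
    calc |s i₀| * |s i₀| ≤ |b.repr s j| * |s ⬝ᵥ b j| * d := by
          rw [← sq, ← abs_mul]; exact hj.trans (by gcongr; exact le_abs_self _)
      _ ≤ cramerBound M d * |s i₀| * |s ⬝ᵥ b j| * d := by gcongr; exact hcoord j
      _ = d * cramerBound M d * |s ⬝ᵥ b j| * |s i₀| := by ring

end SmallVectors

section Rounding

open Module

variable {K E : Type*} [Field K] [LinearOrder K] [IsStrictOrderedRing K] [AddCommGroup E]
  [Module K E] {W : Set E}

lemma exists_sub_eq_mul_of_abs_le {x z : K} (h : |z| ≤ |x|) :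
    ∃ c ∈ Set.Icc (0 : K) 2, x - z = c * x := by
  have hzx : |z / x| ≤ 1 := abs_div z x ▸ div_le_one_of_le₀ h (abs_nonneg x)
  obtain ⟨hlo, hhi⟩ := abs_le.mp hzx
  refine ⟨1 - z / x, ⟨by linarith, by linarith⟩, ?_⟩
  obtain rfl | hx := eq_or_ne x 0
  · simpa using h
  · rw [sub_mul, one_mul, div_mul_cancel₀ z hx]

lemma span_inter_ker_eq_or_exists_ker_lt (hW : W.Finite) {w₀ : E} {x : Dual K E}
    (hx : x w₀ ≠ 0) :
    Submodule.span K (W ∩ LinearMap.ker x) = Submodule.span K W ⊓ LinearMap.ker x ∨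
      ∃ x' : Dual K E, x' w₀ = x w₀ ∧
        Submodule.span K (W ∩ LinearMap.ker x) < Submodule.span K (W ∩ LinearMap.ker x') ∧
        ∀ w ∈ W, ∃ c ∈ Set.Icc (0 : K) 2, x' w = c * x w := by
  set Z := Submodule.span K (W ∩ LinearMap.ker x)
  have hZW : Z ≤ Submodule.span K W := Submodule.span_mono Set.inter_subset_left
  have hZx : Z ≤ LinearMap.ker x := Submodule.span_le.mpr Set.inter_subset_right
  by_cases hcover : W ⊆ (Z ⊔ Submodule.span K {w₀} : Submodule K E)
  · refine .inl (le_antisymm (le_inf hZW hZx) fun v ⟨hv, hxv⟩ => ?_)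
    obtain ⟨z, hz, y, hy, rfl⟩ := Submodule.mem_sup.mp (Submodule.span_le.mpr hcover hv)
    obtain ⟨c, rfl⟩ := Submodule.mem_span_singleton.mp hy
    have hc : c = 0 := by simpa [hx, LinearMap.mem_ker.mp (hZx hz)] using hxv
    simpa [hc] using hz
  -- Move `x` along a functional `y` killing `Z` and `w₀`, as far as no sign on `W` flips.
  · obtain ⟨w₁, hw₁, hw₁Z⟩ := Set.not_subset.mp hcover
    obtain ⟨y, hyw₁, hy⟩ := Submodule.exists_le_ker_of_notMem hw₁Z
    have hyZ : Z ≤ LinearMap.ker y := le_sup_left.trans hy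
    have hyw₀ : y w₀ = 0 := hy (Submodule.mem_sup_right (Submodule.mem_span_singleton_self w₀))
    obtain ⟨u, ⟨huW, hyu⟩, hmin⟩ := Set.exists_min_image {w ∈ W | y w ≠ 0}
      (fun w => |x w| / |y w|) (hW.subset (Set.sep_subset _ _)) ⟨w₁, hw₁, hyw₁⟩
    have hxu : x u ≠ 0 := fun h => hyu (hyZ (Submodule.subset_span ⟨huW, h⟩))
    let x' : Dual K E := x - (x u / y u) • y
    have hx'u : x' u = 0 := by simp [x', hyu]
    refine .inr ⟨x', by simp [x', hyw₀], SetLike.lt_iff_le_and_exists.mpr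
      ⟨Submodule.span_mono fun v hv => ⟨hv.1, ?_⟩, u, ?_, fun h => hxu (hZx h)⟩, fun w hw => ?_⟩
    · have hxv : x v = 0 := hv.2
      have hyv : y v = 0 := hyZ (Submodule.subset_span hv)
      simp [x', hxv, hyv]
    · exact Submodule.subset_span ⟨huW, hx'u⟩
    · refine exists_sub_eq_mul_of_abs_le ?_
      obtain hyw | hyw := eq_or_ne (y w) 0
      · simp [hyw]
      · have := (le_div_iff₀ (abs_pos.mpr hyw)).mp (hmin w ⟨hw, hyw⟩)
        simpa [abs_mul, abs_div] using this

lemma exists_dual_span_inter_ker_eq [FiniteDimensional K E] (hW : W.Finite) {w₀ : E}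
    {x : Dual K E} (hx : x w₀ ≠ 0) :
    ∃ A : Dual K E, A w₀ = x w₀ ∧
      Submodule.span K (W ∩ LinearMap.ker A) = Submodule.span K W ⊓ LinearMap.ker A ∧
      ∀ w ∈ W, ∃ c ∈ Set.Icc (0 : K) (2 ^ finrank K E), A w = c * x w := by
  suffices h : ∀ n, finrank K E ≤ finrank K (Submodule.span K (W ∩ LinearMap.ker x)) + n →
      ∃ A : Dual K E, A w₀ = x w₀ ∧
        Submodule.span K (W ∩ LinearMap.ker A) = Submodule.span K W ⊓ LinearMap.ker A ∧
        ∀ w ∈ W, ∃ c ∈ Set.Icc (0 : K) (2 ^ n), A w = c * x w from h _ (Nat.le_add_left _ _)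
  intro n
  induction n generalizing x with
  | zero =>
    intro hrank
    obtain h | ⟨x', -, hlt, -⟩ := span_inter_ker_eq_or_exists_ker_lt hW hx
    · exact ⟨x, rfl, h, fun w _ => ⟨1, by simp, by simp⟩⟩
    · have := Submodule.finrank_lt_finrank_of_lt hlt
      have := Submodule.finrank_le (Submodule.span K (W ∩ LinearMap.ker x'))
      omega
  | succ n ih =>
    intro hrank
    obtain h | ⟨x', hx', hlt, hcx'⟩ := span_inter_ker_eq_or_exists_ker_lt hW hx
    · exact ⟨x, rfl, h, fun w _ => ⟨1, ⟨zero_le_one, one_le_pow₀ one_le_two⟩, by simp⟩⟩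
    · have := Submodule.finrank_lt_finrank_of_lt hlt
      obtain ⟨A, hA, hspan, hcA⟩ := ih (x := x') (hx' ▸ hx) (by omega)
      refine ⟨A, hA.trans hx', hspan, fun w hw => ?_⟩
      obtain ⟨c, hc, hcw⟩ := hcA w hw
      obtain ⟨c', hc', hcw'⟩ := hcx' w hw
      refine ⟨c * c', ⟨mul_nonneg hc.1 hc'.1, ?_⟩, by rw [hcw, hcw', mul_assoc]⟩
      rw [pow_succ]
      exact mul_le_mul hc.2 hc'.2 hc'.1 (by positivity)

end Rounding

section DescentFunctional

open Module

variable {M : ℕ}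

/-- The constant `Λ` in the descent condition of `exists_descent_functional`. -/
def descentConst (M d : ℕ) : ℚ := 2 * d * (d * 2 ^ d * cramerBound M d ^ 2)

lemma descentConst_nonneg (M d : ℕ) : 0 ≤ descentConst M d := by
  have := cramerBound_nonneg M d
  unfold descentConst
  positivity

lemma IsSmallSpan.exists_dual_inf_ker {S : Submodule ℚ (QVec d)} (hS : IsSmallSpan M S)
    {w₀ : QVec d} {x : Dual ℚ (QVec d)} (hx : x w₀ ≠ 0) :
    ∃ A : Dual ℚ (QVec d), A w₀ = x w₀ ∧ IsSmallSpan M (S ⊓ LinearMap.ker A) ∧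
      ∀ w ∈ smallVectors M d, w ∈ S → ∃ c ∈ Set.Icc (0 : ℚ) (2 ^ d), A w = c * x w := by
  obtain ⟨A, hA, hspan, hc⟩ :=
    exists_dual_span_inter_ker_eq (finite_smallVectors.subset Set.inter_subset_left) hx
      (W := smallVectors M d ∩ S)
  refine ⟨A, hA, ?_, fun w hw hwS => by simpa using hc w ⟨hw, hwS⟩⟩
  rwa [hS, Set.inter_assoc] at hspan

lemma exists_descent_functional (hM : 1 ≤ M) {S : Submodule ℚ (QVec d)} (hS : IsSmallSpan M S)
    (hS0 : S ≠ ⊥) {s : QVec d} (hs : s ∈ S) :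
    ∃ A : Dual ℚ (QVec d), (∃ v ∈ S, A v ≠ 0) ∧ IsSmallSpan M (S ⊓ LinearMap.ker A) ∧
      ∀ w ∈ smallVectors M d, w ∈ S → 0 < A w →
        ∀ i, descentConst M d * (s ⬝ᵥ w) ≤ -(2 * d * |s i|) := by
  obtain rfl | hs0 := eq_or_ne s 0
  · obtain ⟨v, hv, hv0⟩ := S.ne_bot_iff.mp hS0
    obtain ⟨x, hx, -⟩ := Submodule.exists_le_ker_of_notMem
      (p := (⊥ : Submodule ℚ (QVec d))) (v := v) (by simpa using hv0)
    obtain ⟨A, hA, hspan, -⟩ := hS.exists_dual_inf_ker hx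
    exact ⟨A, ⟨v, hv, hA ▸ hx⟩, hspan, by simp⟩
  · obtain ⟨w₀, ⟨hw₀, hw₀S⟩, hbig⟩ :=
      exists_abs_apply_le_mul_abs_dotProduct hM Set.inter_subset_left (hS ▸ hs) hs0
    let x : Dual ℚ (QVec d) := -dotProductBilin ℚ ℚ s
    have hxapply : ∀ w, x w = -(s ⬝ᵥ w) := fun w => rfl
    have hx : x w₀ ≠ 0 := by
      intro h0
      rw [hxapply, neg_eq_zero] at h0
      refine hs0 (funext fun i => abs_nonpos_iff.mp ?_)
      simpa [h0] using hbig i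
    obtain ⟨A, hA, hspan, hround⟩ := hS.exists_dual_inf_ker hx
    refine ⟨A, ⟨w₀, hw₀S, hA ▸ hx⟩, hspan, fun w hw hwS hAw i => ?_⟩
    obtain ⟨c, ⟨hc0, hc⟩, hAc⟩ := hround w hw hwS
    have hxw : 0 ≤ x w := (pos_of_mul_pos_right (hAc ▸ hAw) hc0).le
    have hκ := cramerBound_nonneg M d
    have hsi : |s i| ≤ d * cramerBound M d * (cramerBound M d * (2 ^ d * x w)) :=
      calc |s i| ≤ d * cramerBound M d * |A w₀| := by rw [hA, hxapply, abs_neg]; exact hbig i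
        _ ≤ d * cramerBound M d * (cramerBound M d * |A w|) := by
          gcongr
          exact abs_le_cramerBound_mul hM hspan hw hwS hAw.ne' hw₀ hw₀S
        _ ≤ d * cramerBound M d * (cramerBound M d * (2 ^ d * x w)) := by
          rw [abs_of_pos hAw, hAc]
          gcongr
    rw [hxapply] at hsi
    unfold descentConst
    linarith [mul_le_mul_of_nonneg_left hsi (show (0 : ℚ) ≤ 2 * d by positivity)]

end DescentFunctional

section PhaseEstimates

lemma dotProduct_le_of_abs_le {s t : QVec d} {a b : ℚ} (hs : ∀ i, |s i| ≤ a)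
    (ht : ∀ i, |t i| ≤ b) : s ⬝ᵥ t ≤ d * (a * b) := by
  calc s ⬝ᵥ t ≤ ∑ _i : Fin d, a * b := by
        refine Finset.sum_le_sum fun i _ => (le_abs_self _).trans ?_
        rw [abs_mul]
        exact mul_le_mul (hs i) (ht i) (abs_nonneg _) ((abs_nonneg _).trans (hs i))
    _ = d * (a * b) := by simp

lemma dotProduct_self_add_le {s t : QVec d} {m b c r R : ℚ} (hs : ∀ i, |s i| ≤ m)
    (ht : ∀ i, |t i| ≤ b) (hc : 0 ≤ c) (hst : s ⬝ᵥ t ≤ -(d * (c * m)))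
    (hss : s ⬝ᵥ s ≤ d * R ^ 2) (hb : b ^ 2 ≤ 2 * (c * r)) (hR : r + b ≤ R) :
    (s + t) ⬝ᵥ (s + t) ≤ d * R ^ 2 := by
  obtain hm | hm := le_total r m
  · have htt := dotProduct_le_of_abs_le ht ht
    have hcm : (d : ℚ) * (c * r) ≤ d * (c * m) := by gcongr
    have hb' : (d : ℚ) * b ^ 2 ≤ d * (2 * (c * r)) := by gcongr
    calc (s + t) ⬝ᵥ (s + t) = s ⬝ᵥ s + 2 * (s ⬝ᵥ t) + t ⬝ᵥ t := by
          simp only [add_dotProduct, dotProduct_add, dotProduct_comm t s]; ring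
      _ ≤ d * R ^ 2 := by linarith
  · have hsum : ∀ i, |(s + t) i| ≤ R := fun i =>
      (abs_add_le _ _).trans (by linarith [hs i, ht i])
    simpa only [sq] using dotProduct_le_of_abs_le hsum hsum

/-- At the end of a phase the drift `D` outweighs the carried vector `T`, so that the squared norm
has not grown. -/
lemma dotProduct_self_add_drift_le (hd : 1 ≤ d) {Λ M C r : ℚ} (hΛ : 1 ≤ Λ) (hM : 1 ≤ M)
    (hC : 1 ≤ C) {s D T : QVec d} (hD : ∀ i, |D i| ≤ r * M) (hT : ∀ i, |T i| ≤ C)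
    (hsD : ∀ i, Λ * (s ⬝ᵥ D) ≤ -(2 * d * (r * |s i|))) (hr : Λ * C ≤ r) (hr' : r ≤ Λ * C + 1)
    (hss : s ⬝ᵥ s ≤ d * (8 * Λ ^ 2 * M ^ 2 * C) ^ 2) :
    (s + (D + T)) ⬝ᵥ (s + (D + T)) ≤ d * (8 * Λ ^ 2 * M ^ 2 * C) ^ 2 := by
  have : Nonempty (Fin d) := ⟨⟨0, hd⟩⟩
  obtain ⟨i₀, hmax⟩ := Finite.exists_max fun i => |s i|
  have hΛM : 1 ≤ Λ * M := one_le_mul_of_one_le_of_one_le hΛ hM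
  have hdot : s ⬝ᵥ (D + T) ≤ -(d * (C * |s i₀|)) := by
    have hsT := mul_le_mul_of_nonneg_left (dotProduct_le_of_abs_le hmax hT)
      (zero_le_one.trans hΛ)
    have hrs : d * |s i₀| * (Λ * C) ≤ d * |s i₀| * r := by gcongr
    refine le_of_mul_le_mul_left ?_ (zero_lt_one.trans_le hΛ)
    rw [dotProduct_add]
    linarith [hsD i₀]
  have hDT : ∀ i, |(D + T) i| ≤ 3 * (Λ * M * C) := fun i => by
    have hΛC : 1 ≤ Λ * C := one_le_mul_of_one_le_of_one_le hΛ hC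
    have hrM : r * M ≤ (Λ * C + 1) * M := by gcongr
    have hM' : M ≤ Λ * M * C := by nlinarith
    have hC' : C ≤ Λ * M * C := by nlinarith
    exact (abs_add_le _ _).trans (by linarith [hD i, hT i])
  have hsq : Λ * M * C ≤ Λ ^ 2 * M ^ 2 * C := by
    rw [← mul_pow]; gcongr; exact le_self_pow₀ hΛM two_ne_zero
  refine dotProduct_self_add_le hmax hDT (by linarith) hdot hss (r := 5 * (Λ ^ 2 * M ^ 2 * C)) ?_
    (by linarith)
  have : 0 ≤ Λ ^ 2 * M ^ 2 * C ^ 2 := by positivity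
  linarith

end PhaseEstimates

section Levels

open Module

variable {M N k : ℕ} {S : Submodule ℚ (QVec d)}

/-- The bound on the weight recorded by `k` levels of memory. -/
def levelBound (M N d : ℕ) : ℕ → ℚ
  | 0 => 0
  | k + 1 => 11 * d * descentConst M d ^ 2 * M ^ 2 * (levelBound M N d k + N * M)

/-- The bound on the weight carried by a level above `k` levels: what these levels record, plus its
own pending weight. -/
def carryBound (M N d k : ℕ) : ℚ := levelBound M N d k + N * M

/-- One level of the memory of the strategy. Its functional is fixed for a phase, which begins with
the recorded weight `start` at stack height `height`; `drift` is the total of the `steps` cycles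
closed since on the positive side of the functional, and `pending` is the total of the cycles closed
below the height at which the phase began. -/
structure Level (d : ℕ) where
  functional : Dual ℚ (QVec d)
  start : QVec d
  drift : QVec d
  pending : QVec d
  steps : ℕ
  height : ℕ

/-- The weight recorded by the levels. -/
def total : List (Level d) → QVec d
  | [] => 0
  | l :: L => l.start + (l.drift + (l.pending + total L))

/-- The invariant of a level on the subspace `S`, when `k` levels lie below it. -/
structure LevelOK (M N : ℕ) (S : Submodule ℚ (QVec d)) (k : ℕ) (l : Level d) : Prop where
  isSmallSpan : IsSmallSpan M S
  exists_ne_zero : ∃ v ∈ S, l.functional v ≠ 0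
  start_mem : l.start ∈ S
  drift_mem : l.drift ∈ S
  pending_mem : l.pending ∈ S
  height_le : l.height ≤ N
  abs_pending_le : ∀ i, |l.pending i| ≤ ((N : ℚ) - l.height) * M
  abs_drift_le : ∀ i, |l.drift i| ≤ l.steps * M
  dot_drift_le : ∀ i, descentConst M d * (l.start ⬝ᵥ l.drift) ≤
    -(2 * d * (l.steps * |l.start i|))
  steps_lt : l.steps < descentConst M d * carryBound M N d k
  dot_start_le : l.start ⬝ᵥ l.start ≤
    d * (8 * descentConst M d ^ 2 * M ^ 2 * carryBound M N d k) ^ 2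
  descent : ∀ w ∈ smallVectors M d, w ∈ S → 0 < l.functional w →
    ∀ i, descentConst M d * (l.start ⬝ᵥ w) ≤ -(2 * d * |l.start i|)

/-- The invariant of the memory: each level lives on the common kernel in `S` of the functionals of
the preceding levels, and the last kernel is trivial. -/
def LevelsInv (M N : ℕ) : Submodule ℚ (QVec d) → List (Level d) → Prop
  | S, [] => S = ⊥
  | S, l :: L => LevelOK M N S L.length l ∧ LevelsInv M N (S ⊓ LinearMap.ker l.functional) L

/-- The flag `F`, played as a colour at stack height `i`, agrees with the levels whose phase was
already running at height `i`. -/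
def Agrees (i : ℕ) : List (Level d) → List (Dual ℚ (QVec d)) → Prop
  | [], _ => True
  | l :: L, F => i < l.height ∨ ∃ F', F = l.functional :: F' ∧ Agrees i L F'

lemma agrees_map_functional (i : ℕ) (L : List (Level d)) : Agrees i L (L.map Level.functional) := by
  induction L with
  | nil => trivial
  | cons l L ih => exact .inr ⟨_, rfl, ih⟩

lemma one_le_descentConst (hM : 1 ≤ M) (hd : 1 ≤ d) : 1 ≤ descentConst M d := by
  have hκ : 1 ≤ cramerBound M d := by
    unfold cramerBound
    exact_mod_cast Nat.mul_pos d.factorial_pos (pow_pos hM d)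
  have hd' : (1 : ℚ) ≤ d := by exact_mod_cast hd
  have hpow : (1 : ℚ) ≤ d * 2 ^ d * cramerBound M d ^ 2 :=
    one_le_mul_of_one_le_of_one_le
      (one_le_mul_of_one_le_of_one_le hd' (one_le_pow₀ one_le_two)) (one_le_pow₀ hκ)
  exact one_le_mul_of_one_le_of_one_le (by linarith) hpow

lemma levelBound_nonneg (M N d k : ℕ) : 0 ≤ levelBound M N d k := by
  induction k with
  | zero => exact le_rfl
  | succ k ih => unfold levelBound; positivity

lemma one_le_carryBound (hM : 1 ≤ M) (hN : 1 ≤ N) : 1 ≤ carryBound M N d k := by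
  have hNM : (1 : ℚ) ≤ N * M := by exact_mod_cast Nat.mul_pos hN hM
  exact le_add_of_nonneg_of_le (levelBound_nonneg M N d k) hNM

lemma finrank_inf_ker_add_one {K E : Type*} [Field K] [AddCommGroup E] [Module K E]
    {S : Submodule K E} [FiniteDimensional K S] {f : Dual K E} (hf : ∃ v ∈ S, f v ≠ 0) :
    finrank K (S ⊓ LinearMap.ker f : Submodule K E) + 1 = finrank K S := by
  obtain ⟨v, hv, hfv⟩ := hf
  have hne : f.domRestrict S ≠ 0 := fun h => hfv (LinearMap.congr_fun h ⟨v, hv⟩)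
  rw [← Dual.finrank_ker_add_one_of_ne_zero hne, LinearMap.domRestrict, LinearMap.ker_comp,
    ← Submodule.map_comap_subtype, Submodule.finrank_map_subtype_eq]

lemma LevelOK.dim_pos {l : Level d} (h : LevelOK M N S k l) : 1 ≤ d := by
  obtain ⟨v, -, hv⟩ := h.exists_ne_zero
  rw [Nat.one_le_iff_ne_zero]
  rintro rfl
  exact hv (by rw [Subsingleton.elim v 0, map_zero])

namespace LevelsInv

variable {L : List (Level d)}

lemma finrank_eq (h : LevelsInv M N S L) : finrank ℚ S = L.length := by
  induction L generalizing S with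
  | nil => rw [show S = ⊥ from h, finrank_bot, List.length_nil]
  | cons l L ih => rw [← finrank_inf_ker_add_one h.1.exists_ne_zero, ih h.2, List.length_cons]

lemma length_eq (h : LevelsInv M N (⊤ : Submodule ℚ (QVec d)) L) : L.length = d := by
  rw [← h.finrank_eq, finrank_top, finrank_fin_fun]

lemma isSmallSpan (h : LevelsInv M N S L) : IsSmallSpan M S := by
  cases L with
  | nil => obtain rfl : S = ⊥ := h; simp [IsSmallSpan, Submodule.span_eq_bot]
  | cons l L => exact h.1.isSmallSpan

lemma isFlag (h : LevelsInv M N S L) : IsFlag S (L.map Level.functional) := by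
  induction L generalizing S with
  | nil => trivial
  | cons l L ih => exact ⟨h.1.exists_ne_zero, ih h.2⟩

lemma exists_mGenSpace (h : LevelsInv M N S L) (i : ℕ) (hi : i < (L.map Level.functional).length) :
    ∃ T, MGenSpace M T ∧
      ∀ v, v ∈ T ↔ v ∈ S ∧ ∀ j (hj : j ≤ i), (L.map Level.functional)[j] v = 0 := by
  induction L generalizing S i with
  | nil => simp at hi
  | cons l L ih =>
    cases i with
    | zero =>
      refine ⟨_, h.2.isSmallSpan.mGenSpace, fun v => ⟨fun hv => ⟨hv.1, fun j hj => ?_⟩,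
        fun hv => ⟨hv.1, hv.2 0 le_rfl⟩⟩⟩
      obtain rfl := Nat.le_zero.mp hj
      exact hv.2
    | succ i =>
      obtain ⟨T, hT, hmem⟩ := ih h.2 i (by simpa using hi)
      refine ⟨T, hT, fun v => ?_⟩
      rw [hmem, Submodule.mem_inf, LinearMap.mem_ker, and_assoc]
      refine and_congr_right fun _ => ⟨fun ⟨hzero, hvanish⟩ => ?_, fun h => ⟨?_, fun j hj => ?_⟩⟩
      · rintro (_ | j) hj
        · exact hzero
        · exact hvanish j (by omega)
      · exact h 0 (by omega)
      · exact h (j + 1) (by omega)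

lemma isMGenPerfectHS (h : LevelsInv M N (⊤ : Submodule ℚ (QVec d)) L) :
    IsMGenPerfectHS M d (lexNeg (L.map Level.functional)) := by
  refine isMGenPerfectHS_lexNeg ?_ h.isFlag fun i hi => ?_
  · rw [List.length_map, h.length_eq]
  · simpa using h.exists_mGenSpace i hi

lemma total_mem (h : LevelsInv M N S L) : total L ∈ S := by
  induction L generalizing S with
  | nil => exact S.zero_mem
  | cons l L ih =>
    exact S.add_mem h.1.start_mem
      (S.add_mem h.1.drift_mem (S.add_mem h.1.pending_mem (ih h.2).1))

end LevelsInv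

section Bounds

variable {l : Level d}

lemma LevelOK.abs_pending_add_le (h : LevelOK M N S k l) {t : QVec d}
    (ht : ∀ i, |t i| ≤ levelBound M N d k) (i : Fin d) :
    |(l.pending + t) i| ≤ carryBound M N d k := by
  have hheight : ((N : ℚ) - l.height) * M ≤ N * M := by
    gcongr
    exact sub_le_self _ (Nat.cast_nonneg _)
  rw [carryBound, add_comm (levelBound M N d k)]
  exact (abs_add_le _ _).trans (add_le_add ((h.abs_pending_le i).trans hheight) (ht i))

lemma LevelOK.abs_start_le (hM : 1 ≤ M) (hN : 1 ≤ N) (h : LevelOK M N S k l) (i : Fin d) :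
    |l.start i| ≤ d * (8 * descentConst M d ^ 2 * M ^ 2 * carryBound M N d k) := by
  have hC : 1 ≤ carryBound M N d k := one_le_carryBound hM hN
  refine abs_le_of_sq_le_sq ((sq_le_dotProduct_self _ i).trans (h.dot_start_le.trans ?_))
    (by positivity)
  rw [mul_pow (d : ℚ)]
  gcongr
  exact le_self_pow₀ (by exact_mod_cast h.dim_pos) two_ne_zero

lemma LevelsInv.abs_total_le (hM : 1 ≤ M) (hN : 1 ≤ N) {L : List (Level d)}
    (h : LevelsInv M N S L) (i : Fin d) : |total L i| ≤ levelBound M N d L.length := by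
  induction L generalizing S i with
  | nil => simp [total, levelBound]
  | cons l L ih =>
    obtain ⟨h, hL⟩ := h
    set C := carryBound M N d L.length with hC
    have hC1 : 1 ≤ C := one_le_carryBound hM hN
    have hM' : (1 : ℚ) ≤ M := by exact_mod_cast hM
    have hd : (1 : ℚ) ≤ d := by exact_mod_cast h.dim_pos
    have hΛM : 1 ≤ descentConst M d * M :=
      one_le_mul_of_one_le_of_one_le (one_le_descentConst hM h.dim_pos) hM'
    set Q := descentConst M d ^ 2 * M ^ 2 * C
    have hcarry : |(l.pending + total L) i| ≤ Q :=
      (h.abs_pending_add_le (ih hL) i).trans <| by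
        simp only [Q, ← mul_pow]
        exact le_mul_of_one_le_left (by linarith) (one_le_pow₀ hΛM)
    have hdrift : |l.drift i| ≤ Q := calc
      |l.drift i| ≤ descentConst M d * C * M :=
        (h.abs_drift_le i).trans (by gcongr; exact h.steps_lt.le)
      _ = descentConst M d * M * C := by ring
      _ ≤ Q := by simp only [Q, ← mul_pow]; gcongr; exact le_self_pow₀ hΛM two_ne_zero
    have hQ : 0 ≤ Q := (abs_nonneg _).trans hdrift
    calc |total (l :: L) i| ≤ |l.start i| + (|l.drift i| + |(l.pending + total L) i|) :=
          (abs_add_le _ _).trans (by gcongr; exact abs_add_le _ _)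
      _ ≤ 8 * (d * Q) + (d * Q + d * Q) := by
        have := h.abs_start_le hM hN i
        have : Q ≤ d * Q := le_mul_of_one_le_left hQ hd
        gcongr
        · linarith
        · linarith
        · linarith
      _ ≤ 11 * d * Q := by nlinarith
      _ = levelBound M N d (l :: L).length := by
        simp only [Q, hC, carryBound, List.length_cons, levelBound]; ring

end Bounds

end Levels

section Absorption

open Module

variable {M N k p : ℕ} {S : Submodule ℚ (QVec d)} {s w : QVec d} {l : Level d}
  {L L' : List (Level d)}

/-- The levels `L'` record the total weight of `L` increased by `w`, while still agreeing with the
colours played below height `p`. -/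
structure LevelsAbsorb (M N : ℕ) (S : Submodule ℚ (QVec d)) (p : ℕ) (w : QVec d)
    (L L' : List (Level d)) : Prop where
  inv : LevelsInv M N S L'
  total_eq : total L' = total L + w
  agrees : ∀ i < p, ∀ F, Agrees i L F → Agrees i L' F

lemma exists_levelsInv (hM : 1 ≤ M) (hN : 1 ≤ N) (hp : p ≤ N) (hS : IsSmallSpan M S) (hs : s ∈ S)
    (hss : ∀ k, finrank ℚ S = k + 1 →
      s ⬝ᵥ s ≤ d * (8 * descentConst M d ^ 2 * M ^ 2 * carryBound M N d k) ^ 2) :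
    ∃ L, LevelsInv M N S L ∧ total L = s ∧ ∀ i < p, ∀ F, Agrees i L F := by
  induction hk : finrank ℚ S generalizing S s with
  | zero =>
    obtain rfl : S = ⊥ := Submodule.finrank_eq_zero.mp hk
    exact ⟨[], rfl, ((Submodule.mem_bot ℚ).mp hs).symm, fun _ _ _ => trivial⟩
  | succ k ih =>
    have hS0 : S ≠ ⊥ := by
      rintro rfl
      simp at hk
    obtain ⟨A, hA, hker, hdescent⟩ := exists_descent_functional hM hS hS0 hs
    have hkerrank := finrank_inf_ker_add_one hA
    obtain ⟨L, hL, htotal, -⟩ := ih hker (Submodule.zero_mem _)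
      (fun k _ => by rw [zero_dotProduct]; positivity) (by omega)
    have hlen : L.length = k := by rw [← hL.finrank_eq]; omega
    refine ⟨⟨A, s, 0, 0, 0, p⟩ :: L, ⟨?_, hL⟩, by simp [total, htotal],
      fun i hi F => .inl hi⟩
    have hpN : (p : ℚ) ≤ N := by exact_mod_cast hp
    have hd : 1 ≤ d := by
      have := S.finrank_le
      rw [hk, finrank_fin_fun] at this
      omega
    have hΛ := one_le_descentConst hM hd
    have hC : 1 ≤ carryBound M N d k := one_le_carryBound hM hN
    exact {
      isSmallSpan := hS
      exists_ne_zero := hA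
      start_mem := hs
      drift_mem := S.zero_mem
      pending_mem := S.zero_mem
      height_le := hp
      abs_pending_le := fun i => by
        simpa using mul_nonneg (sub_nonneg.mpr hpN) M.cast_nonneg
      abs_drift_le := by simp
      dot_drift_le := by simp
      steps_lt := by rw [hlen, Nat.cast_zero]; positivity
      dot_start_le := hlen ▸ hss k hk
      descent := hdescent }

lemma LevelsAbsorb.cons {l' : Level d} {w' : QVec d}
    (hL : LevelsAbsorb M N (S ⊓ LinearMap.ker l.functional) p w' L L')
    (hinv : LevelsInv M N (S ⊓ LinearMap.ker l.functional) L)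
    (hl' : LevelOK M N S L.length l') (hA : l'.functional = l.functional)
    (hheight : min l.height p ≤ l'.height)
    (hsum : l'.start + l'.drift + l'.pending = l.start + l.drift + l.pending + w) :
    LevelsAbsorb M N S p (w + w') (l :: L) (l' :: L') where
  inv := by
    refine ⟨?_, hA ▸ hL.inv⟩
    rwa [← hL.inv.finrank_eq, hinv.finrank_eq]
  total_eq := by
    have := congrArg (· + (total L + w')) hsum
    simp only [total, hL.total_eq]
    linear_combination (exp := 1) this
  agrees := by
    rintro i hi F (hil | ⟨F', rfl, hF'⟩)
    · exact .inl ((lt_min hil hi).trans_le hheight)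
    · exact .inr ⟨F', by rw [hA], hL.agrees i hi F' hF'⟩

/-- The level once the stack has been popped to height `p`: the entries that distinguished its
height from `p` are gone. -/
def Level.lowerHeight (p : ℕ) (l : Level d) : Level d := { l with height := min l.height p }

lemma levelsAbsorb_map_lowerHeight (h : LevelsInv M N S L) :
    LevelsAbsorb M N S p 0 L (L.map (Level.lowerHeight p)) := by
  induction L generalizing S with
  | nil => exact ⟨h, by simp, fun _ _ _ hF => hF⟩
  | cons l L ih =>
    have hle : ((min l.height p : ℕ) : ℚ) ≤ l.height := by exact_mod_cast min_le_left _ _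
    have hl : LevelOK M N S L.length (l.lowerHeight p) := { h.1 with
      height_le := (min_le_left _ _).trans h.1.height_le
      abs_pending_le := fun i => (h.1.abs_pending_le i).trans <| by
        simp only [Level.lowerHeight]; gcongr }
    simpa using (ih h.2).cons h.2 hl rfl le_rfl (add_zero _).symm

lemma LevelOK.levelsAbsorb_pending (h : LevelOK M N S L.length l)
    (hL : LevelsInv M N (S ⊓ LinearMap.ker l.functional) L) (hw : w ∈ smallVectors M d)
    (hwS : w ∈ S) (hp : p < l.height) :
    LevelsAbsorb M N S p w (l :: L) ({ l with pending := l.pending + w, height := p } ::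
      L.map (Level.lowerHeight p)) := by
  have hpl : (p : ℚ) + 1 ≤ l.height := by exact_mod_cast hp
  have hl : LevelOK M N S L.length { l with pending := l.pending + w, height := p } := { h with
    height_le := hp.le.trans h.height_le
    pending_mem := S.add_mem h.pending_mem hwS
    abs_pending_le := fun i => by
      have := abs_add_le (l.pending i) (w i)
      simp only [Pi.add_apply]
      nlinarith [h.abs_pending_le i, abs_apply_le_of_mem_smallVectors hw i] }
  simpa using (levelsAbsorb_map_lowerHeight hL).cons hL hl rfl (min_le_right _ _)
    (add_assoc _ _ _).symm

lemma LevelOK.abs_drift_add_le (h : LevelOK M N S k l) (hw : w ∈ smallVectors M d) (i : Fin d) :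
    |(l.drift + w) i| ≤ (l.steps + 1) * M := by
  rw [add_one_mul]
  exact (abs_add_le _ _).trans
    (add_le_add (h.abs_drift_le i) (abs_apply_le_of_mem_smallVectors hw i))

lemma LevelOK.dot_drift_add_le (h : LevelOK M N S k l) (hw : w ∈ smallVectors M d) (hwS : w ∈ S)
    (hpos : 0 < l.functional w) (i : Fin d) :
    descentConst M d * (l.start ⬝ᵥ (l.drift + w)) ≤
      -(2 * d * ((l.steps + 1) * |l.start i|)) := by
  rw [dotProduct_add]
  linarith [h.dot_drift_le i, h.descent w hw hwS hpos i]

lemma LevelOK.levelsAbsorb_drift (h : LevelOK M N S L.length l)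
    (hL : LevelsInv M N (S ⊓ LinearMap.ker l.functional) L) (hw : w ∈ smallVectors M d)
    (hwS : w ∈ S) (hpos : 0 < l.functional w)
    (hsteps : l.steps + 1 < descentConst M d * carryBound M N d L.length) :
    LevelsAbsorb M N S p w (l :: L) ({ l with drift := l.drift + w, steps := l.steps + 1 } ::
      L.map (Level.lowerHeight p)) := by
  have hl : LevelOK M N S L.length { l with drift := l.drift + w, steps := l.steps + 1 } := { h with
    drift_mem := S.add_mem h.drift_mem hwS
    abs_drift_le := by simpa using h.abs_drift_add_le hw
    dot_drift_le := by simpa using h.dot_drift_add_le hw hwS hpos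
    steps_lt := by simpa using hsteps }
  simpa using (levelsAbsorb_map_lowerHeight hL).cons hL hl rfl (min_le_left _ _)
    (by dsimp only; abel)

lemma LevelOK.exists_levelsAbsorb_restart (hM : 1 ≤ M) (hN : 1 ≤ N) (hp : p ≤ N)
    (h : LevelOK M N S L.length l)
    (hL : LevelsInv M N (S ⊓ LinearMap.ker l.functional) L) (hw : w ∈ smallVectors M d)
    (hwS : w ∈ S) (hpos : 0 < l.functional w)
    (hsteps : descentConst M d * carryBound M N d L.length ≤ l.steps + 1) :
    ∃ L', LevelsAbsorb M N S p w (l :: L) L' := by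
  have hsum : l.start + (l.drift + w + (l.pending + total L)) = total (l :: L) + w := by
    simp only [total]; abel
  have hmem : total (l :: L) + w ∈ S :=
    S.add_mem (show LevelsInv M N S (l :: L) from ⟨h, hL⟩).total_mem hwS
  have hnorm := dotProduct_self_add_drift_le h.dim_pos (one_le_descentConst hM h.dim_pos)
    (by exact_mod_cast hM) (one_le_carryBound hM hN) (h.abs_drift_add_le hw)
    (h.abs_pending_add_le (hL.abs_total_le hM hN)) (h.dot_drift_add_le hw hwS hpos) hsteps
    (by linarith [h.steps_lt]) h.dot_start_le
  obtain ⟨L', hL', htotal, hagree⟩ := exists_levelsInv hM hN hp h.isSmallSpan hmem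
    fun k hk => by
      have hker := finrank_inf_ker_add_one h.exists_ne_zero
      obtain rfl : k = L.length := by rw [← hL.finrank_eq]; omega
      exact hsum ▸ hnorm
  exact ⟨L', hL', htotal, fun i hi F _ => hagree i hi F⟩

/-- `C` stands for the coloured edges of a closed cycle of weight `w`, each given by its height on
the stack and its flag. The first level whose functional does not vanish at `w`, or whose phase
began above height `p`, absorbs it. -/
theorem LevelsInv.exists_levelsAbsorb (hM : 1 ≤ M) (hN : 1 ≤ N) (hp : p ≤ N)
    (hL : LevelsInv M N S L) (hw : w ∈ smallVectors M d) (hwS : w ∈ S)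
    {C : Set (ℕ × List (Dual ℚ (QVec d)))} (hC : ∀ x ∈ C, p ≤ x.1 ∧ Agrees x.1 L x.2)
    (hneg : ∀ P, (∀ x ∈ C, P <+: x.2) → w ∉ lexNeg P) : ∃ L', LevelsAbsorb M N S p w L L' := by
  induction L generalizing S C with
  | nil =>
    obtain rfl : S = ⊥ := hL
    obtain rfl : w = 0 := (Submodule.mem_bot ℚ).mp hwS
    exact ⟨[], rfl, (add_zero _).symm, fun _ _ _ hF => hF⟩
  | cons l L ih =>
    obtain ⟨hl, hL⟩ := hL
    obtain hpl | hpl := lt_or_ge p l.height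
    · exact ⟨_, hl.levelsAbsorb_pending hL hw hwS hpl⟩
    have hcons : ∀ x ∈ C, ∃ F, x.2 = l.functional :: F ∧ Agrees x.1 L F := fun x hx =>
      (hC x hx).2.resolve_left (hpl.trans (hC x hx).1).not_gt
    have hnonneg : 0 ≤ l.functional w := by
      refine le_of_not_gt fun hlt => hneg [l.functional] (fun x hx => ?_) (.inl hlt)
      obtain ⟨F, hF, -⟩ := hcons x hx
      exact ⟨F, hF.symm⟩
    obtain hzero | hpos := hnonneg.eq_or_lt
    · obtain ⟨L', hL'⟩ := ih (C := {x | (x.1, l.functional :: x.2) ∈ C}) hL ⟨hwS, hzero.symm⟩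
        (fun x hx => by
          obtain ⟨F, hF, hagree⟩ := hcons _ hx
          obtain rfl : x.2 = F := (List.cons.inj hF).2
          exact ⟨(hC _ hx).1, hagree⟩)
        (fun P hP hlt => hneg (l.functional :: P) (fun x hx => by
          obtain ⟨F, hF, -⟩ := hcons x hx
          rw [hF, List.prefix_cons_inj]
          exact hP (x.1, F) (by rwa [Set.mem_ofPred_eq, ← hF])) (.inr ⟨hzero.symm, hlt⟩))
      exact ⟨l :: L', by simpa using hL'.cons hL hl rfl (min_le_left _ _) (add_zero _).symm⟩
    · obtain hsteps | hsteps := lt_or_ge ((l.steps : ℚ) + 1)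
        (descentConst M d * carryBound M N d L.length)
      · exact ⟨_, hl.levelsAbsorb_drift hL hw hwS hpos hsteps⟩
      · exact hl.exists_levelsAbsorb_restart hM hN hp hL hw hwS hpos hsteps

end Absorption

section PathBounds

variable {G : MWG V d}

lemma vnorm_le_iff {u : Fin d → ℤ} {B : ℕ} : vnorm u ≤ B ↔ ∀ i, |u i| ≤ B := by
  simp only [vnorm, Finset.sup_le_iff, Finset.mem_univ, true_implies, Int.abs_eq_natAbs,
    Nat.cast_le]

lemma Step.vnorm_le {c c' : Conf V d} (h : Step G c c') : vnorm (c'.2 - c.2) ≤ enorm G :=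
  Finset.le_sup (f := fun e : V × (Fin d → ℤ) × V => vnorm e.2.1) (G.finE.mem_toFinset.mpr h)

lemma IsPlay.abs_sub_le {v₀ : V} {ρ : ℕ → Conf V d} (h : IsPlay G v₀ ρ) (p k : ℕ) (i : Fin d) :
    |(ρ (p + k)).2 i - (ρ p).2 i| ≤ k * enorm G := by
  induction k with
  | zero => simp
  | succ k ih =>
    have hstep : |(ρ (p + k + 1)).2 i - (ρ (p + k)).2 i| ≤ enorm G :=
      vnorm_le_iff.mp (h.2 (p + k)).vnorm_le i
    calc |(ρ (p + k + 1)).2 i - (ρ p).2 i|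
        ≤ |(ρ (p + k + 1)).2 i - (ρ (p + k)).2 i| + |(ρ (p + k)).2 i - (ρ p).2 i| :=
          _root_.abs_sub_le _ _ _
      _ ≤ enorm G + k * enorm G := add_le_add hstep ih
      _ = (k + 1 : ℕ) * enorm G := by push_cast; ring

lemma intQ_add (a b : Fin d → ℤ) : intQ (a + b) = intQ a + intQ b := by
  ext i
  simp [intQ]

lemma intQ_sub (a b : Fin d → ℤ) : intQ (a - b) = intQ a - intQ b := by
  ext i
  simp [intQ]

end PathBounds

section SafeRegions

variable {G : MWG V d}

lemma exists_strat_of_safe {R : Set (Conf V d)}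
    (hP1 : ∀ c ∈ R, c.1 ∈ G.P1 → ∃ c' ∈ R, Step G c c')
    (hP2 : ∀ c ∈ R, c.1 ∉ G.P1 → ∀ c', Step G c c' → c' ∈ R) {v₀ : V} (h₀ : (v₀, 0) ∈ R) :
    ∃ σ, ValidStrat G (G.P1 : Set V) σ ∧
      ∀ ρ, IsPlay G v₀ ρ → Consistent (G.P1 : Set V) σ ρ → ∀ n, ρ n ∈ R := by
  have hnext (c : Conf V d) : ∃ c', Step G c c' ∧ (c ∈ R → c.1 ∈ G.P1 → c' ∈ R) := by
    by_cases h : c ∈ R ∧ c.1 ∈ G.P1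
    · obtain ⟨c', hc', hstep⟩ := hP1 c h.1 h.2
      exact ⟨c', hstep, fun _ _ => hc'⟩
    · obtain ⟨u, v', hedge⟩ := G.serial c.1
      exact ⟨(v', c.2 + u), by simpa [Step] using hedge, fun hR hP => absurd ⟨hR, hP⟩ h⟩
  choose next hstep hsafe using hnext
  refine ⟨fun _ c => ((next c).2 - c.2, (next c).1), fun _ c _ _ => hstep c, ?_⟩
  intro ρ hρ hcons n
  induction n with
  | zero => rwa [hρ.1]
  | succ n ih =>
    by_cases hP : (ρ n).1 ∈ G.P1
    · rw [hcons n hP]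
      simpa using hsafe _ ih hP
    · exact hP2 _ ih hP _ (hρ.2 n)

end SafeRegions

section FirstCyclePlays

variable {G : MWG V d} {τ : FCStratP1 V d} {v₀ : V} {χ : ℕ → Colour d}

lemma chist_congr {ρ ρ' : ℕ → Conf V d} {χ' : ℕ → Colour d} {n : ℕ} (hρ : ∀ i < n, ρ i = ρ' i)
    (hχ : ∀ i < n, χ i = χ' i) : chist G ρ χ n = chist G ρ' χ' n :=
  List.map_congr_left fun i hi => by rw [hρ i (List.mem_range.mp hi), hχ i (List.mem_range.mp hi)]

variable (G) in
lemma exists_seq_of_chist (χ : ℕ → Colour d) (c₀ : Conf V d)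
    (next : ℕ → CHist V d → Conf V d → Conf V d) :
    ∃ ρ : ℕ → Conf V d, ρ 0 = c₀ ∧ ∀ k, ρ (k + 1) = next k (chist G ρ χ k) (ρ k) := by
  let run : ℕ → CHist V d × Conf V d := fun k => Nat.rec ([], c₀)
    (fun k s => (s.1 ++ [(s.2, colOpt G s.2 (χ k))], next k s.1 s.2)) k
  have hrun (k : ℕ) : chist G (fun j => (run j).2) χ k = (run k).1 := by
    induction k with
    | zero => rfl
    | succ k ih => simp [chist, List.range_succ, ← ih, run]
  exact ⟨fun j => (run j).2, rfl, fun k => by rw [hrun]⟩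

/-- The round of the first-cycle game played at instant `i` follows an edge of the graph, and the
strategy `τ` of Player 1. -/
def IsRound (G : MWG V d) (τ : FCStratP1 V d) (ρ : ℕ → Conf V d) (χ : ℕ → Colour d) (i : ℕ) :
    Prop :=
  Step G (ρ i) (ρ (i + 1)) ∧ ((ρ i).1 ∈ G.P1 → ρ (i + 1) =
    ((τ (chist G ρ χ i) (ρ i) (χ i)).2, (ρ i).2 + (τ (chist G ρ χ i) (ρ i) (χ i)).1))

lemma exists_step_eq (hτ : ValidFCP1 G τ) (h : CHist V d) (c : Conf V d) (H : Colour d) :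
    ∃ c', Step G c c' ∧ (c.1 ∈ G.P1 → c' = ((τ h c H).2, c.2 + (τ h c H).1)) := by
  by_cases hP : c.1 ∈ G.P1
  · exact ⟨_, by simpa [Step] using hτ h c H hP, fun _ => rfl⟩
  · obtain ⟨u, v', hedge⟩ := G.serial c.1
    exact ⟨(v', c.2 + u), by simpa [Step] using hedge, fun h => absurd h hP⟩

lemma exists_play_of_prefix (hτ : ValidFCP1 G τ) {n : ℕ} {cf : ℕ → Conf V d} (h₀ : cf 0 = (v₀, 0))
    (hcf : ∀ i < n, IsRound G τ cf χ i) :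
    ∃ ρ, IsPlay G v₀ ρ ∧ FCConsistentP1 G τ ρ χ ∧ ∀ i ≤ n, ρ i = cf i := by
  choose next hstep hnext using fun (k : ℕ) h c => exists_step_eq hτ h c (χ k)
  obtain ⟨ρ, hρ₀, hρ⟩ := exists_seq_of_chist G χ (cf 0)
    fun k h c => if k < n then cf (k + 1) else next k h c
  have hprefix : ∀ i ≤ n, ρ i = cf i
    | 0, _ => hρ₀
    | i + 1, hi => by rw [hρ, if_pos (Nat.lt_of_succ_le hi)]
  have hround (i : ℕ) : IsRound G τ ρ χ i := by
    rcases lt_or_ge i n with hi | hi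
    · have hhist : chist G ρ χ i = chist G cf χ i :=
        chist_congr (fun j hj => hprefix j (by omega)) fun _ _ => rfl
      rw [IsRound, hprefix i hi.le, hprefix (i + 1) hi, hhist]
      exact hcf i hi
    · rw [IsRound, hρ, if_neg hi.not_gt]
      exact ⟨hstep _ _ _, hnext _ _ _⟩
  exact ⟨ρ, ⟨hρ₀.trans h₀, fun i => (hround i).1⟩, fun i => (hround i).2, hprefix⟩

lemma exists_play_of_extension (hτ : ValidFCP1 G τ) {ρ : ℕ → Conf V d} (hρ : IsPlay G v₀ ρ)
    (hcons : FCConsistentP1 G τ ρ χ) (n : ℕ) (H : Colour d) {c : Conf V d}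
    (hstep : Step G (ρ n) c)
    (hc : (ρ n).1 ∈ G.P1 →
      c = ((τ (chist G ρ χ n) (ρ n) H).2, (ρ n).2 + (τ (chist G ρ χ n) (ρ n) H).1)) :
    ∃ ρ', IsPlay G v₀ ρ' ∧ FCConsistentP1 G τ ρ' (Function.update χ n H) ∧
      (∀ i ≤ n, ρ' i = ρ i) ∧ ρ' (n + 1) = c := by
  set cf := Function.update ρ (n + 1) c
  have hcf {i : ℕ} (hi : i ≤ n) : cf i = ρ i := Function.update_of_ne (by omega) _ _
  have hcf' : cf (n + 1) = c := Function.update_self _ _ _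
  have hround : ∀ i < n + 1, IsRound G τ cf (Function.update χ n H) i := by
    intro i hi
    have hhist : chist G cf (Function.update χ n H) i = chist G ρ χ i :=
      chist_congr (fun j hj => hcf (by omega)) fun j hj => Function.update_of_ne (by omega) _ _
    rw [IsRound, hhist, hcf (by omega)]
    rcases Nat.lt_succ_iff_lt_or_eq.mp hi with hin | rfl
    · rw [hcf hin, Function.update_of_ne hin.ne]
      exact ⟨hρ.2 i, hcons i⟩
    · rw [hcf', Function.update_self]
      exact ⟨hstep, hc⟩
  obtain ⟨ρ', hρ', hcons', hprefix⟩ :=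
    exists_play_of_prefix hτ ((hcf (Nat.zero_le n)).trans hρ.1) hround
  exact ⟨ρ', hρ', hcons', fun i hi => (hprefix i (by omega)).trans (hcf hi),
    (hprefix _ le_rfl).trans hcf'⟩

end FirstCyclePlays

section SafeConfigurations

open Module

variable {G : MWG V d} {τ : FCStratP1 V d} {v₀ : V} {c c' : Conf V d}

/-- `τ` is a winning strategy of Player 1 in the first-cycle bounding game from `v₀`. -/
def IsWinningFCP1 (G : MWG V d) (τ : FCStratP1 V d) (v₀ : V) : Prop :=
  ∀ ρ χ, IsPlay G v₀ ρ → LegalCols G ρ χ → FCConsistentP1 G τ ρ χ →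
    ∀ n₀ n₁, FirstRepeat ρ n₀ n₁ → ¬ CycleWinP2 G ρ χ n₀ n₁

/-- A flag whose lexicographically negative vectors form a legal colour: a perfect half-space with
`M`-generated boundaries. -/
def IsColourFlag (M : ℕ) (F : List (Dual ℚ (QVec d))) : Prop :=
  F.length = d ∧ IsFlag ⊤ F ∧ IsMGenPerfectHS M d (lexNeg F)

lemma LevelsInv.isColourFlag {M N : ℕ} {L : List (Level d)}
    (h : LevelsInv M N (⊤ : Submodule ℚ (QVec d)) L) : IsColourFlag M (L.map Level.functional) :=
  ⟨by rw [List.length_map, h.length_eq], h.isFlag, h.isMGenPerfectHS⟩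

/-- The memory of the strategy: a coloured play of the first-cycle game, the colours being given by
flags, whose first `height` edges form the stack, and the levels. -/
structure Memory (V : Type) (d : ℕ) where
  play : ℕ → Conf V d
  flag : ℕ → List (Dual ℚ (QVec d))
  height : ℕ
  levels : List (Level d)

namespace Memory

/-- The colours of the play. -/
def colour (m : Memory V d) : ℕ → Colour d := lexNeg ∘ m.flag

/-- The configuration at the top of the stack. -/
def top (m : Memory V d) : Conf V d := m.play m.height

/-- The memory stands for the configuration `c`: the weight of `c` is that of the top of the stack
plus the weight recorded by the levels. -/
structure Represents (m : Memory V d) (c : Conf V d) : Prop where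
  vertex_eq : m.top.1 = c.1
  weight_eq : intQ m.top.2 + total m.levels = intQ c.2

/-- The invariant of the memory. The top of the stack is allowed to repeat an earlier vertex. -/
structure Invariant (G : MWG V d) (τ : FCStratP1 V d) (v₀ : V) (m : Memory V d) : Prop where
  isPlay : IsPlay G v₀ m.play
  consistent : FCConsistentP1 G τ m.play m.colour
  isColourFlag : ∀ i, IsColourFlag (Fintype.card V * enorm G) (m.flag i)
  levelsInv : LevelsInv (Fintype.card V * enorm G) (Fintype.card V) ⊤ m.levels
  agrees : ∀ i < m.height, Agrees i m.levels (m.flag i)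
  injOn : Set.InjOn (fun i => (m.play i).1) (Set.Iio m.height)

namespace Invariant

variable {m : Memory V d}

lemma height_le_card (h : Invariant G τ v₀ m) : m.height ≤ Fintype.card V := by
  simpa using Finset.card_le_card_of_injOn (s := Finset.range m.height) (t := Finset.univ)
    (fun i => (m.play i).1) (fun _ _ => Finset.mem_univ _) (by simpa using h.injOn)

lemma abs_top_sub_le (h : Invariant G τ v₀ m) {p : ℕ} (hp : p ≤ m.height) (i : Fin d) :
    |m.top.2 i - (m.play p).2 i| ≤ (Fintype.card V * enorm G : ℕ) := by
  obtain ⟨k, hk⟩ := Nat.exists_eq_add_of_le hp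
  have hkcard : k ≤ Fintype.card V := by have := h.height_le_card; omega
  rw [top, hk]
  refine (h.isPlay.abs_sub_le p k i).trans ?_
  exact_mod_cast Nat.mul_le_mul_right _ hkcard

lemma abs_weight_le (h : Invariant G τ v₀ m) (hE : 0 < enorm G) (hm : m.Represents c)
    (i : Fin d) : |(c.2 i : ℚ)| ≤ (Fintype.card V * enorm G : ℕ) +
      levelBound (Fintype.card V * enorm G) (Fintype.card V) d d := by
  have hN : 1 ≤ Fintype.card V := Fintype.card_pos_iff.mpr ⟨v₀⟩
  have htop : |(m.top.2 i : ℚ)| ≤ (Fintype.card V * enorm G : ℕ) := by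
    have := h.abs_top_sub_le (Nat.zero_le _) i
    simp only [h.isPlay.1, Pi.zero_apply, sub_zero] at this
    exact_mod_cast this
  have hlevels := h.levelsInv.abs_total_le (Nat.mul_pos hN hE) hN i
  rw [h.levelsInv.length_eq] at hlevels
  have hc : (m.top.2 i : ℚ) + total m.levels i = c.2 i := congrFun hm.weight_eq i
  exact hc ▸ (abs_add_le _ _).trans (add_le_add htop hlevels)

lemma notMem_lexNeg (hcyc : EveryCycleHasP1 G) (hwin : IsWinningFCP1 G τ v₀)
    (h : Invariant G τ v₀ m) {p : ℕ} (hp : p < m.height) (hpv : (m.play p).1 = m.top.1)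
    {P : List (Dual ℚ (QVec d))}
    (hP : ∀ j ∈ Set.Ico p m.height, (m.play j).1 ∈ G.P1 → P <+: m.flag j) :
    intQ (m.top.2 - (m.play p).2) ∉ lexNeg P := by
  have hrep : FirstRepeat m.play p m.height :=
    ⟨hp, hpv, fun i j hij hj heq => hij.ne (h.injOn (hij.trans hj) hj heq)⟩
  have hno := hwin _ _ h.isPlay (fun i _ => (h.isColourFlag i).2.2) h.consistent _ _ hrep
  obtain ⟨k, hk⟩ := Nat.exists_eq_add_of_lt hp
  obtain ⟨j, hj, hjP⟩ := hcyc (k + 1) (fun j => m.play (p + j)) k.succ_pos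
    (fun j _ => h.isPlay.2 (p + j)) (by simpa [top, hk, add_assoc] using hpv)
  refine notMem_lexNeg_of_not_cycleWinP2 hno ⟨p + j, ⟨by omega, by omega⟩, hjP⟩ fun j hj hjP => ?_
  exact ⟨m.flag j, (h.isColourFlag j).1, (h.isColourFlag j).2.1, hP j hj hjP, rfl⟩

end Invariant

end Memory

/-- The configurations represented by a memory whose stack is a simple path. -/
def safeConfs (G : MWG V d) (τ : FCStratP1 V d) (v₀ : V) : Set (Conf V d) :=
  {c | ∃ m : Memory V d, m.Invariant G τ v₀ ∧ m.Represents c ∧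
    Set.InjOn (fun i => (m.play i).1) (Set.Iic m.height)}

namespace Memory

variable {m : Memory V d}

lemma Invariant.mem_safeConfs (hE : 0 < enorm G) (hcyc : EveryCycleHasP1 G)
    (hwin : IsWinningFCP1 G τ v₀) (h : Invariant G τ v₀ m) (hm : m.Represents c) :
    c ∈ safeConfs G τ v₀ := by
  by_cases hfresh : m.top.1 ∈ (fun i => (m.play i).1) '' Set.Iio m.height
  swap
  · refine ⟨m, h, hm, ?_⟩
    rw [← Set.Iio_insert, Set.injOn_insert Set.self_notMem_Iio]
    exact ⟨h.injOn, hfresh⟩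
  obtain ⟨p, hp, hpv⟩ := hfresh
  have hN : 1 ≤ Fintype.card V := Fintype.card_pos_iff.mpr ⟨v₀⟩
  obtain ⟨L', hL'⟩ := h.levelsInv.exists_levelsAbsorb (Nat.mul_pos hN hE) hN
    (hp.le.trans h.height_le_card) ⟨m.top.2 - (m.play p).2, h.abs_top_sub_le hp.le, rfl⟩
    Submodule.mem_top
    (C := {x | ∃ j ∈ Set.Ico p m.height, (m.play j).1 ∈ G.P1 ∧ (j, m.flag j) = x})
    (by rintro _ ⟨j, hj, -, rfl⟩; exact ⟨hj.1, h.agrees j hj.2⟩)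
    (fun P hP => h.notMem_lexNeg hcyc hwin hp hpv fun j hj hjP => hP _ ⟨j, hj, hjP, rfl⟩)
  have hIio : Set.Iic p ⊆ Set.Iio m.height := fun i hi => lt_of_le_of_lt (Set.mem_Iic.mp hi) hp
  refine ⟨⟨m.play, m.flag, p, L'⟩, ⟨h.isPlay, h.consistent, h.isColourFlag, hL'.inv,
    fun i hi => hL'.agrees i hi _ (h.agrees i (hi.trans hp)),
    h.injOn.mono (Set.Iio_subset_Iio hp.le)⟩,
    ⟨hpv.trans hm.vertex_eq, ?_⟩, h.injOn.mono hIio⟩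
  rw [← hm.weight_eq, hL'.total_eq]
  change intQ (m.play p).2 + _ = _
  rw [intQ_sub]
  abel

/-- The edge that `τ` takes from the top of the stack when Player 2 colours it with the flag of the
levels. -/
def move (G : MWG V d) (τ : FCStratP1 V d) (m : Memory V d) : (Fin d → ℤ) × V :=
  τ (chist G m.play m.colour m.height) m.top (lexNeg (m.levels.map Level.functional))

lemma Invariant.exists_push (hτ : ValidFCP1 G τ) (h : Invariant G τ v₀ m) (hm : m.Represents c)
    (hinj : Set.InjOn (fun i => (m.play i).1) (Set.Iic m.height)) (hstep : Step G c c')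
    (hmove : c.1 ∈ G.P1 → c' = ((m.move G τ).2, c.2 + (m.move G τ).1)) :
    ∃ m' : Memory V d, m'.Invariant G τ v₀ ∧ m'.Represents c' := by
  obtain ⟨ρ, hρ, hcons, hprefix, hnext⟩ := exists_play_of_extension hτ h.isPlay h.consistent
    m.height (lexNeg (m.levels.map Level.functional))
    (c := (c'.1, m.top.2 + (c'.2 - c.2)))
    (by simpa [Step, top, ← hm.vertex_eq] using hstep)
    (fun hP => by rw [hmove (hm.vertex_eq ▸ hP)]; simp [move, top])
  set F := m.levels.map Level.functional
  refine ⟨⟨ρ, Function.update m.flag m.height F, m.height + 1, m.levels⟩,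
    ⟨hρ, ?_, fun i => ?_, h.levelsInv, fun i hi => ?_, ?_⟩, ⟨by simp only [top, hnext], ?_⟩⟩
  · rwa [colour, Function.comp_update]
  · rcases eq_or_ne i m.height with rfl | hne
    · simpa using h.levelsInv.isColourFlag
    · simpa [hne] using h.isColourFlag i
  · rcases Nat.lt_succ_iff_lt_or_eq.mp hi with hlt | rfl
    · simpa [hlt.ne] using h.agrees i hlt
    · simpa using agrees_map_functional _ _
  · change Set.InjOn _ (Set.Iio (m.height + 1))
    rw [Set.Iio_add_one_eq_Iic]
    exact hinj.congr fun i hi => by simp only [hprefix i hi]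
  · change intQ (ρ (m.height + 1)).2 + total m.levels = _
    rw [hnext, intQ_add, intQ_sub, ← hm.weight_eq]
    abel

end Memory

lemma init_mem_safeConfs (hE : 0 < enorm G) (hτ : ValidFCP1 G τ) (v₀ : V) :
    (v₀, 0) ∈ safeConfs G τ v₀ := by
  have hN : 1 ≤ Fintype.card V := Fintype.card_pos_iff.mpr ⟨v₀⟩
  have hM : 1 ≤ Fintype.card V * enorm G := Nat.mul_pos hN hE
  have hspan : IsSmallSpan (Fintype.card V * enorm G) (⊤ : Submodule ℚ (QVec d)) := by
    simp [IsSmallSpan, span_smallVectors hM]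
  obtain ⟨L, hL, htotal, -⟩ := exists_levelsInv hM hN (Nat.zero_le _) hspan
    (Submodule.zero_mem _) fun k _ => by rw [dotProduct_zero]; positivity
  obtain ⟨ρ, hρ, hcons, -⟩ := exists_play_of_prefix hτ (n := 0) (cf := fun _ => (v₀, 0))
    (χ := lexNeg ∘ fun _ => L.map Level.functional) rfl (by simp)
  refine ⟨⟨ρ, fun _ => L.map Level.functional, 0, L⟩,
    ⟨hρ, hcons, fun _ => hL.isColourFlag, hL, by simp, by simp⟩, ⟨?_, ?_⟩, ?_⟩
  · simp [Memory.top, hρ.1]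
  · simp [Memory.top, hρ.1, htotal]
  · exact fun i hi j hj _ => (Nat.le_zero.mp hi).trans (Nat.le_zero.mp hj).symm

lemma exists_step_mem_safeConfs (hE : 0 < enorm G) (hcyc : EveryCycleHasP1 G)
    (hτ : ValidFCP1 G τ) (hwin : IsWinningFCP1 G τ v₀) (hc : c ∈ safeConfs G τ v₀)
    (hP : c.1 ∈ G.P1) : ∃ c' ∈ safeConfs G τ v₀, Step G c c' := by
  obtain ⟨m, h, hm, hinj⟩ := hc
  have hstep : Step G c ((m.move G τ).2, c.2 + (m.move G τ).1) := by
    simpa [Step, Memory.move, ← hm.vertex_eq] using hτ _ m.top _ (hm.vertex_eq ▸ hP)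
  obtain ⟨m', h', hm'⟩ := h.exists_push hτ hm hinj hstep fun _ => rfl
  exact ⟨_, h'.mem_safeConfs hE hcyc hwin hm', hstep⟩

lemma mem_safeConfs_of_step (hE : 0 < enorm G) (hcyc : EveryCycleHasP1 G)
    (hτ : ValidFCP1 G τ) (hwin : IsWinningFCP1 G τ v₀) (hc : c ∈ safeConfs G τ v₀)
    (hP : c.1 ∉ G.P1) (hstep : Step G c c') : c' ∈ safeConfs G τ v₀ := by
  obtain ⟨m, h, hm, hinj⟩ := hc
  obtain ⟨m', h', hm'⟩ := h.exists_push hτ hm hinj hstep fun hP' => absurd hP' hP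
  exact h'.mem_safeConfs hE hcyc hwin hm'

end SafeConfigurations

section Constants

variable {M N : ℕ}

lemma cramerBound_le (M d : ℕ) : cramerBound M d ≤ 2 ^ d ^ 2 * (M : ℚ) ^ d := by
  have hfact : d.factorial ≤ 2 ^ d ^ 2 := calc
    d.factorial ≤ d ^ d := d.factorial_le_pow
    _ ≤ (2 ^ d) ^ d := Nat.pow_le_pow_left d.lt_two_pow_self.le d
    _ = 2 ^ d ^ 2 := by rw [← pow_mul, sq]
  unfold cramerBound
  gcongr
  exact_mod_cast hfact

lemma descentConst_le (M d : ℕ) :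
    descentConst M d ≤ 2 ^ (1 + 3 * d + 2 * d ^ 2) * (M : ℚ) ^ (2 * d) := by
  have hd : (d : ℚ) ≤ 2 ^ d := by exact_mod_cast d.lt_two_pow_self.le
  calc descentConst M d
      ≤ 2 * 2 ^ d * (2 ^ d * 2 ^ d * (2 ^ d ^ 2 * (M : ℚ) ^ d) ^ 2) := by
        unfold descentConst
        have := cramerBound_nonneg M d
        gcongr
        exact cramerBound_le M d
    _ = 2 ^ (1 + 3 * d + 2 * d ^ 2) * (M : ℚ) ^ (2 * d) := by ring

lemma mul_descentConst_sq_mul_sq_add_one_le (hM : 1 ≤ M) (d : ℕ) :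
    11 * d * descentConst M d ^ 2 * M ^ 2 + 1 ≤
    2 ^ (6 + 7 * d + 4 * d ^ 2) * (M : ℚ) ^ (4 * d + 2) := by
  have hd : (d : ℚ) ≤ 2 ^ d := by exact_mod_cast d.lt_two_pow_self.le
  set Z : ℚ := 2 ^ (2 + 7 * d + 4 * d ^ 2) * (M : ℚ) ^ (4 * d + 2) with hZ
  have hZ1 : 1 ≤ Z := one_le_mul_of_one_le_of_one_le (one_le_pow₀ one_le_two)
    (one_le_pow₀ (by exact_mod_cast hM))
  calc 11 * d * descentConst M d ^ 2 * M ^ 2 + 1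
      ≤ 11 * 2 ^ d * (2 ^ (1 + 3 * d + 2 * d ^ 2) * (M : ℚ) ^ (2 * d)) ^ 2 * M ^ 2 + 1 := by
        have := descentConst_nonneg M d
        gcongr
        exact descentConst_le M d
    _ = 11 * Z + 1 := by rw [hZ]; ring
    _ ≤ 16 * Z := by linarith
    _ = 2 ^ (6 + 7 * d + 4 * d ^ 2) * (M : ℚ) ^ (4 * d + 2) := by rw [hZ]; ring

lemma carryBound_le (hM : 1 ≤ M) (hNM : N ≤ M) (d k : ℕ) :
    carryBound M N d k ≤ (2 ^ (6 + 7 * d + 4 * d ^ 2) * (M : ℚ) ^ (4 * d + 2)) ^ k * M ^ 2 := by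
  have hNM' : (N : ℚ) * M ≤ M ^ 2 := by rw [sq]; gcongr
  induction k with
  | zero => simpa [carryBound, levelBound] using hNM'
  | succ k ih =>
    have hlow : (N : ℚ) * M ≤ carryBound M N d k :=
      le_add_of_nonneg_left (levelBound_nonneg M N d k)
    have hcarry : 0 ≤ carryBound M N d k := le_trans (by positivity) hlow
    calc carryBound M N d (k + 1)
        = 11 * d * descentConst M d ^ 2 * M ^ 2 * carryBound M N d k + N * M := rfl
      _ ≤ (11 * d * descentConst M d ^ 2 * M ^ 2 + 1) * carryBound M N d k := by linarith
      _ ≤ 2 ^ (6 + 7 * d + 4 * d ^ 2) * (M : ℚ) ^ (4 * d + 2) *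
          ((2 ^ (6 + 7 * d + 4 * d ^ 2) * (M : ℚ) ^ (4 * d + 2)) ^ k * M ^ 2) :=
        mul_le_mul (mul_descentConst_sq_mul_sq_add_one_le hM d) ih hcarry (by positivity)
      _ = (2 ^ (6 + 7 * d + 4 * d ^ 2) * (M : ℚ) ^ (4 * d + 2)) ^ (k + 1) * M ^ 2 := by ring

lemma add_levelBound_le (hM : 1 ≤ M) (hN : 1 ≤ N) (hNM : N ≤ M) (d : ℕ) :
    M + levelBound M N d d ≤ (4 * M : ℚ) ^ (2 * (d + 2) ^ 3) := by
  have hM' : (1 : ℚ) ≤ M := by exact_mod_cast hM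
  have hcube : (d + 2) ^ 3 = d ^ 3 + 6 * d ^ 2 + 12 * d + 8 := by ring
  calc M + levelBound M N d d ≤ carryBound M N d d := by
        rw [carryBound, add_comm]
        gcongr
        exact le_mul_of_one_le_left (by positivity) (by exact_mod_cast hN)
    _ ≤ (2 ^ (6 + 7 * d + 4 * d ^ 2) * (M : ℚ) ^ (4 * d + 2)) ^ d * M ^ 2 :=
        carryBound_le hM hNM d d
    _ = 2 ^ (6 * d + 7 * d ^ 2 + 4 * d ^ 3) * (M : ℚ) ^ (4 * d ^ 2 + 2 * d + 2) := by
        rw [mul_pow, ← pow_mul, ← pow_mul, mul_assoc, ← pow_add]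
        ring_nf
    _ ≤ 2 ^ (4 * (d + 2) ^ 3) * (M : ℚ) ^ (2 * (d + 2) ^ 3) := by
        gcongr
        · exact one_le_two
        · rw [hcube]; omega
        · rw [hcube]; omega
    _ = (4 * M : ℚ) ^ (2 * (d + 2) ^ 3) := by
        rw [mul_pow, show (4 : ℚ) = 2 ^ 2 by norm_num, ← pow_mul]
        ring

end Constants

/-- Lemma 7: if Player 1 has a winning strategy in the
first-cycle bounding game from `v₀`, then Player 1 has a winning strategy in
the bounding game from `v₀` which ensures that every consistent play `ρ`
satisfies `‖w(ρ|ₙ)‖ ≤ (4|V|·‖E‖)^(2(d+2)³)` for all `n`. -/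
theorem p1_first_cycle_to_bounding_small_hypercube
    (V : Type) [Fintype V] [DecidableEq V] (d : ℕ) (G : MWG V d)
    (hE : 0 < enorm G) (hcyc : EveryCycleHasP1 G) (v₀ : V)
    (hwin : P1WinsFC G v₀) :
    ∃ σ : Strat V d, ValidStrat G (G.P1 : Set V) σ ∧
      ∀ ρ, IsPlay G v₀ ρ → Consistent (G.P1 : Set V) σ ρ →
        ∀ n, vnorm ((ρ n).2) ≤ (4 * Fintype.card V * enorm G) ^ (2 * (d + 2)^3) := by
  obtain ⟨τ, hτ, hτwin⟩ := hwin
  obtain ⟨σ, hσ, hsafe⟩ := exists_strat_of_safe (R := safeConfs G τ v₀)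
    (fun _ hc hP => exists_step_mem_safeConfs hE hcyc hτ hτwin hc hP)
    (fun _ hc hP _ hstep => mem_safeConfs_of_step hE hcyc hτ hτwin hc hP hstep)
    (init_mem_safeConfs hE hτ v₀)
  refine ⟨σ, hσ, fun ρ hρ hcons n => vnorm_le_iff.mpr fun i => ?_⟩
  obtain ⟨m, hm, hrep, -⟩ := hsafe ρ hρ hcons n
  have hN : 1 ≤ Fintype.card V := Fintype.card_pos_iff.mpr ⟨v₀⟩
  have hbound := (hm.abs_weight_le hE hrep i).trans
    (add_levelBound_le (Nat.mul_pos hN hE) hN (Nat.le_mul_of_pos_right _ hE) d)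
  rw [mul_assoc]
  exact_mod_cast hbound
end

section
/- Suppose 𝓗 = H_d ∪ ⋯ ∪ H_k is a partially-perfect half-space of ℚ^d and a₁, a₂, … is an infinite sequence of vectors such that: the set {a₁, a₂, …} is finite; for each n there exists a partially-perfect half-space of ℚ^d that contains both 𝓗 and aₙ; and aₙ ∈ 𝓗 for infinitely many n. Then there exist k' ∈ {k, …, d} and N > 0 such that for each n ≥ N the partial sum a_N + ⋯ + aₙ belongs to the topological closure of H_{k'}, and the set of distances of a_N + ⋯ + aₙ from the boundary of H_{k'} (over all n ≥ N) is unbounded. In particular, the set of norms ‖a₁ + ⋯ + aₙ‖ is unbounded. -/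
/-!
If `v` lies in a partially-perfect half-space then `-v` does not, so no `-aₙ` lies in `𝓗`. Let `k'`
be the largest index such that `aₙ ∈ H_{k'}` for infinitely many `n`. From some `N` on the
functionals of index above `k'` vanish on every `aₙ`, as otherwise `aₙ` or `-aₙ` would lie in a
component of `𝓗` above `H_{k'}`; and then `f k' aₙ ≤ 0`, so the sums `a_N + ⋯ + aₙ` stay in the
closed half-space. Infinitely many of the values `f k' aₙ` are negative and only finitely many
distinct values occur, so `f k'` tends to `-∞` along these sums. The distance to the boundary is at
least a positive multiple of `|f k'|`, and the norm is at least that distance since the boundary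
contains `0`.
-/

open Filter Topology

section General

theorem exists_frequently_and_eventually_forall_gt {α ι : Type*} [LinearOrder ι] {l : Filter α}
    {s : Set ι} (hs : s.Finite) {p : ι → α → Prop} (h : ∃ᶠ x in l, ∃ j ∈ s, p j x) :
    ∃ j ∈ s, (∃ᶠ x in l, p j x) ∧ ∀ᶠ x in l, ∀ i ∈ s, j < i → ¬p i x := by
  have hne : {j ∈ s | ∃ᶠ x in l, p j x}.Nonempty := by
    by_contra hempty
    have hnone : ∀ᶠ x in l, ∀ j ∈ s, ¬p j x := (eventually_all_finite hs).2 fun j hj ↦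
      not_frequently.1 fun hfreq ↦ hempty ⟨j, hj, hfreq⟩
    exact h (hnone.mono fun x hx ⟨j, hj, hjx⟩ ↦ hx j hj hjx)
  obtain ⟨j, ⟨hj, hfreq⟩, hmax⟩ := Set.exists_max_image _ id (hs.subset (Set.sep_subset _ _)) hne
  refine ⟨j, hj, hfreq, (eventually_all_finite hs).2 fun i hi ↦ ?_⟩
  by_cases hji : j < i
  · exact (not_frequently.1 fun hfi ↦ (hmax i ⟨hi, hfi⟩).not_gt hji).mono fun _ hx _ ↦ hx
  · exact .of_forall fun _ hlt ↦ absurd hlt hji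

theorem not_summable_of_finite_range {G : Type*} [AddCommGroup G] [TopologicalSpace G]
    [IsTopologicalAddGroup G] [T1Space G] {u : ℕ → G} (hfin : (Set.range u).Finite)
    (hfreq : ∃ᶠ n in atTop, u n ≠ 0) : ¬Summable u := by
  intro hsum
  have hfar : (Set.range u \ {0})ᶜ ∈ 𝓝 (0 : G) :=
    (hfin.subset Set.sdiff_subset).isClosed.compl_mem_nhds fun h ↦ h.2 rfl
  refine hfreq ((hsum.tendsto_atTop_zero.eventually hfar).mono fun n hn hne ↦ ?_)
  exact hn ⟨Set.mem_range_self n, hne⟩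

theorem tendsto_sum_Icc_atTop_of_finite_range {u : ℕ → ℝ} {N : ℕ} (hnonneg : ∀ n ≥ N, 0 ≤ u n)
    (hfin : (Set.range u).Finite) (hfreq : ∃ᶠ n in atTop, u n ≠ 0) :
    Tendsto (fun n ↦ ∑ m ∈ Finset.Icc N n, u m) atTop atTop := by
  have htail : Tendsto (fun n ↦ ∑ i ∈ Finset.range n, u (i + N)) atTop atTop := by
    refine (not_summable_iff_tendsto_nat_atTop_of_nonneg fun i ↦ hnonneg _ (by lia)).1 fun h ↦ ?_
    exact not_summable_of_finite_range hfin hfreq ((summable_nat_add_iff N).1 h)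
  refine (htail.comp ((tendsto_sub_atTop_nat N).comp (tendsto_add_atTop_nat 1))).congr fun n ↦ ?_
  simp only [Function.comp_apply, ← Finset.Ico_add_one_right_eq_Icc, Finset.sum_Ico_eq_sum_range,
    add_comm N]

theorem tendsto_norm_sum_range_of_tendsto_norm_sum_Icc {E : Type*} [SeminormedAddCommGroup E]
    {a : ℕ → E} {N : ℕ} (h : Tendsto (fun n ↦ ‖∑ m ∈ Finset.Icc N n, a m‖) atTop atTop) :
    Tendsto (fun n ↦ ‖∑ m ∈ Finset.range n, a m‖) atTop atTop := by
  refine (tendsto_add_atTop_iff_nat 1).1 (tendsto_atTop_mono' _ ?_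
    (tendsto_atTop_add_const_right _ (-‖∑ m ∈ Finset.range N, a m‖) h))
  filter_upwards [eventually_ge_atTop N] with n hn
  rw [← Finset.Ico_add_one_right_eq_Icc, Finset.sum_Ico_eq_sub _ (by lia), ← sub_eq_add_neg,
    sub_le_iff_le_add]
  exact norm_sub_le _ _

theorem tendsto_infDist_atTop_of_tendsto_norm_map {α 𝕜 E F : Type*} [NontriviallyNormedField 𝕜]
    [SeminormedAddCommGroup E] [NormedSpace 𝕜 E] [SeminormedAddCommGroup F] [NormedSpace 𝕜 F]
    (g : E →L[𝕜] F) {s : Set E} (hs : s.Nonempty) (hg : ∀ y ∈ s, g y = 0) {l : Filter α}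
    {x : α → E} (h : Tendsto (fun i ↦ ‖g (x i)‖) l atTop) :
    Tendsto (fun i ↦ Metric.infDist (x i) s) l atTop := by
  obtain ⟨c, hc, hbound⟩ := g.bound
  refine tendsto_atTop_mono (fun i ↦ (Metric.le_infDist hs).2 fun y hy ↦ ?_) (h.atTop_div_const hc)
  calc ‖g (x i)‖ / c = ‖g (x i - y)‖ / c := by rw [map_sub, hg y hy, sub_zero]
    _ ≤ dist (x i) y := by
      rw [div_le_iff₀' hc, dist_eq_norm]
      exact hbound _

theorem mem_closure_setOf_apply_neg {𝕜 E : Type*} [Field 𝕜] [LinearOrder 𝕜] [IsStrictOrderedRing 𝕜]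
    [TopologicalSpace 𝕜] [OrderTopology 𝕜] [AddCommGroup E] [Module 𝕜 E] [TopologicalSpace E]
    [ContinuousAdd E] [ContinuousSMul 𝕜 E] {S : Submodule 𝕜 E} {g : E →ₗ[𝕜] 𝕜}
    (hg : ∃ v ∈ S, g v ≠ 0) {x : E} (hx : x ∈ S) (hgx : g x ≤ 0) :
    x ∈ closure {v | v ∈ S ∧ g v < 0} := by
  obtain ⟨v, hv, hgv⟩ : ∃ v ∈ S, g v < 0 := by
    obtain ⟨v, hv, hne⟩ := hg
    rcases hne.lt_or_gt with hlt | hgt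
    · exact ⟨v, hv, hlt⟩
    · exact ⟨-v, S.neg_mem hv, by simpa using hgt⟩
  have hlim : Tendsto (fun t : 𝕜 ↦ x + t • v) (𝓝[>] 0) (𝓝 x) := by
    have hcont : ContinuousAt (fun t : 𝕜 ↦ x + t • v) 0 := by fun_prop
    simpa using hcont.continuousWithinAt.tendsto
  refine mem_closure_of_tendsto hlim ?_
  filter_upwards [self_mem_nhdsWithin] with t ht
  refine ⟨S.add_mem hx (S.smul_mem t hv), ?_⟩
  rw [map_add, map_smul, smul_eq_mul]
  exact add_neg_of_nonpos_of_neg hgx (mul_neg_of_pos_of_neg ht hgv)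

theorem exists_lt_abs_apply_of_lt_norm {ι : Type*} [Fintype ι] {x : ι → ℚ} {C : ℚ} (hC : 0 ≤ C)
    (h : (C : ℝ) < ‖x‖) : ∃ i, C < |x i| := by
  contrapose! h
  refine (pi_norm_le_iff_of_nonneg (by exact_mod_cast hC)).2 fun i ↦ ?_
  rw [← Rat.norm_cast_real, Real.norm_eq_abs]
  exact_mod_cast h i

end General

section Chain

variable {d k j : ℕ} {f : ℕ → (QVec d →ₗ[ℚ] ℚ)} {v : QVec d}

theorem mem_chainAux_iff {n : ℕ} : v ∈ chainAux d f n ↔ ∀ m < n, f (d - m) v = 0 := by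
  induction n with
  | zero => simp [chainAux]
  | succ n ih =>
    rw [chainAux, Submodule.mem_inf, ih, LinearMap.mem_ker, Nat.forall_lt_succ_right]

theorem mem_chainSub_iff : v ∈ chainSub d f j ↔ ∀ i, j < i → i ≤ d → f i v = 0 := by
  rw [chainSub, mem_chainAux_iff]
  refine ⟨fun h i hji hid ↦ ?_, fun h m hm ↦ h _ (by lia) (by lia)⟩
  simpa only [Nat.sub_sub_self hid] using h (d - i) (by lia)

theorem mem_PPHSSet_iff : v ∈ PPHSSet d k f ↔ ∃ j ∈ Set.Icc k d, v ∈ halfComp d f j := by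
  simp only [PPHSSet, Set.mem_iUnion, exists_prop]

theorem neg_notMem_PPHSSet (hv : v ∈ PPHSSet d k f) : -v ∉ PPHSSet d k f := by
  intro hneg
  obtain ⟨i, ⟨-, hid⟩, hvi, hfi⟩ := mem_PPHSSet_iff.1 hv
  obtain ⟨j, ⟨-, hjd⟩, hvj, hfj⟩ := mem_PPHSSet_iff.1 hneg
  rw [neg_mem_iff] at hvj
  rw [map_neg, neg_lt_zero] at hfj
  rcases lt_trichotomy i j with hij | rfl | hji
  · exact hfj.ne' (mem_chainSub_iff.1 hvi j hij hjd)
  · exact hfi.not_gt hfj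
  · exact hfi.ne (mem_chainSub_iff.1 hvj i hji hid)

theorem neg_notMem_PPHSSet_of_subset {A : Set (QVec d)} (hA : IsPartialPHS d A)
    (hsub : PPHSSet d k f ⊆ A) (hv : v ∈ A) : -v ∉ PPHSSet d k f := by
  obtain ⟨_, -, -, _, -, rfl⟩ := hA
  exact fun hneg ↦ neg_notMem_PPHSSet hv (hsub hneg)

theorem apply_nonpos_of_neg_notMem_PPHSSet (hneg : -v ∉ PPHSSet d k f) (hj : j ∈ Set.Icc k d)
    (hv : v ∈ chainSub d f j) : f j v ≤ 0 := by
  contrapose! hneg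
  exact mem_PPHSSet_iff.2 ⟨j, hj, neg_mem hv, by simpa using hneg⟩

theorem mem_chainSub_of_notMem_halfComp (hneg : -v ∉ PPHSSet d k f) (hj : j ∈ Set.Icc k d)
    (hv : ∀ i, j < i → i ≤ d → v ∉ halfComp d f i) : v ∈ chainSub d f j := by
  obtain ⟨hkj, hjd⟩ := hj
  induction hjd using Nat.decreasingInduction with
  | self => exact mem_chainSub_iff.2 fun i hdi hid ↦ absurd hid hdi.not_ge
  | of_succ j hjd ih =>
    have hmem : v ∈ chainSub d f (j + 1) :=
      ih (fun i hji ↦ hv i (j.lt_succ_self.trans hji)) (hkj.trans j.le_succ)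
    have hzero : f (j + 1) v = 0 :=
      (apply_nonpos_of_neg_notMem_PPHSSet hneg ⟨hkj.trans j.le_succ, hjd⟩ hmem).eq_of_not_lt
        fun hlt ↦ hv (j + 1) j.lt_succ_self hjd ⟨hmem, hlt⟩
    refine mem_chainSub_iff.2 fun i hji hid ↦ ?_
    rcases (Nat.succ_le_of_lt hji).eq_or_lt with rfl | hlt
    · exact hzero
    · exact mem_chainSub_iff.1 hmem i hlt hid

/-- The closed half-space `{v ∈ S_j | f j v ≤ 0}` obtained from `H_j` by adding its boundary, as an
additive submonoid since what matters is that it contains the sums of its elements. -/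
def closedHalfComp (d : ℕ) (f : ℕ → (QVec d →ₗ[ℚ] ℚ)) (j : ℕ) : AddSubmonoid (QVec d) where
  carrier := {v | v ∈ chainSub d f j ∧ f j v ≤ 0}
  zero_mem' := ⟨zero_mem _, (map_zero _).le⟩
  add_mem' hv hw := ⟨add_mem hv.1 hw.1, (map_add _ _ _).trans_le (add_nonpos hv.2 hw.2)⟩

theorem closedHalfComp_subset_closure (h : ∃ v ∈ chainSub d f j, f j v ≠ 0) :
    (closedHalfComp d f j : Set (QVec d)) ⊆ closure (halfComp d f j) :=
  fun _ hv ↦ mem_closure_setOf_apply_neg h hv.1 hv.2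

theorem mem_closedHalfComp_of_notMem_halfComp (hneg : -v ∉ PPHSSet d k f) (hj : j ∈ Set.Icc k d)
    (hv : ∀ i, j < i → i ≤ d → v ∉ halfComp d f i) : v ∈ closedHalfComp d f j :=
  have hmem := mem_chainSub_of_notMem_halfComp hneg hj hv
  ⟨hmem, apply_nonpos_of_neg_notMem_PPHSSet hneg hj hmem⟩

theorem zero_mem_bdComp : (0 : QVec d) ∈ bdComp d f j := ⟨zero_mem _, map_zero _⟩

theorem infDist_bdComp_le_norm (v : QVec d) : Metric.infDist v (bdComp d f j) ≤ ‖v‖ :=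
  (Metric.infDist_le_dist_of_mem zero_mem_bdComp).trans_eq (dist_zero_right v)

end Chain

section Sequence

variable {d k j N : ℕ} {f : ℕ → (QVec d →ₗ[ℚ] ℚ)} {a : ℕ → QVec d}

theorem exists_frequently_halfComp_eventually_closedHalfComp
    (hneg : ∀ n, -a n ∉ PPHSSet d k f) (hfreq : ∃ᶠ n in atTop, a n ∈ PPHSSet d k f) :
    ∃ j ∈ Set.Icc k d, (∃ᶠ n in atTop, a n ∈ halfComp d f j) ∧
      ∀ᶠ n in atTop, a n ∈ closedHalfComp d f j := by
  simp only [mem_PPHSSet_iff] at hfreq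
  obtain ⟨j, hj, hfreqj, hev⟩ :=
    exists_frequently_and_eventually_forall_gt (Set.finite_Icc k d) hfreq
  refine ⟨j, hj, hfreqj, hev.mono fun n hn ↦ ?_⟩
  exact mem_closedHalfComp_of_notMem_halfComp (hneg n) hj fun i hji hid ↦
    hn i ⟨hj.1.trans hji.le, hid⟩ hji

theorem tendsto_infDist_sum_Icc_bdComp (hfin : (Set.range a).Finite)
    (hclosed : ∀ n ≥ N, a n ∈ closedHalfComp d f j)
    (hfreq : ∃ᶠ n in atTop, a n ∈ halfComp d f j) :
    Tendsto (fun n ↦ Metric.infDist (∑ m ∈ Finset.Icc N n, a m) (bdComp d f j)) atTop atTop := by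
  have hsum : Tendsto (fun n ↦ ∑ m ∈ Finset.Icc N n, (-(f j (a m) : ℚ) : ℝ)) atTop atTop := by
    refine tendsto_sum_Icc_atTop_of_finite_range (fun n hn ↦ ?_) ?_ (hfreq.mono fun n hn ↦ ?_)
    · exact neg_nonneg.2 (by exact_mod_cast (hclosed n hn).2)
    · exact (hfin.image fun v ↦ (-(f j v : ℚ) : ℝ)).subset (by rintro _ ⟨n, rfl⟩; simp)
    · exact neg_ne_zero.2 (by exact_mod_cast hn.2.ne)
  refine tendsto_infDist_atTop_of_tendsto_norm_map ⟨f j, (f j).continuous_on_pi⟩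
    ⟨0, zero_mem_bdComp⟩ (fun y hy ↦ hy.2) (tendsto_atTop_mono (fun n ↦ ?_) hsum)
  calc ∑ m ∈ Finset.Icc N n, (-(f j (a m) : ℚ) : ℝ)
      = -((f j (∑ m ∈ Finset.Icc N n, a m) : ℚ) : ℝ) := by push_cast [map_sum]; simp
    _ ≤ ‖f j (∑ m ∈ Finset.Icc N n, a m)‖ := by
      rw [← Rat.norm_cast_real]
      exact neg_le_abs _

end Sequence

/-- Claim 8: suppose `𝓗 = H_d ∪ ⋯ ∪ H_k` is a
partially-perfect half-space of `ℚ^d` and `a₀, a₁, …` is an infinite sequence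
of vectors taking finitely many values, such that for each `n` some
partially-perfect half-space contains both `𝓗` and `aₙ`, and `aₙ ∈ 𝓗` for
infinitely many `n`.  Then there are `k' ∈ {k, …, d}` and `N > 0` such that
every partial sum `a_N + ⋯ + aₙ` (for `n ≥ N`) belongs to the topological
closure of `H_{k'}` and the distances of these partial sums from the boundary
of `H_{k'}` are unbounded; in particular the norms `‖a₀ + ⋯ + a_{n-1}‖` are
unbounded. -/
theorem pphs_unbounded_sums
    (d k : ℕ) (hk1 : 1 ≤ k) (hkd : k ≤ d + 1)
    (f : ℕ → (QVec d →ₗ[ℚ] ℚ)) (hchain : ChainCond d k f)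
    (a : ℕ → QVec d)
    (hfin : (Set.range a).Finite)
    (hcont : ∀ n, ∃ A : Set (QVec d), IsPartialPHS d A ∧ PPHSSet d k f ⊆ A ∧ a n ∈ A)
    (hinf : {n | a n ∈ PPHSSet d k f}.Infinite) :
    (∃ k', k ≤ k' ∧ k' ≤ d ∧ ∃ N, 0 < N ∧
      (∀ n, N ≤ n → (∑ m ∈ Finset.Icc N n, a m) ∈ closure (halfComp d f k')) ∧
      (∀ C : ℝ, ∃ n, N ≤ n ∧
        C < Metric.infDist (∑ m ∈ Finset.Icc N n, a m) (bdComp d f k'))) ∧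
    (∀ C : ℚ, ∃ n i, C < |(∑ m ∈ Finset.range n, a m) i|) := by
  have hneg (n : ℕ) : -a n ∉ PPHSSet d k f := by
    obtain ⟨A, hA, hsub, ha⟩ := hcont n
    exact neg_notMem_PPHSSet_of_subset hA hsub ha
  obtain ⟨k', hk', hfreq, hev⟩ := exists_frequently_halfComp_eventually_closedHalfComp hneg
    (Nat.frequently_atTop_iff_infinite.2 hinf)
  obtain ⟨N, hN⟩ := eventually_atTop.1 (hev.and (eventually_gt_atTop 0))
  obtain ⟨-, hN0⟩ := hN N le_rfl
  replace hN (n : ℕ) (hn : N ≤ n) : a n ∈ closedHalfComp d f k' := (hN n hn).1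
  have hdist := tendsto_infDist_sum_Icc_bdComp hfin hN hfreq
  have hnorm : Tendsto (fun n ↦ ‖∑ m ∈ Finset.range n, a m‖) atTop atTop :=
    tendsto_norm_sum_range_of_tendsto_norm_sum_Icc
      (tendsto_atTop_mono (fun _ ↦ infDist_bdComp_le_norm _) hdist)
  refine ⟨⟨k', hk'.1, hk'.2, N, hN0, fun n _ ↦ ?_, fun C ↦ ?_⟩, fun C ↦ ?_⟩
  · exact closedHalfComp_subset_closure (hchain k' hk'.1 hk'.2)
      (sum_mem fun m hm ↦ hN m (Finset.mem_Icc.1 hm).1)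
  · exact ((eventually_ge_atTop N).and (hdist.eventually_gt_atTop C)).exists
  · obtain ⟨n, hn⟩ := (hnorm.eventually_gt_atTop ((max C 0 : ℚ) : ℝ)).exists
    obtain ⟨i, hi⟩ := exists_lt_abs_apply_of_lt_norm (le_max_right C 0) hn
    exact ⟨n, i, (le_max_left C 0).trans_lt hi⟩
end

section
/- (Small Solutions Lemma) Suppose A is a d × n matrix with entries from {−M,…,M} and mutually distinct columns. If the system A x = 0 has a solution x with all entries positive rationals, then it has a solution with all entries positive integers bounded by (2(M+1))^{(r+2)²}, where r is the rank of A. -/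
/-!
A conic version of Carathéodory's theorem writes minus the `j`-th column of `A` as a nonnegative
combination of linearly independent columns. By Cramer's rule the coefficients are quotients of
determinants of size at most the rank `r` with entries of absolute value at most `M`, so clearing
the common denominator gives a small nonnegative integral solution that is positive at `j`. The sum
of these solutions over all `j` is positive, and it has at most `(2M+1)^r` terms, since a column
of `A` is determined by its entries in `r` rows spanning the row space.
-/

open Function Matrix

section Caratheodory

variable {ι K E : Type*} [Field K] [LinearOrder K] [IsStrictOrderedRing K]

/-- The step along `-w` with the smallest ratio `c p / w p` is the longest one that stays
nonnegative, and it makes the coordinate `p` vanish. -/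
theorem exists_nonneg_sub_smul_support_ssubset [Finite ι] {c w : ι → K} (hc : 0 ≤ c)
    (hwc : support w ⊆ support c) (hw : ∃ i, 0 < w i) :
    ∃ t : K, 0 ≤ c - t • w ∧ support (c - t • w) ⊂ support c := by
  have := Fintype.ofFinite ι
  obtain ⟨i₀, hi₀⟩ := hw
  obtain ⟨p, hp, hmin⟩ := Finset.exists_min_image (Finset.univ.filter (0 < w ·))
    (fun i => c i / w i) ⟨i₀, by simpa using hi₀⟩
  simp only [Finset.mem_filter, Finset.mem_univ, true_and] at hp hmin
  refine ⟨c p / w p, fun i => sub_nonneg.mpr ?_, ?_⟩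
  · rcases lt_or_ge 0 (w i) with hi | hi
    · exact (le_div_iff₀ hi).mp (hmin i hi)
    · exact (mul_nonpos_of_nonneg_of_nonpos (div_nonneg (hc p) hp.le) hi).trans (hc i)
  · have hsub : support (c - (c p / w p) • w) ⊆ support c := fun i hi hci => hi <| by
      have hwi : w i = 0 := by_contra fun hwi => hwc hwi hci
      simp [hci, hwi]
    exact (Set.ssubset_iff_of_subset hsub).mpr ⟨p, hwc hp.ne', by simp [hp.ne']⟩

variable [Fintype ι] [AddCommGroup E] [Module K E]

theorem exists_sum_smul_eq_zero_of_not_linearIndepOn {v : ι → E} {s : Set ι}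
    (hs : ¬LinearIndepOn K v s) :
    ∃ w : ι → K, support w ⊆ s ∧ ∑ i, w i • v i = 0 ∧ ∃ i, 0 < w i := by
  classical
  obtain ⟨w, hws, hw, i, hi⟩ :
      ∃ w : ι → K, support w ⊆ s ∧ ∑ i, w i • v i = 0 ∧ ∃ i, w i ≠ 0 := by
    rw [linearIndepOn_iff'] at hs
    push Not at hs
    obtain ⟨t, g, hts, hg, i, hit, hi⟩ := hs
    refine ⟨fun k => if k ∈ t then g k else 0, fun k hk => ?_, by simpa [ite_smul] using hg, i,
      by simpa [hit] using hi⟩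
    exact hts (by_contra fun h => hk (if_neg h))
  rcases hi.lt_or_gt with hneg | hpos
  · exact ⟨-w, by simpa using hws, by simp [hw], i, by simpa using hneg⟩
  · exact ⟨w, hws, hw, i, hpos⟩

theorem exists_nonneg_sum_smul_eq_linearIndepOn_support (v : ι → E) {c : ι → K} (hc : 0 ≤ c) :
    ∃ c' : ι → K, 0 ≤ c' ∧ ∑ i, c' i • v i = ∑ i, c i • v i ∧ LinearIndepOn K v (support c') := by
  obtain ⟨c', ⟨hc', hsum⟩, hmin⟩ := exists_minimalFor_of_wellFoundedLT
    (fun c' : ι → K => 0 ≤ c' ∧ ∑ i, c' i • v i = ∑ i, c i • v i) support ⟨c, hc, rfl⟩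
  refine ⟨c', hc', hsum, by_contra fun hdep => ?_⟩
  obtain ⟨w, hws, hw, hpos⟩ := exists_sum_smul_eq_zero_of_not_linearIndepOn hdep
  obtain ⟨t, hnonneg, hlt⟩ := exists_nonneg_sub_smul_support_ssubset hc' hws hpos
  have hsum' : ∑ i, (c' - t • w) i • v i = ∑ i, c i • v i := by
    simp [sub_smul, mul_smul, ← Finset.smul_sum, hw, hsum]
  exact hlt.not_subset (hmin ⟨hnonneg, hsum'⟩ hlt.subset)

end Caratheodory

section Rank

variable {m n K : Type*} [Finite m] [Fintype n] [Field K]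

theorem exists_linearIndependent_row_span_eq (A : Matrix m n K) :
    ∃ f : Fin A.rank → m, LinearIndependent K (A.row ∘ f) ∧
      Submodule.span K (Set.range (A.row ∘ f)) = Submodule.span K (Set.range A.row) := by
  obtain ⟨κ, a, ha, hspan, hli⟩ := exists_linearIndependent' K A.row
  have := Finite.of_injective a ha
  have := Fintype.ofFinite κ
  have hcard : A.rank = Fintype.card κ := by
    rw [rank_eq_finrank_span_row, ← hspan, finrank_span_eq_card hli]
  let e : Fin A.rank ≃ κ := (Fintype.equivFinOfCardEq hcard.symm).symm
  refine ⟨a ∘ e, hli.comp e e.injective, ?_⟩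
  rw [← comp_assoc, e.surjective.range_comp, hspan]

theorem card_le_card_pow_rank {A : Matrix m n K} {s : Finset K} (hs : ∀ i j, A i j ∈ s)
    (hA : Injective A.col) : Fintype.card n ≤ s.card ^ A.rank := by
  obtain ⟨f, -, hspan⟩ := exists_linearIndependent_row_span_eq A
  let F : n → Fin A.rank → s := fun j k => ⟨A (f k) j, hs _ _⟩
  have hF : Injective F := fun a b hab => hA <| funext fun i => by
    refine LinearMap.eqOn_span (R := K) (s := Set.range (A.row ∘ f))
      (f := LinearMap.proj (φ := fun _ : n => K) a) (g := LinearMap.proj b) ?_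
      (hspan ▸ Submodule.subset_span ⟨i, rfl⟩)
    rintro _ ⟨k, rfl⟩
    exact congrArg Subtype.val (congrFun hab k)
  simpa using Fintype.card_le_of_injective F hF

theorem exists_det_submatrix_ne_zero [DecidableEq n] {A : Matrix m n K}
    (hA : LinearIndependent K A.col) : ∃ f : n → m, (A.submatrix f id).det ≠ 0 := by
  obtain ⟨f, hf, -⟩ := exists_linearIndependent_row_span_eq A
  have hrank : Fintype.card n = A.rank := by
    rw [rank_eq_finrank_span_cols, finrank_span_eq_card hA]
  let e : n ≃ Fin A.rank := Fintype.equivFinOfCardEq hrank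
  have hrows : LinearIndependent K (A.submatrix (f ∘ e) id).row := hf.comp e e.injective
  rw [linearIndependent_rows_iff_isUnit, isUnit_iff_isUnit_det] at hrows
  exact ⟨f ∘ e, hrows.ne_zero⟩

end Rank

section Cramer

variable {m n R : Type*} [Fintype n]

theorem det_smul_eq_cramer_mulVec [DecidableEq n] [CommRing R] (A : Matrix n n R) (u : n → R) :
    A.det • u = A.cramer (A *ᵥ u) := by
  rw [cramer_eq_adjugate_mulVec, mulVec_mulVec, adjugate_mul, smul_mulVec, one_mulVec]

theorem intCast_cramer_apply [DecidableEq n] [CommRing R] (A : Matrix n n ℤ) (b : n → ℤ)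
    (i : n) :
    (A.cramer b i : R) = (A.map (Int.cast : ℤ → R)).cramer (fun k => (b k : R)) i := by
  rw [cramer_apply, cramer_apply, Int.cast_det, map_updateCol]
  rfl

theorem submatrix_support_mulVec {l : Type*} [Semiring R] (A : Matrix m n R) (c : n → R)
    [DecidablePred (· ∈ support c)] (f : l → m) :
    A.submatrix f ((↑) : support c → n) *ᵥ (fun s => c s) = (A *ᵥ c) ∘ f :=
  funext fun i => (Finset.sum_congr_set (support c) (fun k => A (f i) k * c k)
    (fun s => A (f i) s * c s) (fun _ _ => rfl) fun k hk => by simp [notMem_support.mp hk]).symm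

/-- The bound that the Leibniz formula gives for determinants of size at most `r` with entries
of absolute value at most `M`. The base is `M + 1` and not `M` to make it monotone in `r`. -/
def minorBound (M r : ℕ) : ℕ := r.factorial * (M + 1) ^ r

theorem abs_det_le_minorBound [DecidableEq n] {A : Matrix n n ℤ} {M r : ℕ}
    (hA : ∀ i j, |A i j| ≤ M) (hr : Fintype.card n ≤ r) : |A.det| ≤ minorBound M r := by
  have hdet : |A.det| ≤ minorBound M (Fintype.card n) := by
    simpa [minorBound] using det_le (abv := AbsoluteValue.abs) (x := (M : ℤ) + 1)
      fun i j => (hA i j).trans (by simp)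
  refine hdet.trans (Int.ofNat_le.mpr ?_)
  unfold minorBound
  gcongr
  omega

theorem abs_cramer_le_minorBound [DecidableEq n] {A : Matrix n n ℤ} {b : n → ℤ} {M r : ℕ}
    (hA : ∀ i j, |A i j| ≤ M) (hb : ∀ i, |b i| ≤ M) (hr : Fintype.card n ≤ r) (i : n) :
    |A.cramer b i| ≤ minorBound M r := by
  refine cramer_apply A b i ▸ abs_det_le_minorBound (fun k l => ?_) hr
  rw [updateCol_apply]
  split_ifs
  exacts [hb k, hA k l]

theorem exists_int_cast_eq_mul_abs_le_minorBound [Finite m] {K : Type*} [Field K]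
    {A : Matrix m n ℤ} {b : m → ℤ} {M : ℕ} (hA : ∀ i j, |A i j| ≤ M) (hb : ∀ i, |b i| ≤ M)
    {c : n → K} (hc : A.map (Int.cast : ℤ → K) *ᵥ c = fun i => (b i : K))
    (hli : LinearIndepOn K (A.map (Int.cast : ℤ → K)).col (support c)) :
    ∃ (D : ℤ) (y : n → ℤ), (D : K) ≠ 0 ∧ (∀ i, (y i : K) = D * c i) ∧
      |D| ≤ minorBound M (A.map (Int.cast : ℤ → K)).rank ∧
      ∀ i, |y i| ≤ minorBound M (A.map (Int.cast : ℤ → K)).rank := by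
  classical
  let B : Matrix m (support c) K := (A.map Int.cast).submatrix id (↑)
  have hcard : Fintype.card (support c) ≤ (A.map (Int.cast : ℤ → K)).rank := by
    rw [← finrank_span_eq_card (b := B.col) hli, ← rank_eq_finrank_span_cols]
    exact rank_submatrix_le _ _ _
  obtain ⟨f, hf⟩ := exists_det_submatrix_ne_zero (A := B) hli
  let C : Matrix (support c) (support c) ℤ := A.submatrix f (↑)
  have hdet : (C.det : K) = (C.map (Int.cast : ℤ → K)).det := Int.cast_det C
  have hcramer : ∀ s : support c, (C.cramer (b ∘ f) s : K) = C.det * c s := fun s => by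
    have hCc : C.map (Int.cast : ℤ → K) *ᵥ (fun s => c s) = fun s => ((b ∘ f) s : K) :=
      (submatrix_support_mulVec (A.map Int.cast) c f).trans (congrArg (· ∘ f) hc)
    rw [intCast_cramer_apply, ← hCc, ← det_smul_eq_cramer_mulVec, hdet]
    rfl
  have hy : ∀ i, ∃ k : ℤ, (k : K) = C.det * c i ∧
      |k| ≤ minorBound M (A.map (Int.cast : ℤ → K)).rank := fun i => by
    by_cases hi : i ∈ support c
    · exact ⟨_, hcramer ⟨i, hi⟩,
        abs_cramer_le_minorBound (fun _ _ => hA _ _) (fun _ => hb _) hcard _⟩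
    · exact ⟨0, by simp [notMem_support.mp hi], by simp⟩
  choose y hyc hyle using hy
  exact ⟨C.det, y, hdet ▸ hf, hyc, abs_det_le_minorBound (fun _ _ => hA _ _) hcard, hyle⟩

end Cramer

section SmallSolutions

variable {m n K : Type*} [Fintype n]

theorem mulVec_eq_zero_of_cast_eq_mul [CommRing K] [CharZero K] {A : Matrix m n ℤ} {x : n → K}
    (hx : A.map (Int.cast : ℤ → K) *ᵥ x = 0) {z : n → ℤ} {a : K}
    (hz : ∀ i, (z i : K) = a * x i) : A *ᵥ z = 0 := by
  have hcast : Int.cast ∘ z = a • x := funext hz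
  funext i
  apply Int.cast_injective (α := K)
  calc (((A *ᵥ z) i : ℤ) : K) = (A.map Int.cast *ᵥ (Int.cast ∘ z)) i :=
        (Int.castRingHom K).map_mulVec A z i
    _ = ((0 : ℤ) : K) := by simp [hcast, mulVec_smul, hx]

theorem card_le_two_mul_add_one_pow_rank [Finite m] [Field K] [CharZero K] {A : Matrix m n ℤ}
    {M : ℕ} (hA : ∀ i j, |A i j| ≤ M) (hcols : Injective A.col) :
    Fintype.card n ≤ (2 * M + 1) ^ (A.map (Int.cast : ℤ → K)).rank := by
  have hmem : ∀ i j, A.map (Int.cast : ℤ → K) i j ∈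
      (Finset.Icc (-M : ℤ) M).map ⟨Int.cast, Int.cast_injective (α := K)⟩ := fun i j =>
    Finset.mem_map_of_mem _ (Finset.mem_Icc.mpr (abs_le.mp (hA i j)))
  have hinj : Injective (A.map (Int.cast : ℤ → K)).col := fun a b hab =>
    hcols (funext fun i => Int.cast_injective (congrFun hab i))
  have hcard : (Finset.Icc (-M : ℤ) M).card = 2 * M + 1 := by
    rw [Int.card_Icc]
    omega
  simpa only [Finset.card_map, hcard] using card_le_card_pow_rank hmem hinj

theorem pow_mul_two_mul_minorBound_le (M r : ℕ) :
    (2 * M + 1) ^ r * (2 * minorBound M r) ≤ (2 * (M + 1)) ^ ((r + 2) ^ 2) := by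
  have hfactorial : r.factorial ≤ (2 * (M + 1)) ^ (r * r) := calc
    r.factorial ≤ r ^ r := Nat.factorial_le_pow r
    _ ≤ (2 ^ r) ^ r := Nat.pow_le_pow_left Nat.lt_two_pow_self.le r
    _ = 2 ^ (r * r) := (pow_mul 2 r r).symm
    _ ≤ (2 * (M + 1)) ^ (r * r) := Nat.pow_le_pow_left (by omega) _
  calc (2 * M + 1) ^ r * (2 * (r.factorial * (M + 1) ^ r))
      ≤ (2 * (M + 1)) ^ r * ((2 * (M + 1)) *
          ((2 * (M + 1)) ^ (r * r) * (2 * (M + 1)) ^ r)) := by gcongr <;> omega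
    _ = (2 * (M + 1)) ^ (r * r + 2 * r + 1) := by ring
    _ ≤ (2 * (M + 1)) ^ ((r + 2) ^ 2) := Nat.pow_le_pow_right (by omega) (by nlinarith)

variable [Field K] [LinearOrder K] [IsStrictOrderedRing K]

theorem exists_nonneg_mulVec_eq_neg_col {A : Matrix m n K} {x : n → K} (hx0 : 0 ≤ x)
    (hx : A *ᵥ x = 0) {j : n} (hj : 0 < x j) :
    ∃ c : n → K, 0 ≤ c ∧ A *ᵥ c = -A.col j ∧ LinearIndepOn K A.col (support c) := by
  classical
  have hmulVec (u : n → K) : A *ᵥ u = ∑ i, u i • A.col i := by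
    simp [mulVec_eq_sum, col]
  have hc : 0 ≤ (x j)⁻¹ • x - Pi.single j 1 := fun i => by
    rcases eq_or_ne i j with rfl | hij
    · simp [hj.ne']
    · simpa [hij] using mul_nonneg (inv_nonneg.mpr hj.le) (hx0 i)
  obtain ⟨c, hc0, hsum, hli⟩ := exists_nonneg_sum_smul_eq_linearIndepOn_support A.col hc
  refine ⟨c, hc0, ?_, hli⟩
  rw [hmulVec, hsum, ← hmulVec, mulVec_sub, mulVec_smul, hx, mulVec_single_one]
  simp

theorem exists_nonneg_mulVec_eq_zero_pos_apply [Finite m] {A : Matrix m n ℤ} {M : ℕ}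
    (hA : ∀ i j, |A i j| ≤ M) {x : n → K} (hx0 : 0 ≤ x)
    (hx : A.map (Int.cast : ℤ → K) *ᵥ x = 0) {j : n} (hj : 0 < x j) :
    ∃ z : n → ℤ, 0 ≤ z ∧ 0 < z j ∧ A *ᵥ z = 0 ∧
      ∀ i, z i ≤ 2 * minorBound M (A.map (Int.cast : ℤ → K)).rank := by
  classical
  obtain ⟨c, hc0, hc, hli⟩ := exists_nonneg_mulVec_eq_neg_col hx0 hx hj
  obtain ⟨D, y, hD, hy, hDle, hyle⟩ := exists_int_cast_eq_mul_abs_le_minorBound (b := -A.col j) hA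
    (fun i => by simpa using hA i j) (hc.trans (by ext; simp)) hli
  have hD0 : 0 < |D| := abs_pos.mpr (by simpa using hD)
  have hsingle : 0 ≤ (Pi.single j |D| : n → ℤ) := Pi.single_nonneg.mpr hD0.le
  have hker : A.map (Int.cast : ℤ → K) *ᵥ (c + Pi.single j 1) = 0 := by
    rw [mulVec_add, hc, mulVec_single_one, neg_add_cancel]
  refine ⟨(fun i => |y i|) + Pi.single j |D|, add_nonneg (fun i => abs_nonneg _) hsingle, ?_,
    mulVec_eq_zero_of_cast_eq_mul hker (a := |(D : K)|) fun i => ?_, fun i => ?_⟩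
  · simpa using add_pos_of_nonneg_of_pos (abs_nonneg (y j)) hD0
  · have habs : |(y i : K)| = |(D : K)| * c i := by rw [hy, abs_mul, abs_of_nonneg (hc0 i)]
    rcases eq_or_ne i j with rfl | hij
    · simp [habs, mul_add]
    · simp [habs, hij]
  · have hle : (Pi.single j |D| : n → ℤ) i ≤ |D| := by
      rcases eq_or_ne i j with rfl | hij <;> simp [*]
    have := hyle i
    simp only [Pi.add_apply]
    linarith

theorem small_solutions_lemma_general [Finite m] {A : Matrix m n ℤ} {M : ℕ}
    (hent : ∀ i j, |A i j| ≤ M) (hcols : Injective A.col) {x : n → K} (hxpos : ∀ j, 0 < x j)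
    (hx : A.map (Int.cast : ℤ → K) *ᵥ x = 0) :
    ∃ y : n → ℤ, (∀ j, 0 < y j) ∧
      (∀ j, y j ≤ (2 * ((M : ℤ) + 1)) ^ (((A.map (Int.cast : ℤ → K)).rank + 2) ^ 2)) ∧
      A *ᵥ y = 0 := by
  choose z hz0 hzpos hz hzle using fun j =>
    exists_nonneg_mulVec_eq_zero_pos_apply hent (fun i => (hxpos i).le) hx (hxpos j)
  refine ⟨∑ k, z k, fun j => ?_, fun j => ?_, ?_⟩
  · rw [Finset.sum_apply]
    exact Finset.sum_pos' (fun k _ => hz0 k j) ⟨j, Finset.mem_univ j, hzpos j⟩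
  · have hbound := (Nat.mul_le_mul_right _ (card_le_two_mul_add_one_pow_rank (K := K) hent
      hcols)).trans (pow_mul_two_mul_minorBound_le M (A.map (Int.cast : ℤ → K)).rank)
    rw [Finset.sum_apply]
    refine (Finset.sum_le_card_nsmul _ _ _ fun k _ => hzle k j).trans ?_
    rw [Finset.card_univ, nsmul_eq_mul]
    exact_mod_cast hbound
  · rw [mulVec_sum]
    exact Finset.sum_eq_zero fun k _ => hz k

end SmallSolutions

/-- Small Solutions Lemma, Lemma 14: if `A` is a `d × n`
integer matrix with entries in `{-M,…,M}` and mutually distinct columns, and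
`A x = 0` has a solution in positive rationals, then it has a solution in
positive integers bounded by `(2(M+1))^((r+2)²)`, where `r` is the rank
of `A` (over `ℚ`). -/
theorem small_solutions_lemma
    (d n M : ℕ) (A : Matrix (Fin d) (Fin n) ℤ)
    (hent : ∀ i j, |A i j| ≤ (M : ℤ))
    (hcols : Function.Injective (fun j : Fin n => fun i => A i j))
    (x : Fin n → ℚ) (hxpos : ∀ j, 0 < x j)
    (hx : (A.map ((↑) : ℤ → ℚ)).mulVec x = 0) :
    ∃ y : Fin n → ℤ,
      (∀ j, 0 < y j) ∧
      (∀ j, y j ≤ (2 * ((M : ℤ) + 1)) ^ (((A.map ((↑) : ℤ → ℚ)).rank + 2) ^ 2)) ∧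
      A.mulVec y = 0 :=
  small_solutions_lemma_general hent hcols hxpos hx
end

section
/- (von zur Gathen–Sieveking) Let A, b, C, d be m×n-, m×1-, p×n-, p×1-matrices respectively with integer entries. Let r be the rank of A, and s the rank of the (m+p)×n matrix obtained by stacking A over C. Let M be an upper bound on the absolute values of those (s−1)×(s−1)- or s×s-subdeterminants of the (m+p)×(n+1) matrix (A b // C d) that are formed with at least r rows from (A, b). If the system A x = b, C x ≥ d has a common integer solution, then it has one with all coefficients bounded in absolute value by (n+1)·M. -/
/-!
Given an integer solution `x`, put `w = (x, -1)` and `G = (A b // C d)`, so that the system says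
that `G w` vanishes on the rows of `(A b)` and is nonnegative on the others. Consider the rows of
`G` together with the coordinates outside a basis `B` of the columns of `(A // C)`. The vector `w`
is a sum of at most `n + 1` vectors which are elementary for these functionals and whose values
under each of them never cancel. By Cramer's rule an elementary vector is a positive multiple of an
integer vector `z` whose entries are, up to sign, subdeterminants of `G` of order `s - 1` or `s`,
and the rows can be chosen to include a maximal independent set of rows from `(A b)`, at least `r`
in number. Thus `w` is a positive combination of such `z`, where the last entry of `z` is at most
`0`. Subtracting the integral part of the coefficients of those `z` whose last entry is `0` leaves
an integer vector `(y, -1)` with `y` still a solution. Its coefficients sum to at most `n + 1`: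
those just reduced are below `1`, while the others sum to at most `1`, since each of these `z` has
last entry at most `-1` and the total is `-1`.
-/

open Matrix Module Submodule
open scoped Finset

section Conformal

variable {F V ι : Type*} [Field F] [AddCommGroup V] [Module F V]
  {f : ι → Dual F V} {g u v w : V}

/-- The vectors killed by every functional that is tight at `w`, i.e. that kills `w`. -/
def tightSubspace (f : ι → Dual F V) (w : V) : Submodule F V where
  carrier := {u | ∀ i, f i w = 0 → f i u = 0}
  zero_mem' _ _ := map_zero _
  add_mem' hu hv i hi := by rw [map_add, hu i hi, hv i hi, add_zero]
  smul_mem' a u hu i hi := by rw [map_smul, hu i hi, smul_zero]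

/-- A nonzero vector determined up to scaling by the functionals vanishing on it: the elementary
vectors are what every vector decomposes into without cancellation in any of the `f i`. -/
def IsElementary (f : ι → Dual F V) (g : V) : Prop :=
  g ≠ 0 ∧ tightSubspace f g ≤ span F {g}

theorem self_mem_tightSubspace : w ∈ tightSubspace f w :=
  fun _ => id

theorem tightSubspace_le_of_mem (hv : v ∈ tightSubspace f w) :
    tightSubspace f v ≤ tightSubspace f w :=
  fun _ hu i hi => hu i (hv i hi)

theorem IsElementary.smul (hg : IsElementary f g) {a : F} (ha : a ≠ 0) :
    IsElementary f (a • g) := by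
  refine ⟨smul_ne_zero ha hg.1, ?_⟩
  rw [span_singleton_smul_eq ha.isUnit]
  exact (tightSubspace_le_of_mem (smul_mem _ a self_mem_tightSubspace)).trans hg.2

theorem tightSubspace_sub_smul_lt (hu : u ∈ tightSubspace f w) {i : ι} (hi : f i u ≠ 0) :
    tightSubspace f (w - (f i w / f i u) • u) < tightSubspace f w := by
  refine lt_of_le_of_ne (tightSubspace_le_of_mem (sub_mem self_mem_tightSubspace
    (smul_mem _ _ hu))) fun h => hi ?_
  rw [← h] at hu
  exact hu i (by rw [map_sub, map_smul, smul_eq_mul, div_mul_cancel₀ _ hi, sub_self])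

variable [LinearOrder F] [IsStrictOrderedRing F]

/-- The vectors on which every functional `f i` takes a nonnegative multiple of its value at `w`,
that is, whose values have the signs of those of `w` and vanish wherever those do.
In the theory of polyhedra such vectors are said to conform to `w`. -/
def conformalCone (f : ι → Dual F V) (w : V) : PointedCone F V where
  carrier := {u | ∀ i, ∃ c, 0 ≤ c ∧ f i u = c * f i w}
  zero_mem' _ := ⟨0, le_rfl, by simp⟩
  add_mem' hu hv i := by
    obtain ⟨c, hc, hcu⟩ := hu i
    obtain ⟨d, hd, hdv⟩ := hv i
    exact ⟨c + d, add_nonneg hc hd, by rw [map_add, hcu, hdv, add_mul]⟩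
  smul_mem' a u hu i := by
    obtain ⟨c, hc, hcu⟩ := hu i
    exact ⟨a * c, mul_nonneg a.2 hc, by rw [mul_assoc, ← hcu]; exact (f i).map_smul (a : F) u⟩

theorem self_mem_conformalCone : w ∈ conformalCone f w :=
  fun _ => ⟨1, zero_le_one, (one_mul _).symm⟩

theorem conformalCone_le_of_mem (hv : v ∈ conformalCone f w) :
    conformalCone f v ≤ conformalCone f w := by
  intro u hu i
  obtain ⟨c, hc, hcu⟩ := hu i
  obtain ⟨d, hd, hdv⟩ := hv i
  exact ⟨c * d, mul_nonneg hc hd, by rw [hcu, hdv, mul_assoc]⟩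

theorem mem_tightSubspace_of_mem_conformalCone (hu : u ∈ conformalCone f w) :
    u ∈ tightSubspace f w := by
  intro i hi
  obtain ⟨c, -, hc⟩ := hu i
  rw [hc, hi, mul_zero]

/-- Moving from `w` along `-u`, or along `u`, one meets a first hyperplane `f i = 0`. -/
theorem exists_sub_smul_mem_conformalCone [Finite ι] (hf : Function.Injective (LinearMap.pi f))
    (hu : u ∈ tightSubspace f w) (hu0 : u ≠ 0) :
    ∃ i, f i u ≠ 0 ∧ w - (f i w / f i u) • u ∈ conformalCone f w := by
  obtain ⟨i₀, hi₀⟩ : ∃ i, f i u ≠ 0 := by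
    by_contra! h
    exact hu0 (hf (funext fun i => by simpa using h i))
  have hw : ∀ j, f j u ≠ 0 → f j w ≠ 0 := fun j => mt (hu j)
  have : Nonempty ι := ⟨i₀⟩
  obtain ⟨i, hi⟩ := Finite.exists_max fun j => |f j u / f j w|
  have hpos : 0 < |f i u / f i w| :=
    (abs_pos.mpr (div_ne_zero hi₀ (hw i₀ hi₀))).trans_le (hi i₀)
  refine ⟨i, fun h => by simp [h] at hpos, fun j => ⟨1 - f i w / f i u * (f j u / f j w), ?_, ?_⟩⟩
  · rw [sub_nonneg, ← inv_div, inv_mul_eq_div]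
    refine (le_abs_self _).trans ?_
    rw [abs_div]
    exact div_le_one_of_le₀ (hi j) hpos.le
  · by_cases hj : f j w = 0
    · simp [hj, hu j hj]
    · rw [map_sub, map_smul, smul_eq_mul, sub_mul, one_mul, mul_assoc, div_mul_cancel₀ _ hj]

theorem exists_isElementary_mem_conformalCone [Finite ι]
    (hf : Function.Injective (LinearMap.pi f)) (hw : w ≠ 0) :
    ∃ g ∈ conformalCone f w, IsElementary f g := by
  have : Module.Finite F V := .of_injective _ hf
  induction w using WellFounded.induction (InvImage.wf (tightSubspace f) wellFounded_lt) with
  | _ w ih =>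
  by_cases h : tightSubspace f w ≤ span F {w}
  · exact ⟨w, self_mem_conformalCone, hw, h⟩
  obtain ⟨u, hu, hspan⟩ := SetLike.not_le_iff_exists.mp h
  have hu0 : u ≠ 0 := fun h0 => hspan (h0 ▸ zero_mem _)
  obtain ⟨i, hi, hmem⟩ := exists_sub_smul_mem_conformalCone hf hu hu0
  have hne : w - (f i w / f i u) • u ≠ 0 := by
    intro h0
    have hl : f i w / f i u ≠ 0 := div_ne_zero (mt (hu i) hi) hi
    exact hspan (mem_span_singleton.mpr
      ⟨(f i w / f i u)⁻¹, (inv_smul_eq_iff₀ hl).mpr (sub_eq_zero.mp h0)⟩)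
  obtain ⟨g, hg, hge⟩ := ih _ (tightSubspace_sub_smul_lt hu hi) hne
  exact ⟨g, conformalCone_le_of_mem hmem hg, hge⟩

/-- Subtracting elementary vectors one by one, each time the largest multiple that keeps the
difference conformal to `w`, makes one more functional tight at every step. -/
theorem exists_sum_isElementary [Finite ι] (hf : Function.Injective (LinearMap.pi f)) (w : V) :
    ∃ k ≤ finrank F (tightSubspace f w), ∃ g : Fin k → V,
      w = ∑ j, g j ∧ ∀ j, g j ∈ conformalCone f w ∧ IsElementary f (g j) := by
  have : Module.Finite F V := .of_injective _ hf
  induction w using WellFounded.induction (InvImage.wf (tightSubspace f) wellFounded_lt) with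
  | _ w ih =>
  by_cases hw : w = 0
  · exact ⟨0, Nat.zero_le _, Fin.elim0, by simp [hw], fun j => j.elim0⟩
  obtain ⟨g, hg, hge⟩ := exists_isElementary_mem_conformalCone hf hw
  have hgt := mem_tightSubspace_of_mem_conformalCone hg
  obtain ⟨i, hi, hmem⟩ := exists_sub_smul_mem_conformalCone hf hgt hge.1
  have hl : 0 < f i w / f i g := by
    obtain ⟨c, hc, hcg⟩ := hg i
    refine lt_of_le_of_ne ?_ (div_ne_zero (mt (hgt i) hi) hi).symm
    rw [hcg, div_mul_cancel_right₀ (mt (hgt i) hi)]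
    exact inv_nonneg.mpr hc
  have hlt := tightSubspace_sub_smul_lt hgt hi
  obtain ⟨k, hk, g', hsum, hg'⟩ := ih _ hlt
  refine ⟨k + 1, hk.trans_lt (finrank_lt_finrank_of_lt hlt),
    Fin.cons ((f i w / f i g) • g) g', ?_, Fin.cases ?_ fun j => ?_⟩
  · rw [Fin.sum_cons, ← hsum, add_sub_cancel]
  · exact ⟨PointedCone.smul_mem _ hl.le hg, hge.smul hl.ne'⟩
  · exact ⟨conformalCone_le_of_mem hmem (hg' j).1, (hg' j).2⟩

end Conformal

section Rank

variable {F V ι κ τ α : Type*} [Field F]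

theorem finrank_span_image_of_linearIndepOn [AddCommGroup V] [Module F V] {v : ι → V} {s : Set ι}
    (hs : LinearIndepOn F v s) : finrank F (span F (v '' s)) = s.ncard := by
  rw [finrank, ← Cardinal.toNat_toENat, toENat_rank_span_set hs, Set.ncard]

theorem exists_linearIndepOn_superset_ncard_eq [AddCommGroup V] [Module F V] {v : ι → V}
    {s t : Set ι} (hs : LinearIndepOn F v s) (hst : s ⊆ t) :
    ∃ b ⊆ t, s ⊆ b ∧ v '' t ⊆ span F (v '' b) ∧ LinearIndepOn F v b ∧
      b.ncard = finrank F (span F (v '' t)) := by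
  obtain ⟨b, hbt, hsb, hspan, hb⟩ := exists_linearIndepOn_extension hs hst
  refine ⟨b, hbt, hsb, hspan, hb, ?_⟩
  rw [le_antisymm (span_le.mpr hspan) (span_mono (Set.image_mono hbt)),
    finrank_span_image_of_linearIndepOn hb]

theorem linearIndepOn_col_iff [Fintype κ] {G : Matrix ι κ F} {s : Set κ} :
    LinearIndepOn F G.col s ↔ ∀ u : κ → F, (∀ k ∉ s, u k = 0) → G *ᵥ u = 0 → u = 0 := by
  have hcomb (l : κ →₀ F) : Finsupp.linearCombination F G.col l = G *ᵥ l := by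
    ext i
    simp [Finsupp.linearCombination_apply, Finsupp.sum_fintype, mulVec, dotProduct, mul_comm]
  rw [linearIndepOn_iff, Finsupp.equivFunOnFinite.forall_congr_left]
  simp [hcomb, Finsupp.mem_supported', Finsupp.ext_iff, funext_iff]

theorem finrank_span_col_image_compl_inr [Fintype κ] [Unique τ] (G : Matrix ι (κ ⊕ τ) F) :
    finrank F (span F (G.col '' {Sum.inr default}ᶜ)) = (G.submatrix id Sum.inl).rank := by
  have hcompl : ({Sum.inr default}ᶜ : Set (κ ⊕ τ)) = Set.range Sum.inl := by
    ext (k | k) <;> simp [Unique.eq_default]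
  rw [rank_eq_finrank_span_cols, hcompl, ← Set.range_comp]
  rfl

theorem image_col_submatrix_subset_span {G : Matrix ι κ F} {P B : Set κ} (e : α → ι)
    (hP : G.col '' P ⊆ span F (G.col '' B)) :
    (G.submatrix e id).col '' P ⊆ span F ((G.submatrix e id).col '' B) := by
  have himage (s : Set κ) : (G.submatrix e id).col '' s = LinearMap.funLeft F F e '' (G.col '' s) :=
    Set.image_comp (LinearMap.funLeft F F e) G.col s
  rw [himage, himage, ← map_span]
  exact Set.image_mono hP

theorem linearIndepOn_col_of_submatrix {G : Matrix ι κ F} {s : Set κ} (e : α → ι)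
    (h : LinearIndepOn F (G.submatrix e id).col s) : LinearIndepOn F G.col s :=
  LinearIndependent.of_comp (LinearMap.funLeft F F e) h

theorem finrank_span_col_image_eq_finrank_span_row_image [Finite α] [Finite κ]
    (G : Matrix ι κ F) (e : α → ι) (s : Set κ) :
    finrank F (span F ((G.submatrix e id).col '' s)) =
      finrank F (span F ((G.submatrix id (Subtype.val : s → κ)).row '' Set.range e)) := by
  have := Fintype.ofFinite α
  have := Fintype.ofFinite s
  rw [Set.image_eq_range, ← Set.range_comp]
  exact (rank_eq_finrank_span_cols (G.submatrix e (Subtype.val : s → κ))).symm.trans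
    (rank_eq_finrank_span_row _)

theorem exists_injective_rows_det_ne_zero [Finite ι] [Fintype τ] [DecidableEq τ]
    (N : Matrix ι τ F) {S T : Set ι} (hTS : T ⊆ S)
    (hS : LinearIndependent F (N.submatrix (Subtype.val : S → ι) id).col) :
    ∃ ri : τ → ι, Function.Injective ri ∧ (∀ j, ri j ∈ S) ∧
      finrank F (span F (N.row '' T)) ≤ (ri ⁻¹' T).ncard ∧ (N.submatrix ri id).det ≠ 0 := by
  obtain ⟨b₀, hb₀T, -, -, hb₀, hcard₀⟩ :=
    exists_linearIndepOn_superset_ncard_eq (linearIndepOn_empty F N.row) T.empty_subset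
  obtain ⟨b, hbS, hb₀b, -, hb, hcard⟩ :=
    exists_linearIndepOn_superset_ncard_eq hb₀ (hb₀T.trans hTS)
  have hSrank : finrank F (span F (N.row '' S)) = Fintype.card τ := by
    have := Fintype.ofFinite S
    rw [← LinearIndependent.rank_matrix (M := (N.submatrix (Subtype.val : S → ι) id)ᵀ) hS,
      rank_transpose, rank_eq_finrank_span_row, Set.image_eq_range]
    rfl
  obtain ⟨e⟩ : Nonempty (τ ≃ b) := by
    rw [← Finite.card_eq, Nat.card_eq_fintype_card, Nat.card_coe_set_eq, hcard, hSrank]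
  have hinj : Function.Injective fun j => (e j : ι) := Subtype.val_injective.comp e.injective
  refine ⟨fun j => e j, hinj, fun j => hbS (e j).2, ?_, ?_⟩
  · have hrange : b₀ ⊆ Set.range fun j => (e j : ι) := fun i hi => ⟨e.symm ⟨i, hb₀b hi⟩, by simp⟩
    rw [← hcard₀, ← Set.ncard_preimage_of_injective_subset_range hinj hrange]
    exact Set.ncard_le_ncard (Set.preimage_mono hb₀T)
  · have hrows : LinearIndependent F (N.submatrix (fun j => (e j : ι)) id).row :=
      hb.linearIndependent.comp e e.injective
    rw [linearIndependent_rows_iff_isUnit, isUnit_iff_isUnit_det] at hrows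
    exact hrows.ne_zero

theorem col_mem_span_of_mulVec_eq_zero [Fintype κ] {G : Matrix ι κ F} {g : κ → F} {c : κ}
    (hg : G *ᵥ g = 0) (hc : g c ≠ 0) :
    G.col c ∈ span F (G.col '' (Function.support g \ {c})) := by
  classical
  have hsum : g c • G.col c + ∑ k ∈ Finset.univ.erase c, g k • G.col k = 0 := by
    rw [Finset.add_sum_erase _ (fun k => g k • G.col k) (Finset.mem_univ c), ← hg, mulVec_eq_sum]
    exact Finset.sum_congr rfl fun _ _ => (op_smul_eq_smul _ _).symm
  rw [← smul_mem_iff _ hc, eq_neg_of_add_eq_zero_left hsum]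
  refine neg_mem (sum_mem fun k hk => ?_)
  by_cases hgk : g k = 0
  · simp [hgk]
  · exact smul_mem _ _ (subset_span ⟨k, ⟨hgk, Finset.ne_of_mem_erase hk⟩, rfl⟩)

end Rank

section Cramer

variable {R ι κ τ : Type*} [CommRing R] [Fintype κ]

theorem submatrix_mulVec_comp_of_injective [Fintype τ] (G : Matrix ι κ R) {ci : τ → κ}
    (hci : Function.Injective ci) {u : κ → R} (hu : ∀ k ∉ Set.range ci, u k = 0) :
    G.submatrix id ci *ᵥ (u ∘ ci) = G *ᵥ u :=
  funext fun i => Fintype.sum_of_injective ci hci _ _ (fun k hk => by rw [hu k hk, mul_zero])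
    fun _ => rfl

theorem submatrix_mulVec_comp_eq_neg_smul_col [Fintype τ] {G : Matrix ι κ R} {g : κ → R}
    {ri : τ → ι} {ci : τ → κ} {c : κ} (hci : Function.Injective ci) (hc : c ∉ Set.range ci)
    (hsupp : Function.support g ⊆ insert c (Set.range ci)) (hg : ∀ j, (G *ᵥ g) (ri j) = 0) :
    G.submatrix ri ci *ᵥ (g ∘ ci) = -g c • fun j => G (ri j) c := by
  classical
  have hsplit : g = Function.update g c 0 + Pi.single c (g c) := by
    ext k
    by_cases hk : k = c
    · subst hk; simp
    · simp [hk]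
  have hrest : G.submatrix id ci *ᵥ (g ∘ ci) = G *ᵥ Function.update g c 0 := by
    rw [← Function.update_comp_eq_of_notMem_range g 0 hc]
    refine submatrix_mulVec_comp_of_injective G hci fun k hk => ?_
    by_cases hkc : k = c
    · rw [hkc, Function.update_self]
    · rw [Function.update_of_ne hkc]
      by_contra h
      exact (hsupp h).elim hkc hk
  funext j
  have h := hg j
  rw [hsplit, mulVec_add, ← hrest, mulVec_single] at h
  rw [Pi.smul_apply, smul_eq_mul, neg_mul]
  refine eq_neg_of_add_eq_zero_left (Eq.trans ?_ h)
  rw [Pi.add_apply, Pi.smul_apply, op_smul_eq_smul, smul_eq_mul]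
  rfl

theorem det_mul_eq_neg_mul_det_update [Fintype τ] [DecidableEq τ]
    {G : Matrix ι κ R} {g : κ → R} {ri : τ → ι} {ci : τ → κ} {c : κ}
    (hci : Function.Injective ci) (hc : c ∉ Set.range ci)
    (hsupp : Function.support g ⊆ insert c (Set.range ci)) (hg : ∀ j, (G *ᵥ g) (ri j) = 0)
    (i : τ) :
    (G.submatrix ri ci).det * g (ci i) =
      -g c * (G.submatrix ri (Function.update ci i c)).det := by
  have hupdate : (G.submatrix ri ci).updateCol i (fun j => G (ri j) c) =
      G.submatrix ri (Function.update ci i c) := by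
    ext j k
    by_cases hk : k = i
    · subst hk; simp
    · simp [hk]
  have hcramer := congrFun (congrArg ((G.submatrix ri ci).adjugate *ᵥ ·)
    (submatrix_mulVec_comp_eq_neg_smul_col hci hc hsupp hg)) i
  rwa [mulVec_mulVec, adjugate_mul, smul_mulVec, one_mulVec, mulVec_smul,
    ← cramer_eq_adjugate_mulVec, Pi.smul_apply, Pi.smul_apply, cramer_apply, hupdate] at hcramer

end Cramer

section IntegralElementary

variable {ι κ τ α : Type*}

/-- `M` bounds the absolute values of the `t × t` subdeterminants of `G` that are formed with at
least `r` rows from `T`. -/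
def IsSubdetBound (G : Matrix ι κ ℤ) (T : Set ι) (r t : ℕ) (M : ℤ) : Prop :=
  ∀ (ri : Fin t → ι) (ci : Fin t → κ), Function.Injective ri → Function.Injective ci →
    r ≤ (ri ⁻¹' T).ncard → |(G.submatrix ri ci).det| ≤ M

theorem IsSubdetBound.abs_det_le [Fintype τ] [DecidableEq τ] {G : Matrix ι κ ℤ} {T : Set ι}
    {r : ℕ} {M : ℤ} (h : IsSubdetBound G T r (Fintype.card τ) M) {ri : τ → ι} {ci : τ → κ}
    (hri : Function.Injective ri) (hci : Function.Injective ci) (hr : r ≤ (ri ⁻¹' T).ncard) :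
    |(G.submatrix ri ci).det| ≤ M := by
  let e := (Fintype.equivFin τ).symm
  have hcard : ((ri ∘ e) ⁻¹' T).ncard = (ri ⁻¹' T).ncard := by
    rw [Set.preimage_comp]
    exact Set.ncard_preimage_of_injective_subset_range e.injective (by simp)
  rw [← det_submatrix_equiv_self e]
  exact h (ri ∘ e) (ci ∘ e) (hri.comp e.injective) (hci.comp e.injective) (hcard ▸ hr)

/-- The functionals `u ↦ (G *ᵥ u) i` for all rows `i`, and `u ↦ u k` for the columns `k ∉ B`; the
latter make the family injective when `B` is a column basis. -/
def rowCoordFunctionals {F : Type*} [Field F] [Fintype κ] (G : Matrix ι κ F) (B : Set κ) :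
    ι ⊕ ↥Bᶜ → Dual F (κ → F) :=
  Sum.elim (fun i => LinearMap.proj i ∘ₗ G.mulVecLin) (fun k => LinearMap.proj k.1)

section Field

variable {F : Type*} [Field F] [Fintype κ] {G : Matrix ι κ F} {B : Set κ} {g : κ → F} {c : κ}

theorem injective_pi_rowCoordFunctionals (hB : LinearIndepOn F G.col B) :
    Function.Injective (LinearMap.pi (rowCoordFunctionals G B)) := by
  rw [injective_iff_map_eq_zero]
  intro u hu
  exact linearIndepOn_col_iff.mp hB u (fun k hk => congrFun hu (Sum.inr ⟨k, hk⟩))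
    (funext fun i => congrFun hu (Sum.inl i))

theorem IsElementary.linearIndepOn_col (hg : IsElementary (rowCoordFunctionals G B) g)
    (hc : g c ≠ 0) :
    LinearIndepOn F (G.submatrix (Subtype.val : {i | (G *ᵥ g) i = 0} → ι) id).col
      ((B ∪ Function.support g) \ {c}) := by
  refine linearIndepOn_col_iff.mpr fun u hu hGu => ?_
  have htight : u ∈ tightSubspace (rowCoordFunctionals G B) g := by
    rintro (i | ⟨k, hkB⟩) hi
    · exact congrFun hGu ⟨i, hi⟩
    · exact hu k fun hk => hk.1.elim hkB fun hgk => hgk hi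
  obtain ⟨a, rfl⟩ := mem_span_singleton.mp (hg.2 htight)
  have ha : a * g c = 0 := hu c fun h => h.2 rfl
  rw [(mul_eq_zero_iff_right hc).mp ha, zero_smul]

theorem finrank_span_col_image_le [Finite ι] {P : Set κ} (hP : G.col '' P ⊆ span F (G.col '' B))
    (hg : G *ᵥ g = 0) (hc : g c ≠ 0) :
    finrank F (span F (G.col '' P)) ≤
      finrank F (span F (G.col '' ((B ∪ Function.support g) \ {c}))) := by
  refine finrank_mono (span_le.mpr (hP.trans (span_le.mpr ?_)))
  rintro _ ⟨k, hk, rfl⟩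
  by_cases hkc : k = c
  · rw [hkc]
    exact span_mono (Set.image_mono (Set.sdiff_subset_sdiff_left Set.subset_union_right))
      (col_mem_span_of_mulVec_eq_zero hg hc)
  · exact subset_span ⟨k, ⟨Or.inl hk, hkc⟩, rfl⟩

theorem IsElementary.ncard_union_support_sdiff_singleton [Finite ι] {o : κ}
    (hg : IsElementary (rowCoordFunctionals G B) g) (hc : g c ≠ 0) (hco : g o ≠ 0 → c = o)
    (hBo : B ⊆ {o}ᶜ) (hB : B.ncard = finrank F (span F (G.col '' {o}ᶜ))) :
    ((B ∪ Function.support g) \ {c}).ncard = B.ncard - 1 ∨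
      ((B ∪ Function.support g) \ {c}).ncard = B.ncard := by
  have hsub : (B ∪ Function.support g) \ {c} ⊆ {o}ᶜ := by
    rintro k ⟨hk | hk, hkc⟩ rfl
    · exact hBo hk rfl
    · exact hkc (hco hk).symm
  have hle : ((B ∪ Function.support g) \ {c}).ncard ≤ B.ncard := by
    have hind := linearIndepOn_col_of_submatrix _ (hg.linearIndepOn_col hc)
    rw [hB, ← finrank_span_image_of_linearIndepOn hind]
    exact finrank_mono (span_mono (Set.image_mono hsub))
  have hge := Set.pred_ncard_le_ncard_sdiff_singleton (B ∪ Function.support g) c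
  have hmono : B.ncard ≤ (B ∪ Function.support g).ncard :=
    Set.ncard_le_ncard Set.subset_union_left (Set.toFinite _)
  lia

end Field

theorem injective_update_of_notMem_range [DecidableEq τ] {ci : τ → κ} {c : κ}
    (hci : Function.Injective ci) (hc : c ∉ Set.range ci) (i : τ) :
    Function.Injective (Function.update ci i c) := by
  intro j k hjk
  by_cases hj : j = i <;> by_cases hk : k = i
  · rw [hj, hk]
  · rw [hj, Function.update_self, Function.update_of_ne hk] at hjk
    exact (hc ⟨k, hjk.symm⟩).elim
  · rw [hk, Function.update_self, Function.update_of_ne hj] at hjk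
    exact (hc ⟨j, hjk⟩).elim
  · rw [Function.update_of_ne hj, Function.update_of_ne hk] at hjk
    exact hci hjk

theorem exists_int_det_mul_eq_mul_intCast {R : Type*} [CommRing R] [Fintype κ] [Fintype τ]
    [DecidableEq τ] {G : Matrix ι κ ℤ} {g : κ → R} {ri : τ → ι} {ci : τ → κ} {c : κ} {M : ℤ}
    (hci : Function.Injective ci) (hc : c ∉ Set.range ci)
    (hsupp : Function.support g ⊆ insert c (Set.range ci))
    (hg : ∀ j, (G.map ((↑) : ℤ → R) *ᵥ g) (ri j) = 0)
    (hM : ∀ ci' : τ → κ, Function.Injective ci' → |(G.submatrix ri ci').det| ≤ M) :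
    ∃ z : κ → ℤ, (∀ k, ((G.submatrix ri ci).det : R) * g k = g c * z k) ∧ ∀ k, |z k| ≤ M := by
  classical
  have hcast (ci' : τ → κ) : (((G.submatrix ri ci').det : ℤ) : R) =
      ((G.map ((↑) : ℤ → R)).submatrix ri ci').det := Int.cast_det _
  have hcramer (i : τ) : ((G.submatrix ri ci).det : R) * g (ci i) =
      -g c * (G.submatrix ri (Function.update ci i c)).det := by
    rw [hcast, hcast]
    exact det_mul_eq_neg_mul_det_update hci hc hsupp hg i
  suffices h : ∀ k, ∃ z : ℤ, ((G.submatrix ri ci).det : R) * g k = g c * z ∧ |z| ≤ M by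
    choose z hz hzM using h
    exact ⟨z, hz, hzM⟩
  intro k
  by_cases hgk : g k = 0
  · exact ⟨0, by simp [hgk], by simpa using (abs_nonneg _).trans (hM ci hci)⟩
  rcases hsupp hgk with rfl | ⟨i, rfl⟩
  · exact ⟨_, mul_comm _ _, hM ci hci⟩
  · refine ⟨-(G.submatrix ri (Function.update ci i c)).det, by simp [hcramer], ?_⟩
    rw [abs_neg]
    exact hM _ (injective_update_of_notMem_range hci hc i)

theorem exists_pos_smul_intCast_eq_of_mul_eq {F : Type*} [Field F] [LinearOrder F]
    [IsStrictOrderedRing F] {g : κ → F} {z : κ → ℤ} {a b : F} {M : ℤ} (ha : a ≠ 0) (hb : b ≠ 0)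
    (hz : ∀ k, a * g k = b * z k) (hM : ∀ k, |z k| ≤ M) :
    ∃ (z : κ → ℤ) (μ : F), 0 < μ ∧ g = μ • (fun k => (z k : F)) ∧ ∀ k, |z k| ≤ M := by
  have hgz (k : κ) : g k = b / a * z k := by
    rw [div_mul_eq_mul_div, ← hz, mul_div_cancel_left₀ _ ha]
  rcases (div_ne_zero hb ha).lt_or_gt with hneg | hpos
  · refine ⟨-z, -(b / a), neg_pos.mpr hneg, funext fun k => ?_, fun k => by simpa using hM k⟩
    simp [hgz]
  · exact ⟨z, b / a, hpos, funext hgz, hM⟩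

theorem IsElementary.exists_int_multiple [Finite ι] [Fintype κ] [Finite α] {G : Matrix ι κ ℤ}
    {B : Set κ} {g : κ → ℚ} {o : κ} {e : α → ι} {r : ℕ} {M : ℤ}
    (hg : IsElementary (rowCoordFunctionals (G.map ((↑) : ℤ → ℚ)) B) g)
    (hge : ∀ a, (G.map ((↑) : ℤ → ℚ) *ᵥ g) (e a) = 0) (hBo : B ⊆ {o}ᶜ)
    (hspan : (G.map ((↑) : ℤ → ℚ)).col '' {o}ᶜ ⊆ span ℚ ((G.map ((↑) : ℤ → ℚ)).col '' B))
    (hB : B.ncard = finrank ℚ (span ℚ ((G.map ((↑) : ℤ → ℚ)).col '' {o}ᶜ)))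
    (hr : r ≤ finrank ℚ (span ℚ (((G.map ((↑) : ℤ → ℚ)).submatrix e id).col '' {o}ᶜ)))
    (hM : ∀ t, t = B.ncard - 1 ∨ t = B.ncard → IsSubdetBound G (Set.range e) r t M) :
    ∃ (z : κ → ℤ) (μ : ℚ), 0 < μ ∧ g = μ • (fun k => (z k : ℚ)) ∧ ∀ k, |z k| ≤ M := by
  classical
  set Q := G.map ((↑) : ℤ → ℚ)
  -- With this choice of `c` the columns in `K` below avoid `o`, so their rank is at most that of
  -- the columns in `B`.
  obtain ⟨c, hc, hco⟩ : ∃ c, g c ≠ 0 ∧ (g o ≠ 0 → c = o) := by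
    by_cases ho : g o = 0
    · obtain ⟨c, hc⟩ := Function.ne_iff.mp hg.1
      exact ⟨c, hc, fun h => (h ho).elim⟩
    · exact ⟨o, ho, fun _ => rfl⟩
  let K : Set κ := (B ∪ Function.support g) \ {c}
  have := Fintype.ofFinite K
  have hrank :
      r ≤ finrank ℚ (span ℚ ((Q.submatrix id (Subtype.val : K → κ)).row '' Set.range e)) := by
    rw [← finrank_span_col_image_eq_finrank_span_row_image]
    exact hr.trans
      (finrank_span_col_image_le (image_col_submatrix_subset_span e hspan) (funext hge) hc)
  obtain ⟨ri, hri, htight, hrows, hdet⟩ := exists_injective_rows_det_ne_zero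
    (Q.submatrix id (Subtype.val : K → κ)) (Set.range_subset_iff.mpr hge) (hg.linearIndepOn_col hc)
  have hcard := hg.ncard_union_support_sdiff_singleton hc hco hBo hB
  rw [← Nat.card_coe_set_eq, Nat.card_eq_fintype_card (α := K)] at hcard
  have hcK : c ∉ Set.range (Subtype.val : K → κ) := by
    simp [K]
  have hsupp : Function.support g ⊆ insert c (Set.range (Subtype.val : K → κ)) := by
    intro k hk
    by_cases hkc : k = c
    · exact Or.inl hkc
    · exact Or.inr ⟨⟨k, Or.inr hk, hkc⟩, rfl⟩
  obtain ⟨z, hz, hzM⟩ := exists_int_det_mul_eq_mul_intCast Subtype.val_injective hcK hsupp htight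
    fun ci' hci' => (hM _ hcard).abs_det_le hri hci' (hrank.trans hrows)
  have hdetZ : ((G.submatrix ri (Subtype.val : K → κ)).det : ℚ) ≠ 0 :=
    (Int.cast_det _).trans_ne hdet
  exact exists_pos_smul_intCast_eq_of_mul_eq hdetZ hc hz hzM

end IntegralElementary

section Rounding

variable {F κ τ : Type*} [Field F] [LinearOrder F] [IsStrictOrderedRing F] [Fintype τ]

theorem abs_sum_mul_le {ν a : τ → F} {M : F} (hν : ∀ t, 0 ≤ ν t) (ha : ∀ t, |a t| ≤ M) :
    |∑ t, ν t * a t| ≤ (∑ t, ν t) * M := by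
  rw [Finset.sum_mul]
  refine (Finset.abs_sum_le_sum_abs _ _).trans (Finset.sum_le_sum fun t _ => ?_)
  rw [abs_mul, abs_of_nonneg (hν t)]
  exact mul_le_mul_of_nonneg_left (ha t) (hν t)

/-- Subtracting the integral part of the coefficients of the `z t` with `z t o = 0` leaves those
with coefficients below `1`; the other coefficients sum to at most `1` because `w o = -1`. -/
theorem exists_int_combination_sum_coeff_le_card [FloorRing F] {w : κ → ℤ} {o : κ}
    {z : τ → κ → ℤ} {μ : τ → F} (hμ : ∀ t, 0 ≤ μ t) (hw : ∀ k, (w k : F) = ∑ t, μ t * z t k)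
    (hwo : w o = -1) (hz : ∀ t, z t o ≤ 0) :
    ∃ (y : κ → ℤ) (ν : τ → F), (∀ t, 0 ≤ ν t) ∧ ∑ t, ν t ≤ Fintype.card τ ∧ y o = -1 ∧
      ∀ k, (y k : F) = ∑ t, ν t * z t k := by
  let n : τ → ℤ := fun t => if z t o = 0 then ⌊μ t⌋ else 0
  let ν : τ → F := fun t => μ t - n t
  have hno (t : τ) : n t * z t o = 0 := by
    by_cases h : z t o = 0 <;> simp [n, h]
  have hy (k : κ) : ((w k - ∑ t, n t * z t k : ℤ) : F) = ∑ t, ν t * z t k := by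
    push_cast
    rw [hw, ← Finset.sum_sub_distrib]
    exact Finset.sum_congr rfl fun t _ => (sub_mul _ _ _).symm
  have hyo : w o - ∑ t, n t * z t o = -1 := by
    rw [Finset.sum_eq_zero fun t _ => hno t, sub_zero, hwo]
  have hν0 (t : τ) : 0 ≤ ν t := by
    by_cases h : z t o = 0
    · simp [ν, n, h]
    · simp [ν, n, h, hμ t]
  have hν (t : τ) : ν t ≤ (if z t o = 0 then 1 else 0) - ν t * z t o := by
    by_cases h : z t o = 0
    · simp [ν, n, h, (Int.fract_lt_one (μ t)).le]
    · have hle : (z t o : F) ≤ -1 := by exact_mod_cast Int.le_sub_one_of_lt ((hz t).lt_of_ne h)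
      rw [if_neg h]
      nlinarith [hν0 t]
  obtain ⟨t₀, ht₀⟩ : ∃ t, z t o ≠ 0 := by
    by_contra! h
    simpa [h, hwo] using hw o
  have hcard : #{t | z t o = 0} + 1 ≤ Fintype.card τ :=
    Finset.card_lt_univ_of_notMem (x := t₀) (by simpa using ht₀)
  refine ⟨fun k => w k - ∑ t, n t * z t k, ν, hν0, ?_, hyo, hy⟩
  calc ∑ t, ν t ≤ ∑ t, ((if z t o = 0 then 1 else 0) - ν t * z t o) :=
        Finset.sum_le_sum fun t _ => hν t
    _ = #{t | z t o = 0} + 1 := by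
        rw [Finset.sum_sub_distrib, ← hy, hyo, Finset.sum_boole]
        simp
    _ ≤ Fintype.card τ := by exact_mod_cast hcard

theorem exists_int_combination_abs_le_card_mul [FloorRing F] {w : κ → ℤ} {o : κ} {z : τ → κ → ℤ}
    {μ : τ → F} {M : ℤ} (hμ : ∀ t, 0 ≤ μ t) (hw : ∀ k, (w k : F) = ∑ t, μ t * z t k)
    (hwo : w o = -1) (hz : ∀ t, z t o ≤ 0) (hM : ∀ t k, |z t k| ≤ M) :
    ∃ (y : κ → ℤ) (ν : τ → F), (∀ t, 0 ≤ ν t) ∧ y o = -1 ∧ (∀ k, (y k : F) = ∑ t, ν t * z t k) ∧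
      ∀ k, |y k| ≤ Fintype.card τ * M := by
  obtain ⟨y, ν, hν, hνle, hyo, hy⟩ := exists_int_combination_sum_coeff_le_card hμ hw hwo hz
  refine ⟨y, ν, hν, hyo, hy, fun k => ?_⟩
  obtain ⟨t⟩ : Nonempty τ := by
    by_contra h
    rw [not_nonempty_iff] at h
    simpa [hwo] using hw o
  have hM0 : (0 : F) ≤ M := by exact_mod_cast (abs_nonneg _).trans (hM t o)
  have hbound : |(y k : F)| ≤ Fintype.card τ * M := by
    rw [hy]
    exact (abs_sum_mul_le hν fun t => by exact_mod_cast hM t k).trans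
      (mul_le_mul_of_nonneg_right hνle hM0)
  exact_mod_cast hbound

end Rounding

section Homogeneous

variable {ι κ α : Type*} [Finite ι] [Fintype κ] [Finite α] {G : Matrix ι κ ℤ} {o : κ} {e : α → ι}
  {r s : ℕ} {M : ℤ}

theorem exists_sum_int_mem_conformalCone_abs_le
    (hr : r ≤ finrank ℚ (span ℚ (((G.map ((↑) : ℤ → ℚ)).submatrix e id).col '' {o}ᶜ)))
    (hs : s = finrank ℚ (span ℚ ((G.map ((↑) : ℤ → ℚ)).col '' {o}ᶜ)))
    (hM : ∀ t, t = s - 1 ∨ t = s → IsSubdetBound G (Set.range e) r t M) {w : κ → ℚ}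
    (hw : ∀ a, (G.map ((↑) : ℤ → ℚ) *ᵥ w) (e a) = 0) :
    ∃ B ⊆ {o}ᶜ, ∃ m ≤ Fintype.card κ, ∃ (z : Fin m → κ → ℤ) (μ : Fin m → ℚ), (∀ t, 0 < μ t) ∧
      w = ∑ t, μ t • (fun k => (z t k : ℚ)) ∧ (∀ t k, |z t k| ≤ M) ∧
      ∀ t, (fun k => (z t k : ℚ)) ∈
        conformalCone (rowCoordFunctionals (G.map ((↑) : ℤ → ℚ)) B) w := by
  set Q := G.map ((↑) : ℤ → ℚ)
  obtain ⟨B, hBo, -, hspan, hB, hcard⟩ :=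
    exists_linearIndepOn_superset_ncard_eq (linearIndepOn_empty ℚ Q.col) ({o}ᶜ : Set κ).empty_subset
  obtain ⟨m, hm, g, hsum, hg⟩ := exists_sum_isElementary (injective_pi_rowCoordFunctionals hB) w
  have hint (t : Fin m) : ∃ (z : κ → ℤ) (μ : ℚ), 0 < μ ∧ g t = μ • (fun k => (z k : ℚ)) ∧
      ∀ k, |z k| ≤ M := by
    refine (hg t).2.exists_int_multiple (fun a => ?_) hBo hspan hcard hr (hcard ▸ hs ▸ hM)
    exact mem_tightSubspace_of_mem_conformalCone (hg t).1 (Sum.inl (e a)) (hw a)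
  choose z μ hμ hgz hzM using hint
  refine ⟨B, hBo, m, ?_, z, μ, hμ, ?_, hzM, fun t => ?_⟩
  · exact hm.trans ((finrank_le _).trans_eq (finrank_fintype_fun_eq_card ℚ))
  · simp only [← hgz, hsum]
  · rw [← (inv_smul_eq_iff₀ (hμ t).ne').mpr (hgz t)]
    exact PointedCone.smul_mem _ (inv_nonneg.mpr (hμ t).le) (hg t).1

theorem exists_int_conformal_abs_le_card_mul
    (hr : r ≤ finrank ℚ (span ℚ (((G.map ((↑) : ℤ → ℚ)).submatrix e id).col '' {o}ᶜ)))
    (hs : s = finrank ℚ (span ℚ ((G.map ((↑) : ℤ → ℚ)).col '' {o}ᶜ)))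
    (hM : ∀ t, t = s - 1 ∨ t = s → IsSubdetBound G (Set.range e) r t M) {w : κ → ℤ}
    (hw : ∀ a, (G *ᵥ w) (e a) = 0) (hwo : w o = -1) :
    ∃ y : κ → ℤ, y o = -1 ∧
      (∀ i, (G *ᵥ w) i = 0 → (G *ᵥ y) i = 0) ∧ (∀ i, 0 ≤ (G *ᵥ w) i → 0 ≤ (G *ᵥ y) i) ∧
      ∀ k, |y k| ≤ Fintype.card κ * M := by
  have hcast (u : κ → ℤ) (i : ι) :
      (((G *ᵥ u) i : ℤ) : ℚ) = (G.map ((↑) : ℤ → ℚ) *ᵥ fun k => (u k : ℚ)) i :=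
    RingHom.map_mulVec (Int.castRingHom ℚ) G u i
  obtain ⟨B, hBo, m, hm, z, μ, hμ, hsum, hzM, hz⟩ :=
    exists_sum_int_mem_conformalCone_abs_le hr hs hM (w := fun k => (w k : ℚ))
      fun a => by rw [← hcast, hw, Int.cast_zero]
  have hzo (t : Fin m) : z t o ≤ 0 := by
    obtain ⟨c, hc, hcz⟩ := hz t (Sum.inr ⟨o, fun ho => hBo ho rfl⟩)
    have hle : (z t o : ℚ) ≤ 0 := by
      calc (z t o : ℚ) = c * w o := hcz
        _ ≤ 0 := by simp [hwo, hc]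
    exact_mod_cast hle
  have hwsum (k : κ) : (w k : ℚ) = ∑ t, μ t * z t k := by
    simpa using congrFun hsum k
  obtain ⟨y, ν, hν, hyo, hy, hyM⟩ :=
    exists_int_combination_abs_le_card_mul (fun t => (hμ t).le) hwsum hwo hzo hzM
  have hysum : (fun k => (y k : ℚ)) = ∑ t, ν t • (fun k => (z t k : ℚ)) := by
    ext k
    simp [hy]
  have hycone : (fun k => (y k : ℚ)) ∈
      conformalCone (rowCoordFunctionals (G.map ((↑) : ℤ → ℚ)) B) fun k => (w k : ℚ) :=
    hysum ▸ sum_mem fun t _ => PointedCone.smul_mem _ (hν t) (hz t)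
  have hconf (i : ι) : ∃ c : ℚ, 0 ≤ c ∧ ((G *ᵥ y) i : ℚ) = c * ((G *ᵥ w) i : ℤ) := by
    rw [hcast, hcast]
    exact hycone (Sum.inl i)
  refine ⟨y, hyo, fun i hi => ?_, fun i hi => ?_, fun k => ?_⟩
  · obtain ⟨c, -, hc⟩ := hconf i
    simpa [hi] using hc
  · obtain ⟨c, hc0, hc⟩ := hconf i
    exact_mod_cast hc.symm ▸ mul_nonneg hc0 (Int.cast_nonneg hi)
  · rw [Fintype.card_fin] at hyM
    have hpos : 0 < m * M := (abs_pos.mpr (by simp [hyo])).trans_le (hyM o)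
    have hM0 : 0 ≤ M := (pos_of_mul_pos_right hpos (Nat.cast_nonneg m)).le
    exact (hyM k).trans (mul_le_mul_of_nonneg_right (by exact_mod_cast hm) hM0)

end Homogeneous

section Blocks

theorem ncard_preimage_range_inl {ι₁ ι₂ τ : Type*} [Fintype τ] (ri : τ → ι₁ ⊕ ι₂) :
    (ri ⁻¹' Set.range Sum.inl).ncard = #{j | (ri j).isLeft = true} := by
  rw [← Set.ncard_coe_finset]
  congr 1
  ext j
  cases h : ri j <;> simp [h]

theorem fromBlocks_mulVec_of_inr_eq_neg_one {R ι₁ ι₂ κ τ : Type*} [Ring R] [Fintype κ] [Fintype τ]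
    [Unique τ] (A : Matrix ι₁ κ R) (b : ι₁ → R) (C : Matrix ι₂ κ R) (d : ι₂ → R) {y : κ ⊕ τ → R}
    (hy : y (Sum.inr default) = -1) :
    fromBlocks A (of fun i (_ : τ) => b i) C (of fun i (_ : τ) => d i) *ᵥ y =
      Sum.elim (A *ᵥ (y ∘ Sum.inl) - b) (C *ᵥ (y ∘ Sum.inl) - d) := by
  ext (i | i) <;> simp [mulVec, dotProduct, hy, sub_eq_add_neg]

end Blocks

/-- von zur Gathen–Sieveking, Theorem 15: let `A, b, C, d`
be integer matrices of respective sizes `m×n`, `m×1`, `p×n`, `p×1`, let `r` be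
the rank of `A` and `s` the rank of `A` stacked over `C` (over `ℚ`), and let
`M` bound the absolute values of those `(s-1)×(s-1)`- and `s×s`-subdeterminants
of the `(m+p)×(n+1)` matrix `(A b // C d)` formed with at least `r` rows from
`(A, b)`.  If `A x = b`, `C x ≥ d` have a common integer solution, then they
have one with coefficients bounded by `(n+1)·M`. -/
theorem von_zur_gathen_sieveking
    (m n p : ℕ) (A : Matrix (Fin m) (Fin n) ℤ) (b : Fin m → ℤ)
    (C : Matrix (Fin p) (Fin n) ℤ) (dvec : Fin p → ℤ)
    (r s : ℕ) (M : ℤ)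
    (hr : r = (A.map ((↑) : ℤ → ℚ)).rank)
    (hs : s = ((Matrix.fromRows A C).map ((↑) : ℤ → ℚ)).rank)
    (hM : ∀ t : ℕ, (t = s - 1 ∨ t = s) →
      ∀ (ri : Fin t → Fin m ⊕ Fin p) (ci : Fin t → Fin n ⊕ Fin 1),
        Function.Injective ri → Function.Injective ci →
        r ≤ (Finset.univ.filter fun j => (ri j).isLeft = true).card →
        |((Matrix.fromBlocks A (Matrix.of fun i (_ : Fin 1) => b i)
            C (Matrix.of fun i (_ : Fin 1) => dvec i)).submatrix ri ci).det| ≤ M)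
    (hsol : ∃ x : Fin n → ℤ, A.mulVec x = b ∧ ∀ i, dvec i ≤ C.mulVec x i) :
    ∃ x : Fin n → ℤ, A.mulVec x = b ∧ (∀ i, dvec i ≤ C.mulVec x i) ∧
      ∀ j, |x j| ≤ ((n : ℤ) + 1) * M := by
  set G := fromBlocks A (of fun i (_ : Fin 1) => b i) C (of fun i (_ : Fin 1) => dvec i)
  obtain ⟨x, hAx, hCx⟩ := hsol
  let w : Fin n ⊕ Fin 1 → ℤ := Sum.elim x fun _ => -1
  have hGw : G *ᵥ w = Sum.elim (A *ᵥ x - b) (C *ᵥ x - dvec) :=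
    fromBlocks_mulVec_of_inr_eq_neg_one A b C dvec rfl
  have hbound : ∀ t, t = s - 1 ∨ t = s → IsSubdetBound G (Set.range Sum.inl) r t M :=
    fun t ht ri ci hri hci hrows => hM t ht ri ci hri hci (ncard_preimage_range_inl ri ▸ hrows)
  have hAG : ((G.map ((↑) : ℤ → ℚ)).submatrix Sum.inl id).submatrix id Sum.inl = A.map (↑) := rfl
  have hACG : (G.map ((↑) : ℤ → ℚ)).submatrix id Sum.inl = (fromRows A C).map (↑) := by
    ext (i | i) j <;> rfl
  rw [← hAG, ← finrank_span_col_image_compl_inr] at hr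
  rw [← hACG, ← finrank_span_col_image_compl_inr] at hs
  obtain ⟨y, hyo, hy0, hynonneg, hyM⟩ := exists_int_conformal_abs_le_card_mul hr.le hs hbound
    (w := w) (fun i => by simp [hGw, hAx]) rfl
  have hGy := fromBlocks_mulVec_of_inr_eq_neg_one A b C dvec hyo
  change G *ᵥ y = _ at hGy
  simp only [hGw, hGy] at hy0 hynonneg
  refine ⟨y ∘ Sum.inl, funext fun i => ?_, fun i => ?_, fun j => by simpa using hyM (Sum.inl j)⟩
  · exact sub_eq_zero.mp (hy0 (Sum.inl i) (sub_eq_zero.mpr (congrFun hAx i)))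
  · exact sub_nonneg.mp (hynonneg (Sum.inr i) (sub_nonneg.mpr (hCx i)))
end
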